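/- Smooth approximate correctors. Assume (H1)–(H4), let λ(p,L) = H̄(p,L) be defined by the ergodicity theorem, and fix p ∈ ℝ^N, P = (p,1), L ∈ ℝ. Then for every sufficiently small η > 0 there exist real numbers λ⁺_η(p,L) and λ⁻_η(p,L), a constant C > 0 independent of η, p, L, and bounded functions V⁺_η and V⁻_η on ℝ⁺×ℝ^{N+1} which are respectively a viscosity supersolution and a viscosity subsolution of λ^±_η + ∂_τ V = L + I_s[V(τ,·,y_{N+1})] − W'(V + P·Y + λ^±_η τ) + σ(τ,y) ∓ o_η(1) on ℝ⁺×ℝ^{N+1}, V(0,Y)=0, where 0 ≤ o_η(1) → 0 as η → 0⁺, such that: λ⁺_η(p,L) → λ(p,L) and λ⁻_η(p,L) → λ(p,L) as η → 0⁺, locally uniformly in (p,L); λ^±_η satisfy properties (i) and (ii) of the effective Hamiltonian (divergence to ±∞ as L → ±∞ and monotonicity in L); |V^±_η(τ,Y)| ≤ C for all (τ,Y); V^±_η are of class C² with respect to y_{N+1} with −1 ≤ ∂_{y_{N+1}}V^±_η ≤ ‖W''‖_∞/η, ‖∂²_{y_{N+1}y_{N+1}}V^±_η‖_∞ ≤ C_η,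 and for every 0 < α < min{1,2s} the Hölder seminorm in y of ∂_{y_{N+1}}V^±_η is bounded by a constant C_{η,α}. -/

import Mathlib

/-!
The equation is solved approximately on a long time window `[0, T]`, starting from zero, and copies of
the result are glued along `[0, ∞)`.

*Approximate solutions.* Write `Y = (y, b)` with `b = y_{N+1}`. The problem
`∂_t U = L + I_s[U] - W'(U + p·y + b) + σ`, `U(0, ·) = 0`, is discretized by the explicit scheme
`euler`, in which the jumps smaller than `ρ` are removed, so that the scheme is monotone for small time
steps. It is periodic under `b ↦ b + 1` and under `(y, b) ↦ (y + k, b - p·k)`, and `U + b` is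
nondecreasing in `b`; hence `U` oscillates by at most one in `b` and along the lattice. In the other
directions the oscillation is bounded uniformly in time, in the discretization and in `(p, L)`: from two
points at bounded distance, a fixed fraction of the jumps larger than one can be coupled so as to land at
the same place (`far_couple`, `euler_osc`). The slope in `b` lies in `[-1, e^{KT} - 1]` with
`K = ‖W''‖_∞` (`euler_slope`). Mollification in `Y` and affine interpolation in time give, for every
`δ > 0`, a smooth solution up to an error `δ` with the same bounds (`dapprox_exists`,
`capprox_exists`).

*Growth.* These functions are smooth in `y` and affine in time on each step, so they can be compared with
the viscosity solution `w` by testing (`cmp_step`, `cmp_all`), without a comparison principle between two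
viscosity solutions. As the oscillation is bounded by some `Co`, the extrema of `w` at the times `mT` are
sub- and superadditive up to `Co + 1`, whence `|U(t, Y) - H̄(p, L) t| ≤ C₀` on `[0, T]` with `C₀`
independent of `T`, `p` and `L` (`erg_T`, `erg_est`). The same comparison gives `|H̄(p, L) - L| ≤ M`
and the monotonicity in `L` (`erg_mono`).

*Gluing.* Let `T = windowLen K η`, of order `log(1/η)/(K + 1)`, so that `e^{KT} - 1 ≤ K/η`, and put
`λ^± = H̄ ± C₀/T`. On `(mT, (m+1)T]` take `V^±(τ, y, b) = U(t, (y, b + m λ^± T)) - λ^± t` with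
`t = τ - mT` (`glue`). Since `σ` has period one in time and `T` is an integer, `V^±` solves the equation up
to `δ ≤ η` inside each window. At the end of a window `V⁺` jumps upward, because `U(T, ·) ≤ λ⁺ T`, and
`V⁻` jumps downward; both are left-continuous. A test function touching at such a time is constrained by
the left derivative only, which is the one that the super- or subsolution inequality needs
(`glue_super`, `glue_sub`). The bound by `2 C₀` and the regularity in `b` are inherited from `U`.
-/

open MeasureTheory Filter Metric Set RealInnerProductSpace

noncomputable section

/-- `ℝ^N` as a Euclidean space. -/
abbrev EN (N : ℕ) := EuclideanSpace ℝ (Fin N)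

/-- The singular kernel `g(z/|z|) |z|^{-N-2s}` of the anisotropic Lévy operator. -/
noncomputable def levyKernel (N : ℕ) (s : ℝ) (g : EN N → ℝ) (z : EN N) : ℝ :=
  g (‖z‖⁻¹ • z) * ‖z‖ ^ (-(N : ℝ) - 2 * s)

/-- `I^{1,r}[φ, x]`: integral over `|z| ≤ r` of the second order increment of `φ`. -/
noncomputable def levyI1 (N : ℕ) (s : ℝ) (g : EN N → ℝ) (φ : EN N → ℝ) (r : ℝ) (x : EN N) : ℝ :=
  ∫ z in {z : EN N | ‖z‖ ≤ r}, (φ (x + z) - φ x - fderiv ℝ φ x z) * levyKernel N s g z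

/-- `I^{2,r}[u, x]`: integral over `|z| > r` of the increment of `u`. -/
noncomputable def levyI2 (N : ℕ) (s : ℝ) (g : EN N → ℝ) (u : EN N → ℝ) (r : ℝ) (x : EN N) : ℝ :=
  ∫ z in {z : EN N | r < ‖z‖}, (u (x + z) - u x) * levyKernel N s g z

/-- The anisotropic Lévy operator `I_s` of order `2s`, defined as a principal value. -/
noncomputable def levyOp (N : ℕ) (s : ℝ) (g : EN N → ℝ) (φ : EN N → ℝ) (x : EN N) : ℝ :=
  limUnder (nhdsWithin 0 (Ioi (0:ℝ)))
    (fun ρ => ∫ y in {y : EN N | ρ < ‖y‖}, (φ (x + y) - φ x) * levyKernel N s g y)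

/-- (H1): `g` is continuous, positive on the sphere and even. -/
def H1 (N : ℕ) (g : EN N → ℝ) : Prop :=
  Continuous g ∧ (∀ z : EN N, ‖z‖ = 1 → 0 < g z) ∧ (∀ z : EN N, g (-z) = g z)

/-- (H2): `W ∈ C^{1,1}(ℝ)` and `W(v+1) = W(v)`. -/
def H2 (W : ℝ → ℝ) : Prop :=
  ContDiff ℝ 1 W ∧ (∃ K : NNReal, LipschitzWith K (deriv W)) ∧ ∀ v, W (v + 1) = W v

/-- (H3): `σ ∈ C^{0,1}(ℝ⁺ × ℝ^N)`, 1-periodic in `t` and ℤ^N-periodic in `x`. -/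
def H3 (N : ℕ) (σ : ℝ → EN N → ℝ) : Prop :=
  (∃ K : NNReal, LipschitzWith K (fun q : ℝ × EN N => σ q.1 q.2)) ∧
  (∀ t x, σ (t + 1) x = σ t x) ∧
  (∀ (k : Fin N → ℤ) (t : ℝ) (x : EN N), σ t (x + (WithLp.equiv 2 (Fin N → ℝ)).symm (fun j => (k j : ℝ))) = σ t x)

/-- (H4): `u₀ ∈ W^{2,∞}(ℝ^N)`. -/
def H4 (N : ℕ) (u₀ : EN N → ℝ) : Prop :=
  ContDiff ℝ 2 u₀ ∧
  ∃ M, ∀ x, |u₀ x| ≤ M ∧ ‖fderiv ℝ u₀ x‖ ≤ M ∧ ‖fderiv ℝ (fderiv ℝ u₀) x‖ ≤ M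

/-- Boundedness on `(0,T) × ℝ^N` for every `T > 0`. -/
def LocBddPos (N : ℕ) (u : ℝ → EN N → ℝ) : Prop :=
  ∀ T > 0, ∃ M, ∀ t ∈ Ioc (0:ℝ) T, ∀ x, |u t x| ≤ M

/-- Viscosity subsolution of `∂_t u = F(t, x, u, ∇_x u, I_s[u(t,·)])` with initial datum `u₀`. -/
def IsSubsol (N : ℕ) (s : ℝ) (g : EN N → ℝ)
    (F : ℝ → EN N → ℝ → (EN N →L[ℝ] ℝ) → ℝ → ℝ)
    (u₀ : EN N → ℝ) (u : ℝ → EN N → ℝ) : Prop :=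
  UpperSemicontinuousOn (fun q : ℝ × EN N => u q.1 q.2) (Ici 0 ×ˢ univ) ∧
  LocBddPos N u ∧
  (∀ x, u 0 x ≤ u₀ x) ∧
  ∀ (t₀ : ℝ) (x₀ : EN N), 0 < t₀ →
    ∀ (φ : ℝ → EN N → ℝ), ContDiff ℝ 2 (fun q : ℝ × EN N => φ q.1 q.2) →
    ∀ τ r : ℝ, 0 < τ → τ < t₀ → 0 < r →
    (∀ t x, t ∈ Ioo (t₀ - τ) (t₀ + τ) → x ∈ ball x₀ r →
      u t x - φ t x ≤ u t₀ x₀ - φ t₀ x₀) →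
    deriv (fun t => φ t x₀) t₀ -
      F t₀ x₀ (u t₀ x₀) (fderiv ℝ (fun x => φ t₀ x) x₀)
        (levyI1 N s g (fun x => φ t₀ x) r x₀ + levyI2 N s g (fun x => u t₀ x) r x₀) ≤ 0

/-- Viscosity supersolution of `∂_t u = F(t, x, u, ∇_x u, I_s[u(t,·)])` with initial datum `u₀`. -/
def IsSupersol (N : ℕ) (s : ℝ) (g : EN N → ℝ)
    (F : ℝ → EN N → ℝ → (EN N →L[ℝ] ℝ) → ℝ → ℝ)
    (u₀ : EN N → ℝ) (u : ℝ → EN N → ℝ) : Prop :=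
  LowerSemicontinuousOn (fun q : ℝ × EN N => u q.1 q.2) (Ici 0 ×ˢ univ) ∧
  LocBddPos N u ∧
  (∀ x, u₀ x ≤ u 0 x) ∧
  ∀ (t₀ : ℝ) (x₀ : EN N), 0 < t₀ →
    ∀ (φ : ℝ → EN N → ℝ), ContDiff ℝ 2 (fun q : ℝ × EN N => φ q.1 q.2) →
    ∀ τ r : ℝ, 0 < τ → τ < t₀ → 0 < r →
    (∀ t x, t ∈ Ioo (t₀ - τ) (t₀ + τ) → x ∈ ball x₀ r →
      u t₀ x₀ - φ t₀ x₀ ≤ u t x - φ t x) →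
    0 ≤ deriv (fun t => φ t x₀) t₀ -
      F t₀ x₀ (u t₀ x₀) (fderiv ℝ (fun x => φ t₀ x) x₀)
        (levyI1 N s g (fun x => φ t₀ x) r x₀ + levyI2 N s g (fun x => u t₀ x) r x₀)

/-- Viscosity solution in `C_b(ℝ⁺ × ℝ^N)`. -/
def IsSol (N : ℕ) (s : ℝ) (g : EN N → ℝ)
    (F : ℝ → EN N → ℝ → (EN N →L[ℝ] ℝ) → ℝ → ℝ)
    (u₀ : EN N → ℝ) (u : ℝ → EN N → ℝ) : Prop :=
  ContinuousOn (fun q : ℝ × EN N => u q.1 q.2) (Ici 0 ×ˢ univ) ∧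
  IsSubsol N s g F u₀ u ∧ IsSupersol N s g F u₀ u

/-- The right-hand side of the cell problem
`∂_τ w = I_s[w(τ,·)] + L − W'(w + p·y) + σ(τ,y)`. -/
def cellF (N : ℕ) (W : ℝ → ℝ) (σ : ℝ → EN N → ℝ) (p : EN N) (L : ℝ) :
    ℝ → EN N → ℝ → (EN N →L[ℝ] ℝ) → ℝ → ℝ :=
  fun τ y v _ I => I + L - deriv W (v + ⟪p, y⟫) + σ τ y

/-- `w(τ,y)/τ → lam` as `τ → +∞`, locally uniformly in `y`. -/
def SlopeLim (N : ℕ) (w : ℝ → EN N → ℝ) (lam : ℝ) : Prop :=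
  ∀ ε > 0, ∀ R > 0, ∃ T : ℝ, ∀ τ, T ≤ τ → ∀ y : EN N, ‖y‖ ≤ R → |w τ y / τ - lam| ≤ ε

end

noncomputable section

/-- Viscosity subsolution of the `(N+1)`-dimensional problem
`∂_t U = F(t, y, y_{N+1}, U, ∇_y φ, ∂_{y_{N+1}} φ, I_s-term, inf_{Y'} U(t,Y'))`,
where `I_s` acts on the `y`-variable only, with initial datum `U₀`. -/
def IsSubsolNp1 (N : ℕ) (s : ℝ) (g : EN N → ℝ)
    (F : ℝ → EN N → ℝ → ℝ → (EN N →L[ℝ] ℝ) → ℝ → ℝ → ℝ → ℝ)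
    (U₀ : EN N → ℝ → ℝ) (U : ℝ → EN N → ℝ → ℝ) : Prop :=
  UpperSemicontinuousOn (fun q : ℝ × EN N × ℝ => U q.1 q.2.1 q.2.2) (Ici 0 ×ˢ univ) ∧
  (∀ T > 0, ∃ M, ∀ t ∈ Ioc (0:ℝ) T, ∀ (y : EN N) (yn : ℝ), |U t y yn| ≤ M) ∧
  (∀ y yn, U 0 y yn ≤ U₀ y yn) ∧
  ∀ (t₀ : ℝ) (y₀ : EN N) (yn₀ : ℝ), 0 < t₀ →
    ∀ (φ : ℝ → EN N → ℝ → ℝ),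
      ContDiff ℝ 2 (fun q : ℝ × EN N × ℝ => φ q.1 q.2.1 q.2.2) →
    ∀ τ r : ℝ, 0 < τ → τ < t₀ → 0 < r →
    (∀ t y yn, t ∈ Ioo (t₀ - τ) (t₀ + τ) → ‖y - y₀‖ < r → |yn - yn₀| < r →
      U t y yn - φ t y yn ≤ U t₀ y₀ yn₀ - φ t₀ y₀ yn₀) →
    deriv (fun t => φ t y₀ yn₀) t₀ -
      F t₀ y₀ yn₀ (U t₀ y₀ yn₀)
        (fderiv ℝ (fun y => φ t₀ y yn₀) y₀)
        (deriv (fun yn => φ t₀ y₀ yn) yn₀)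
        (levyI1 N s g (fun y => φ t₀ y yn₀) r y₀ + levyI2 N s g (fun y => U t₀ y yn₀) r y₀)
        (⨅ q : EN N × ℝ, U t₀ q.1 q.2) ≤ 0

/-- Viscosity supersolution of the `(N+1)`-dimensional problem. -/
def IsSupersolNp1 (N : ℕ) (s : ℝ) (g : EN N → ℝ)
    (F : ℝ → EN N → ℝ → ℝ → (EN N →L[ℝ] ℝ) → ℝ → ℝ → ℝ → ℝ)
    (U₀ : EN N → ℝ → ℝ) (U : ℝ → EN N → ℝ → ℝ) : Prop :=
  LowerSemicontinuousOn (fun q : ℝ × EN N × ℝ => U q.1 q.2.1 q.2.2) (Ici 0 ×ˢ univ) ∧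
  (∀ T > 0, ∃ M, ∀ t ∈ Ioc (0:ℝ) T, ∀ (y : EN N) (yn : ℝ), |U t y yn| ≤ M) ∧
  (∀ y yn, U₀ y yn ≤ U 0 y yn) ∧
  ∀ (t₀ : ℝ) (y₀ : EN N) (yn₀ : ℝ), 0 < t₀ →
    ∀ (φ : ℝ → EN N → ℝ → ℝ),
      ContDiff ℝ 2 (fun q : ℝ × EN N × ℝ => φ q.1 q.2.1 q.2.2) →
    ∀ τ r : ℝ, 0 < τ → τ < t₀ → 0 < r →
    (∀ t y yn, t ∈ Ioo (t₀ - τ) (t₀ + τ) → ‖y - y₀‖ < r → |yn - yn₀| < r →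
      U t₀ y₀ yn₀ - φ t₀ y₀ yn₀ ≤ U t y yn - φ t y yn) →
    0 ≤ deriv (fun t => φ t y₀ yn₀) t₀ -
      F t₀ y₀ yn₀ (U t₀ y₀ yn₀)
        (fderiv ℝ (fun y => φ t₀ y yn₀) y₀)
        (deriv (fun yn => φ t₀ y₀ yn) yn₀)
        (levyI1 N s g (fun y => φ t₀ y yn₀) r y₀ + levyI2 N s g (fun y => U t₀ y yn₀) r y₀)
        (⨅ q : EN N × ℝ, U t₀ q.1 q.2)

/-- Viscosity solution (continuous, bounded on finite time intervals) of the
`(N+1)`-dimensional problem. -/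
def IsSolNp1 (N : ℕ) (s : ℝ) (g : EN N → ℝ)
    (F : ℝ → EN N → ℝ → ℝ → (EN N →L[ℝ] ℝ) → ℝ → ℝ → ℝ → ℝ)
    (U₀ : EN N → ℝ → ℝ) (U : ℝ → EN N → ℝ → ℝ) : Prop :=
  ContinuousOn (fun q : ℝ × EN N × ℝ => U q.1 q.2.1 q.2.2) (Ici 0 ×ˢ univ) ∧
  IsSubsolNp1 N s g F U₀ U ∧ IsSupersolNp1 N s g F U₀ U

/-- `‖W'‖_∞`. -/
noncomputable def supW' (W : ℝ → ℝ) : ℝ := ⨆ v : ℝ, |deriv W v|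

/-- `‖σ‖_∞` (over `ℝ⁺ × ℝ^N`). -/
noncomputable def supSigma (N : ℕ) (σ : ℝ → EN N → ℝ) : ℝ :=
  sSup {r : ℝ | ∃ t x, 0 ≤ t ∧ r = |σ t x|}

end

/-- `‖W''‖_∞`. -/
noncomputable def supW'' (W : ℝ → ℝ) : ℝ := ⨆ v : ℝ, |deriv (deriv W) v|

/-! ### The singular kernel -/

lemma g_bounds {N : ℕ} {g : EN N → ℝ} (hg : H1 N g) :
    ∃ g₀ > 0, ∃ G > 0, ∀ z : EN N, ‖z‖ = 1 → g₀ ≤ g z ∧ g z ≤ G := by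
  have hc : IsCompact (sphere (0 : EN N) 1) := isCompact_sphere 0 1
  rcases (sphere (0 : EN N) 1).eq_empty_or_nonempty with he | hne
  · refine ⟨1, one_pos, 1, one_pos, fun z hz => ?_⟩
    have : z ∈ sphere (0 : EN N) 1 := by simpa using hz
    simp [he] at this
  · obtain ⟨a, ha, hamin⟩ := hc.exists_isMinOn hne hg.1.continuousOn
    obtain ⟨b, hb, hbmax⟩ := hc.exists_isMaxOn hne hg.1.continuousOn
    refine ⟨g a, hg.2.1 a (by simpa using ha), g b, hg.2.1 b (by simpa using hb), fun z hz => ?_⟩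
    have hz' : z ∈ sphere (0 : EN N) 1 := by simpa using hz
    exact ⟨hamin hz', hbmax hz'⟩

lemma unit_norm {N : ℕ} {z : EN N} (hz : z ≠ 0) : ‖‖z‖⁻¹ • z‖ = 1 := by
  rw [norm_smul, norm_inv, norm_norm, inv_mul_cancel₀ (norm_ne_zero_iff.2 hz)]

lemma kernel_zero {N : ℕ} {s : ℝ} (hs : s ∈ Ioo (0:ℝ) 1) (g : EN N → ℝ) :
    levyKernel N s g 0 = 0 := by
  unfold levyKernel
  rw [norm_zero, Real.zero_rpow, mul_zero]
  have : (0:ℝ) ≤ N := N.cast_nonneg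
  have := hs.1
  intro h; linarith

lemma kernel_nonneg {N : ℕ} {s : ℝ} (hs : s ∈ Ioo (0:ℝ) 1) {g : EN N → ℝ} (hg : H1 N g)
    (z : EN N) : 0 ≤ levyKernel N s g z := by
  by_cases hz : z = 0
  · rw [hz, kernel_zero hs]
  · exact mul_nonneg (hg.2.1 _ (unit_norm hz)).le (Real.rpow_nonneg (norm_nonneg _) _)

lemma kernel_even {N : ℕ} {s : ℝ} {g : EN N → ℝ} (hg : H1 N g) (z : EN N) :
    levyKernel N s g (-z) = levyKernel N s g z := by
  unfold levyKernel
  rw [norm_neg, smul_neg, hg.2.2]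

lemma kernel_meas {N : ℕ} {s : ℝ} {g : EN N → ℝ} (hg : H1 N g) :
    Measurable (levyKernel N s g) := by
  unfold levyKernel
  have h1 : Measurable fun z : EN N => ‖z‖⁻¹ • z := measurable_norm.inv.smul measurable_id
  exact (hg.1.measurable.comp h1).mul (measurable_norm.pow_const _)

lemma kernel_int_far {N : ℕ} (hN : 1 ≤ N) {s : ℝ} (hs : s ∈ Ioo (0:ℝ) 1) {g : EN N → ℝ}
    (hg : H1 N g) {r : ℝ} (hr : 0 < r) :
    IntegrableOn (levyKernel N s g) {z | r < ‖z‖} := by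
  obtain ⟨g₀, -, G, hG, hb⟩ := g_bounds hg
  have : Nontrivial (EN N) := by
    have : Nonempty (Fin N) := ⟨⟨0, hN⟩⟩
    infer_instance
  have hms : MeasurableSet {z : EN N | r < ‖z‖} := measurableSet_lt measurable_const measurable_norm
  set f : ℝ → ℝ := fun t => (Ioi r).indicator (fun t => t ^ (-(N:ℝ) - 2*s)) t with hf
  have hInt : Integrable (fun z : EN N => f ‖z‖) := by
    rw [integrable_fun_norm_addHaar]
    have : IntegrableOn (fun t : ℝ => t ^ (-1 - 2*s)) (Ioi r) :=
      integrableOn_Ioi_rpow_of_lt (by linarith [hs.1]) hr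
    rw [← integrable_indicator_iff measurableSet_Ioi] at this ⊢
    refine this.congr (Eventually.of_forall fun t => ?_)
    simp only [indicator, mem_Ioi, hf]
    split_ifs with h1 h2 h2
    · simp only [finrank_euclideanSpace, Fintype.card_fin, smul_eq_mul]
      rw [← Real.rpow_natCast, ← Real.rpow_add h2, Nat.cast_sub hN]
      congr 1; push_cast; ring
    · exact absurd (hr.trans h1) h2
    · simp
    · rfl
  rw [← integrable_indicator_iff hms]
  refine (hInt.const_mul G).mono' ((kernel_meas hg).indicator hms).aestronglyMeasurable
    (Eventually.of_forall fun z => ?_)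
  simp only [indicator, mem_ofPred_eq, hf, mem_Ioi]
  split_ifs with h
  · rw [Real.norm_of_nonneg (kernel_nonneg hs hg z)]
    have hz : z ≠ 0 := norm_pos_iff.1 (hr.trans h)
    exact mul_le_mul_of_nonneg_right (hb _ (unit_norm hz)).2 (Real.rpow_nonneg (norm_nonneg _) _)
  · simp

lemma kernel_int_near {N : ℕ} (hN : 1 ≤ N) {s : ℝ} (hs : s ∈ Ioo (0:ℝ) 1) {g : EN N → ℝ}
    (hg : H1 N g) (r : ℝ) :
    IntegrableOn (fun z => ‖z‖^2 * levyKernel N s g z) {z | ‖z‖ ≤ r} := by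
  obtain ⟨g₀, -, G, hG, hb⟩ := g_bounds hg
  have : Nontrivial (EN N) := by
    have : Nonempty (Fin N) := ⟨⟨0, hN⟩⟩
    infer_instance
  have hms : MeasurableSet {z : EN N | ‖z‖ ≤ r} := measurableSet_le measurable_norm measurable_const
  set f : ℝ → ℝ := fun t => (Ioc 0 r).indicator (fun t => t ^ (2-(N:ℝ) - 2*s)) t with hf
  have hInt : Integrable (fun z : EN N => f ‖z‖) := by
    rw [integrable_fun_norm_addHaar]
    have : IntegrableOn (fun t : ℝ => t ^ (1 - 2*s)) (Ioc 0 r) := by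
      rcases le_or_gt r 0 with h | h
      · simp [Ioc_eq_empty_of_le h]
      · rw [← intervalIntegrable_iff_integrableOn_Ioc_of_le h.le]
        exact intervalIntegral.intervalIntegrable_rpow' (by linarith [hs.2])
    rw [← integrable_indicator_iff measurableSet_Ioc] at this
    rw [← integrable_indicator_iff measurableSet_Ioi]
    refine this.congr (Eventually.of_forall fun t => ?_)
    simp only [indicator, mem_Ioi, mem_Ioc, hf]
    split_ifs with h1 h2 h2
    · simp only [finrank_euclideanSpace, Fintype.card_fin, smul_eq_mul]
      rw [← Real.rpow_natCast, ← Real.rpow_add h2, Nat.cast_sub hN]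
      congr 1; push_cast; ring
    · exact absurd h1.1 h2
    · simp
    · rfl
  rw [← integrable_indicator_iff hms]
  refine (hInt.const_mul G).mono' (((measurable_norm.pow_const 2).mul
    (kernel_meas hg)).indicator hms).aestronglyMeasurable
    (Eventually.of_forall fun z => ?_)
  by_cases hz : z = 0
  · subst hz
    simp [indicator, hf]
  have hz' := norm_pos_iff.2 hz
  simp only [indicator, mem_ofPred_eq, hf, mem_Ioc, hz', true_and]
  split_ifs with h
  · rw [Real.norm_of_nonneg (mul_nonneg (by positivity) (kernel_nonneg hs hg z))]
    have h2 : ‖z‖ ^ (2 - (N:ℝ) - 2*s) = ‖z‖^2 * ‖z‖ ^ (-(N:ℝ) - 2*s) := by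
      rw [← Real.rpow_natCast ‖z‖ 2, ← Real.rpow_add hz']; congr 1; push_cast; ring
    rw [h2]
    unfold levyKernel
    have h3 : 0 ≤ ‖z‖^2 * ‖z‖ ^ (-(N:ℝ) - 2*s) :=
      mul_nonneg (by positivity) (Real.rpow_nonneg (norm_nonneg _) _)
    have := mul_le_mul_of_nonneg_right (hb _ (unit_norm hz)).2 h3
    linarith
  · simp

/-- The second moment of the jumps of size at most `ρ` tends to zero with `ρ`. -/
lemma kernel_near_small {N : ℕ} (hN : 1 ≤ N) {s : ℝ} (hs : s ∈ Ioo (0:ℝ) 1) {g : EN N → ℝ}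
    (hg : H1 N g) {ε : ℝ} (hε : 0 < ε) :
    ∃ ρ, 0 < ρ ∧ ρ ≤ 1 ∧ ∫ z in {z : EN N | ‖z‖ ≤ ρ}, ‖z‖^2 * levyKernel N s g z ≤ ε := by
  have hms : ∀ r : ℝ, MeasurableSet {z : EN N | ‖z‖ ≤ r} :=
    fun r => measurableSet_le measurable_norm measurable_const
  have h := tendsto_setIntegral_of_antitone (μ := volume)
    (f := fun z : EN N => ‖z‖^2 * levyKernel N s g z)
    (s := fun n : ℕ => {z : EN N | ‖z‖ ≤ 1 / ((n:ℝ) + 1)}) (fun n => hms _)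
    (by
      intro m n hmn z hz
      simp only [mem_ofPred_eq] at hz ⊢
      exact le_trans hz (Nat.one_div_le_one_div hmn))
    ⟨0, kernel_int_near hN hs hg _⟩
  have h0 : (⋂ n : ℕ, {z : EN N | ‖z‖ ≤ 1 / ((n:ℝ) + 1)}) = {0} := by
    ext z
    simp only [mem_iInter, mem_ofPred_eq, mem_singleton_iff]
    constructor
    · intro hz
      by_contra hne
      obtain ⟨n, hn⟩ := exists_nat_one_div_lt (norm_pos_iff.2 hne)
      exact absurd (hz n) (not_le.2 hn)
    · rintro rfl n
      simp; positivity
  rw [h0] at h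
  have h1 : ∫ z in ({0} : Set (EN N)), ‖z‖^2 * levyKernel N s g z = 0 := by
    rw [integral_singleton]; simp
  rw [h1] at h
  obtain ⟨n, hn⟩ := (h.eventually (gt_mem_nhds hε)).exists
  refine ⟨1/((n:ℝ)+1), by positivity, ?_, hn.le⟩
  rw [div_le_one (by positivity)]
  have : (0:ℝ) ≤ n := n.cast_nonneg
  linarith

/-! ### The Lévy operator on smooth functions -/

/-- Bounded `C²` functions with a globally quadratic first-order Taylor remainder. -/
def C2b {N : ℕ} (φ : EN N → ℝ) : Prop :=
  ContDiff ℝ 2 φ ∧ ∃ M, ∀ x, |φ x| ≤ M ∧ ∀ z, |φ (x + z) - φ x - fderiv ℝ φ x z| ≤ M * ‖z‖ ^ 2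

lemma meas_near {N : ℕ} (r : ℝ) : MeasurableSet {z : EN N | ‖z‖ ≤ r} :=
  measurableSet_le measurable_norm measurable_const

lemma meas_far {N : ℕ} (r : ℝ) : MeasurableSet {z : EN N | r < ‖z‖} :=
  measurableSet_lt measurable_const measurable_norm

lemma near_integrable {N : ℕ} (hN : 1 ≤ N) {s : ℝ} (hs : s ∈ Ioo (0:ℝ) 1) {g : EN N → ℝ}
    (hg : H1 N g) {φ : EN N → ℝ} (hφ : Continuous φ) {x : EN N} {r M : ℝ}
    (hM : ∀ z, ‖z‖ ≤ r → |φ (x + z) - φ x - fderiv ℝ φ x z| ≤ M * ‖z‖ ^ 2) :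
    IntegrableOn (fun z => (φ (x + z) - φ x - fderiv ℝ φ x z) * levyKernel N s g z)
      {z | ‖z‖ ≤ r} := by
  refine ((kernel_int_near hN hs hg r).const_mul M).mono' ?_ ?_
  · refine (Measurable.mul ?_ (kernel_meas hg)).aestronglyMeasurable
    exact Continuous.measurable (by fun_prop)
  · refine (ae_restrict_iff' (meas_near r)).2 (Eventually.of_forall fun z hz => ?_)
    rw [norm_mul, Real.norm_eq_abs, Real.norm_of_nonneg (kernel_nonneg hs hg z), ← mul_assoc]
    exact mul_le_mul_of_nonneg_right (hM z hz) (kernel_nonneg hs hg z)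

lemma far_integrable {N : ℕ} (hN : 1 ≤ N) {s : ℝ} (hs : s ∈ Ioo (0:ℝ) 1) {g : EN N → ℝ}
    (hg : H1 N g) {f : EN N → ℝ} (hf : Continuous f) {B : ℝ} (hB : ∀ x, |f x| ≤ B)
    {r : ℝ} (hr : 0 < r) :
    IntegrableOn (fun z => f z * levyKernel N s g z) {z | r < ‖z‖} := by
  refine ((kernel_int_far hN hs hg hr).const_mul B).mono' ?_ ?_
  · exact (hf.measurable.mul (kernel_meas hg)).aestronglyMeasurable
  · refine Eventually.of_forall fun z => ?_
    rw [norm_mul, Real.norm_eq_abs, Real.norm_of_nonneg (kernel_nonneg hs hg z)]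
    exact mul_le_mul_of_nonneg_right (hB z) (kernel_nonneg hs hg z)

lemma far_integrable' {N : ℕ} (hN : 1 ≤ N) {s : ℝ} (hs : s ∈ Ioo (0:ℝ) 1) {g : EN N → ℝ}
    (hg : H1 N g) {u : EN N → ℝ} (hu : Continuous u) {B : ℝ} (hB : ∀ x, |u x| ≤ B)
    {r : ℝ} (hr : 0 < r) (x : EN N) :
    IntegrableOn (fun z => (u (x + z) - u x) * levyKernel N s g z) {z | r < ‖z‖} := by
  refine far_integrable hN hs hg (f := fun z => u (x + z) - u x) (by fun_prop) (B := B + B) ?_ hr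
  intro z
  exact (abs_sub _ _).trans (add_le_add (hB _) (hB _))

/-- A `C²` function has, on every ball, a quadratic first-order Taylor remainder. -/
lemma quad_local {N : ℕ} {φ : EN N → ℝ} (hφ : ContDiff ℝ 2 φ) (x : EN N) (r : ℝ) :
    ∃ M, ∀ z, ‖z‖ ≤ r → |φ (x + z) - φ x - fderiv ℝ φ x z| ≤ M * ‖z‖ ^ 2 := by
  have hd : Differentiable ℝ φ := hφ.differentiable (by norm_num)
  have hd1 : ContDiff ℝ 1 (fderiv ℝ φ) := hφ.fderiv_right (by norm_num)
  have hc2 : Continuous (fderiv ℝ (fderiv ℝ φ)) := hd1.continuous_fderiv (by norm_num)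
  obtain ⟨M, hM⟩ : ∃ M, ∀ w ∈ closedBall x r, ‖fderiv ℝ (fderiv ℝ φ) w‖ ≤ M :=
    (isCompact_closedBall x r).exists_bound_of_continuousOn
      (f := fun w => fderiv ℝ (fderiv ℝ φ) w) hc2.continuousOn
  refine ⟨M, fun z hz => ?_⟩
  have hsub : closedBall x ‖z‖ ⊆ closedBall x r := closedBall_subset_closedBall hz
  have h1 : ∀ y ∈ closedBall x ‖z‖, ‖fderiv ℝ φ y - fderiv ℝ φ x‖ ≤ M * ‖z‖ := by
    intro y hy
    have hM0 : 0 ≤ M := (ContinuousLinearMap.opNorm_nonneg _).trans (hM y (hsub hy))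
    have := (convex_closedBall x ‖z‖).norm_image_sub_le_of_norm_fderiv_le (𝕜 := ℝ)
      (f := fderiv ℝ φ) (C := M)
      (fun w _ => (hd1.differentiable (by norm_num)) w) (fun w hw => hM w (hsub hw))
      (mem_closedBall_self (norm_nonneg z)) hy
    refine this.trans (mul_le_mul_of_nonneg_left ?_ hM0)
    simpa [dist_eq_norm] using hy
  have h2 := (convex_closedBall x ‖z‖).norm_image_sub_le_of_norm_fderiv_le' (𝕜 := ℝ)
    (f := φ) (φ := fderiv ℝ φ x) (fun w _ => hd w) h1
    (mem_closedBall_self (norm_nonneg z)) (y := x + z) (by simp)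
  rw [add_sub_cancel_left, Real.norm_eq_abs] at h2
  rw [pow_two, ← mul_assoc]; exact h2

/-- Linear functions do not contribute on annuli, the kernel being even. -/
lemma integral_odd {N : ℕ} {s : ℝ} {g : EN N → ℝ} (hg : H1 N g) (ℓ : EN N →L[ℝ] ℝ) (r ρ : ℝ) :
    ∫ z in {z : EN N | r < ‖z‖ ∧ ‖z‖ ≤ ρ}, ℓ z * levyKernel N s g z = 0 := by
  have hm : MeasurableSet {z : EN N | r < ‖z‖ ∧ ‖z‖ ≤ ρ} := (meas_far r).inter (meas_near ρ)
  rw [← integral_indicator hm]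
  set F : EN N → ℝ := indicator {z : EN N | r < ‖z‖ ∧ ‖z‖ ≤ ρ} fun z => ℓ z * levyKernel N s g z
  have h1 : ∫ z, F (-z) = ∫ z, F z := integral_neg_eq_self F volume
  have h2 : ∀ z, F (-z) = - F z := by
    intro z
    simp only [F, indicator, mem_ofPred_eq, norm_neg, map_neg, kernel_even hg]
    split_ifs <;> simp
  simp only [h2, integral_neg] at h1
  linarith

/-- Passing from `r` to `ρ` moves the annulus between the two integrals; the gradient term vanishes there by `integral_odd`. -/
lemma levyJ_aux {N : ℕ} (hN : 1 ≤ N) {s : ℝ} (hs : s ∈ Ioo (0:ℝ) 1) {g : EN N → ℝ}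
    (hg : H1 N g) {φ : EN N → ℝ} (hφ : C2b φ) (x : EN N) {r ρ : ℝ} (hr : 0 < r) (hρ : r ≤ ρ) :
    levyI1 N s g φ r x + levyI2 N s g φ r x = levyI1 N s g φ ρ x + levyI2 N s g φ ρ x := by
  obtain ⟨hc, M, hM⟩ := hφ
  unfold levyI1 levyI2
  have hA : MeasurableSet {z : EN N | r < ‖z‖ ∧ ‖z‖ ≤ ρ} := (meas_far r).inter (meas_near ρ)
  have e1 : {z : EN N | ‖z‖ ≤ ρ} = {z | ‖z‖ ≤ r} ∪ {z | r < ‖z‖ ∧ ‖z‖ ≤ ρ} := by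
    ext z; simp only [mem_union, mem_ofPred_eq]
    constructor
    · intro h; rcases le_or_gt ‖z‖ r with h' | h'
      · exact Or.inl h'
      · exact Or.inr ⟨h', h⟩
    · rintro (h | h); exacts [h.trans hρ, h.2]
  have e2 : {z : EN N | r < ‖z‖} = {z | r < ‖z‖ ∧ ‖z‖ ≤ ρ} ∪ {z | ρ < ‖z‖} := by
    ext z; simp only [mem_union, mem_ofPred_eq]
    constructor
    · intro h; rcases le_or_gt ‖z‖ ρ with h' | h'
      · exact Or.inl ⟨h, h'⟩
      · exact Or.inr h'
    · rintro (h | h); exacts [h.1, hρ.trans_lt h]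
  have i1 := near_integrable hN hs hg hc.continuous (x := x) (r := ρ) (M := M)
    (fun z _ => (hM x).2 z)
  have i2 := far_integrable' hN hs hg hc.continuous (fun y => (hM y).1) hr x
  rw [e1] at i1 ⊢
  rw [e2] at i2 ⊢
  rw [setIntegral_union _ hA i1.left_of_union i1.right_of_union,
    setIntegral_union _ (meas_far ρ) i2.left_of_union i2.right_of_union]
  · have h3 : ∫ z in {z : EN N | r < ‖z‖ ∧ ‖z‖ ≤ ρ},
        (φ (x + z) - φ x - fderiv ℝ φ x z) * levyKernel N s g z
        = ∫ z in {z : EN N | r < ‖z‖ ∧ ‖z‖ ≤ ρ}, (φ (x + z) - φ x) * levyKernel N s g z := by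
      have h4 := integral_sub i2.left_of_union i1.right_of_union
      have h5 : ∀ z, (φ (x + z) - φ x) * levyKernel N s g z
          - (φ (x + z) - φ x - fderiv ℝ φ x z) * levyKernel N s g z
          = fderiv ℝ φ x z * levyKernel N s g z := fun z => by ring
      simp only [h5, integral_odd hg] at h4
      linarith
    rw [h3]; ring
  · rw [Set.disjoint_left]; intro z h1 h2
    simp only [mem_ofPred_eq] at h1 h2; linarith [h1.2]
  · rw [Set.disjoint_left]; intro z h1 h2
    simp only [mem_ofPred_eq] at h1 h2; linarith [h2.1]

/-- For a bounded `C²` function the sum `I^{1,r} + I^{2,r}` does not depend on `r`. -/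
lemma levyJ_indep {N : ℕ} (hN : 1 ≤ N) {s : ℝ} (hs : s ∈ Ioo (0:ℝ) 1) {g : EN N → ℝ}
    (hg : H1 N g) {φ : EN N → ℝ} (hφ : C2b φ) (x : EN N) {r ρ : ℝ} (hr : 0 < r) (hρ : 0 < ρ) :
    levyI1 N s g φ r x + levyI2 N s g φ r x = levyI1 N s g φ ρ x + levyI2 N s g φ ρ x := by
  rcases le_total r ρ with h | h
  · exact levyJ_aux hN hs hg hφ x hr h
  · exact (levyJ_aux hN hs hg hφ x hρ h).symm

lemma levyI1_bound {N : ℕ} (hN : 1 ≤ N) {s : ℝ} (hs : s ∈ Ioo (0:ℝ) 1) {g : EN N → ℝ}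
    (hg : H1 N g) {φ : EN N → ℝ} {x : EN N} {r M : ℝ}
    (hM : ∀ z, |φ (x + z) - φ x - fderiv ℝ φ x z| ≤ M * ‖z‖ ^ 2) :
    |levyI1 N s g φ r x| ≤ M * ∫ z in {z : EN N | ‖z‖ ≤ r}, ‖z‖^2 * levyKernel N s g z := by
  unfold levyI1
  rw [← Real.norm_eq_abs, ← integral_const_mul]
  refine norm_integral_le_of_norm_le ((kernel_int_near hN hs hg r).const_mul M)
    (Eventually.of_forall fun z => ?_)
  rw [norm_mul, Real.norm_eq_abs, Real.norm_of_nonneg (kernel_nonneg hs hg z), ← mul_assoc]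
  exact mul_le_mul_of_nonneg_right (hM z) (kernel_nonneg hs hg z)

lemma levyI2_bound {N : ℕ} (hN : 1 ≤ N) {s : ℝ} (hs : s ∈ Ioo (0:ℝ) 1) {g : EN N → ℝ}
    (hg : H1 N g) {u : EN N → ℝ} {x : EN N} {r B : ℝ} (hr : 0 < r) (hB : ∀ y, |u y| ≤ B) :
    |levyI2 N s g u r x| ≤ (B + B) * ∫ z in {z : EN N | r < ‖z‖}, levyKernel N s g z := by
  unfold levyI2
  rw [← Real.norm_eq_abs, ← integral_const_mul]
  refine norm_integral_le_of_norm_le ((kernel_int_far hN hs hg hr).const_mul _)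
    (Eventually.of_forall fun z => ?_)
  rw [norm_mul, Real.norm_eq_abs, Real.norm_of_nonneg (kernel_nonneg hs hg z)]
  exact mul_le_mul_of_nonneg_right ((abs_sub _ _).trans (add_le_add (hB _) (hB _)))
    (kernel_nonneg hs hg z)

lemma levyI2_mono {N : ℕ} (hN : 1 ≤ N) {s : ℝ} (hs : s ∈ Ioo (0:ℝ) 1) {g : EN N → ℝ}
    (hg : H1 N g) {u v : EN N → ℝ} {x : EN N} {r B B' : ℝ} (hr : 0 < r)
    (hu : Continuous u) (hv : Continuous v) (hB : ∀ y, |u y| ≤ B) (hB' : ∀ y, |v y| ≤ B')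
    (h : ∀ z, u (x + z) - u x ≤ v (x + z) - v x) :
    levyI2 N s g u r x ≤ levyI2 N s g v r x :=
  setIntegral_mono (far_integrable' hN hs hg hu hB hr x) (far_integrable' hN hs hg hv hB' hr x)
    fun z => mul_le_mul_of_nonneg_right (h z) (kernel_nonneg hs hg z)

/-- Comparison of the singular parts at a touching point: if `φ` touches `V` from below at `x`
on the ball of radius `r`, the gradients agree and the increments are ordered. -/
lemma levyI1_mono {N : ℕ} (hN : 1 ≤ N) {s : ℝ} (hs : s ∈ Ioo (0:ℝ) 1) {g : EN N → ℝ}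
    (hg : H1 N g) {φ V : EN N → ℝ} {x : EN N} {r : ℝ} (hr : 0 < r)
    (hφ : ContDiff ℝ 2 φ) (hV : ContDiff ℝ 2 V)
    (h : ∀ y ∈ ball x r, V x - φ x ≤ V y - φ y) :
    levyI1 N s g φ r x ≤ levyI1 N s g V r x := by
  obtain ⟨M, hM⟩ := quad_local hφ x r
  obtain ⟨M', hM'⟩ := quad_local hV x r
  have hdφ : DifferentiableAt ℝ φ x := (hφ.differentiable (by norm_num)) x
  have hdV : DifferentiableAt ℝ V x := (hV.differentiable (by norm_num)) x
  have hmin : IsLocalMin (fun y => V y - φ y) x :=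
    Filter.mem_of_superset (ball_mem_nhds x hr) fun y hy => h y hy
  have hgrad : fderiv ℝ V x = fderiv ℝ φ x := by
    have := hmin.fderiv_eq_zero
    rw [fderiv_fun_sub hdV hdφ] at this
    exact sub_eq_zero.1 this
  have hcont : ∀ y ∈ closedBall x r, V x - φ x ≤ V y - φ y := by
    intro y hy
    have hcl : y ∈ closure (ball x r) := by rwa [closure_ball x hr.ne']
    exact le_on_closure (f := fun _ => V x - φ x) (g := fun y => V y - φ y) h
      continuousOn_const (hV.continuous.sub hφ.continuous).continuousOn hcl
  unfold levyI1
  refine setIntegral_mono_on (near_integrable hN hs hg hφ.continuous hM)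
    (near_integrable hN hs hg hV.continuous hM') (meas_near r) fun z hz => ?_
  refine mul_le_mul_of_nonneg_right ?_ (kernel_nonneg hs hg z)
  have := hcont (x + z) (by simpa using hz)
  rw [hgrad]; linarith

lemma levyI1_add {N : ℕ} (hN : 1 ≤ N) {s : ℝ} (hs : s ∈ Ioo (0:ℝ) 1) {g : EN N → ℝ}
    (hg : H1 N g) {φ V : EN N → ℝ} {x : EN N} {r : ℝ}
    (hφ : ContDiff ℝ 2 φ) (hV : ContDiff ℝ 2 V) :
    levyI1 N s g (fun y => φ y + V y) r x = levyI1 N s g φ r x + levyI1 N s g V r x := by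
  obtain ⟨M, hM⟩ := quad_local hφ x r
  obtain ⟨M', hM'⟩ := quad_local hV x r
  have hdφ : DifferentiableAt ℝ φ x := (hφ.differentiable (by norm_num)) x
  have hdV : DifferentiableAt ℝ V x := (hV.differentiable (by norm_num)) x
  unfold levyI1
  rw [← integral_add (near_integrable hN hs hg hφ.continuous hM)
    (near_integrable hN hs hg hV.continuous hM')]
  congr 1; ext z
  rw [fderiv_fun_add hdφ hdV]
  simp only [add_apply]; ring

lemma levyI2_add {N : ℕ} (hN : 1 ≤ N) {s : ℝ} (hs : s ∈ Ioo (0:ℝ) 1) {g : EN N → ℝ}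
    (hg : H1 N g) {u v : EN N → ℝ} {x : EN N} {r B B' : ℝ} (hr : 0 < r)
    (hu : Continuous u) (hv : Continuous v) (hB : ∀ y, |u y| ≤ B) (hB' : ∀ y, |v y| ≤ B') :
    levyI2 N s g (fun y => u y + v y) r x = levyI2 N s g u r x + levyI2 N s g v r x := by
  unfold levyI2
  rw [← integral_add (far_integrable' hN hs hg hu hB hr x) (far_integrable' hN hs hg hv hB' hr x)]
  congr 1; ext z; ring

lemma levyI1_const_add {N : ℕ} {s : ℝ} {g : EN N → ℝ}
    (c : ℝ) (φ : EN N → ℝ) (r : ℝ) (x : EN N) :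
    levyI1 N s g (fun y => φ y + c) r x = levyI1 N s g φ r x := by
  unfold levyI1
  congr 1; ext z
  rw [fderiv_add_const]; ring_nf

lemma levyI2_const_add {N : ℕ} {s : ℝ} {g : EN N → ℝ}
    (c : ℝ) (φ : EN N → ℝ) (r : ℝ) (x : EN N) :
    levyI2 N s g (fun y => φ y + c) r x = levyI2 N s g φ r x := by
  unfold levyI2
  congr 1; ext z; ring_nf

lemma levyI1_neg {N : ℕ} {s : ℝ} {g : EN N → ℝ} (φ : EN N → ℝ) (r : ℝ) (x : EN N) :
    levyI1 N s g (fun y => -φ y) r x = -levyI1 N s g φ r x := by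
  unfold levyI1
  rw [← integral_neg]
  congr 1; ext z
  rw [fderiv_fun_neg]
  simp only [neg_apply]; ring

lemma levyI2_neg {N : ℕ} {s : ℝ} {g : EN N → ℝ} (φ : EN N → ℝ) (r : ℝ) (x : EN N) :
    levyI2 N s g (fun y => -φ y) r x = -levyI2 N s g φ r x := by
  unfold levyI2
  rw [← integral_neg]
  congr 1; ext z; ring

lemma C2b.neg {N : ℕ} {φ : EN N → ℝ} (h : C2b φ) : C2b fun y => -φ y := by
  obtain ⟨hc, M, hM⟩ := h
  refine ⟨hc.neg, M, fun x => ⟨by simpa using (hM x).1, fun z => ?_⟩⟩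
  rw [fderiv_fun_neg, ← abs_neg]
  convert (hM x).2 z using 2
  simp only [neg_apply]; ring

/-! ### Mollification -/

set_option linter.unusedSectionVars false

section Mollifier
variable {E : Type*} [NormedAddCommGroup E] [NormedSpace ℝ E] [FiniteDimensional ℝ E]
  [MeasurableSpace E] [BorelSpace E]

/-- A smooth probability density supported in the ball of radius `ε`. -/
structure IsMoll (μ : Measure E) (ε : ℝ) (ψ : E → ℝ) : Prop where
  smooth : ContDiff ℝ 2 ψ
  cpt : HasCompactSupport ψ
  nonneg : ∀ x, 0 ≤ ψ x
  mass : ∫ x, ψ x ∂μ = 1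
  supp : ∀ x, ψ x ≠ 0 → ‖x‖ ≤ ε

lemma exists_isMoll (μ : Measure E) [μ.IsAddHaarMeasure] {ε : ℝ} (hε : 0 < ε) :
    ∃ ψ : E → ℝ, IsMoll μ ε ψ := by
  let b : ContDiffBump (0 : E) := ⟨ε / 2, ε, by positivity, by linarith⟩
  refine ⟨b.normed μ, ?_, b.hasCompactSupport_normed, b.nonneg_normed, b.integral_normed, ?_⟩
  · exact b.contDiff_normed (n := 2)
  · intro x hx
    have : x ∈ Function.support (b.normed μ) := hx
    rw [b.support_normed_eq] at this
    exact (mem_ball_zero_iff.1 this).le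

/-- Convolution with the density `ψ`. -/
noncomputable def moll (μ : Measure E) (ψ u : E → ℝ) (x : E) : ℝ := ∫ t, ψ t * u (x - t) ∂μ

variable {μ : Measure E} [μ.IsAddHaarMeasure] {ε : ℝ} {ψ : E → ℝ}

lemma moll_integrable (hψ : IsMoll μ ε ψ) {u : E → ℝ} (hu : Continuous u) (x : E) :
    Integrable (fun t => ψ t * u (x - t)) μ := by
  have hc := hψ.smooth.continuous
  exact (hc.mul (hu.comp (continuous_const.sub continuous_id))).integrable_of_hasCompactSupport
    hψ.cpt.mul_right

lemma moll_integrable_psi (hψ : IsMoll μ ε ψ) : Integrable ψ μ :=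
  hψ.smooth.continuous.integrable_of_hasCompactSupport hψ.cpt

/-- Averages of ordered functions are ordered, with an additive shift and a translation. -/
lemma moll_le (hψ : IsMoll μ ε ψ) {u v : E → ℝ} (hu : Continuous u) (hv : Continuous v)
    {x y : E} {c : ℝ} (h : ∀ t, ‖t‖ ≤ ε → u (x - t) ≤ v (y - t) + c) :
    moll μ ψ u x ≤ moll μ ψ v y + c := by
  have e : moll μ ψ v y + c = ∫ t, (ψ t * v (y - t) + ψ t * c) ∂μ := by
    rw [integral_add (moll_integrable hψ hv y) ((moll_integrable_psi hψ).mul_const c),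
      integral_mul_const, hψ.mass, one_mul]; rfl
  rw [e]
  refine integral_mono (moll_integrable hψ hu x)
    ((moll_integrable hψ hv y).add ((moll_integrable_psi hψ).mul_const c)) fun t => ?_
  show ψ t * u (x - t) ≤ ψ t * v (y - t) + ψ t * c
  rw [← mul_add]
  by_cases ht : ψ t = 0
  · simp [ht]
  · exact mul_le_mul_of_nonneg_left (h t (hψ.supp t ht)) (hψ.nonneg t)

lemma moll_const (hψ : IsMoll μ ε ψ) (c : ℝ) (x : E) : moll μ ψ (fun _ => c) x = c := by
  unfold moll; rw [integral_mul_const, hψ.mass, one_mul]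

lemma moll_le_const (hψ : IsMoll μ ε ψ) {u : E → ℝ} (hu : Continuous u)
    {x : E} {c : ℝ} (h : ∀ t, ‖t‖ ≤ ε → u (x - t) ≤ c) : moll μ ψ u x ≤ c := by
  have := moll_le hψ hu (continuous_const (y := (0:ℝ))) (x := x) (y := x) (c := c) (by simpa using h)
  rwa [moll_const hψ, zero_add] at this

lemma le_moll_const (hψ : IsMoll μ ε ψ) {u : E → ℝ} (hu : Continuous u)
    {x : E} {c : ℝ} (h : ∀ t, ‖t‖ ≤ ε → c ≤ u (x - t)) : c ≤ moll μ ψ u x := by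
  have := moll_le hψ (continuous_const (y := c)) hu (x := x) (y := x) (c := 0) (by simpa using h)
  rwa [moll_const hψ, add_zero] at this

lemma moll_abs_sub_le (hψ : IsMoll μ ε ψ) {u : E → ℝ} (hu : Continuous u)
    {x : E} {c κ : ℝ} (h : ∀ t, ‖t‖ ≤ ε → |u (x - t) - c| ≤ κ) : |moll μ ψ u x - c| ≤ κ := by
  have h1 := moll_le_const hψ hu (x := x) (c := c + κ) fun t ht => by
    linarith [(abs_le.1 (h t ht)).2]
  have h2 := le_moll_const hψ hu (x := x) (c := c - κ) fun t ht => by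
    linarith [(abs_le.1 (h t ht)).1]
  rw [abs_le]; constructor <;> linarith

lemma moll_add (hψ : IsMoll μ ε ψ) {u v : E → ℝ} (hu : Continuous u) (hv : Continuous v) (x : E) :
    moll μ ψ (fun y => u y + v y) x = moll μ ψ u x + moll μ ψ v x := by
  unfold moll
  rw [← integral_add (moll_integrable hψ hu x) (moll_integrable hψ hv x)]
  congr 1; ext t; ring

lemma moll_smul (c : ℝ) (u : E → ℝ) (x : E) :
    moll μ ψ (fun y => c * u y) x = c * moll μ ψ u x := by
  unfold moll
  rw [← integral_const_mul]
  congr 1; ext t; ring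

open scoped Convolution in
set_option maxSynthPendingDepth 3 in
/-- Convolution with a compactly supported `C¹` function is differentiable, with a derivative
controlled by the sup norm of the other factor. -/
lemma conv_deriv_bound {F G : Type*} [NormedAddCommGroup F] [NormedSpace ℝ F]
    [NormedAddCommGroup G] [NormedSpace ℝ G] [CompleteSpace G] (L : F →L[ℝ] ℝ →L[ℝ] G) {f : E → F}
    (hf : ContDiff ℝ 1 f) (hc : HasCompactSupport f) :
    ∃ C, 0 ≤ C ∧ ∀ (u : E → ℝ) (B : ℝ), Continuous u → (∀ x, |u x| ≤ B) → ∀ x,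
      HasFDerivAt (f ⋆[L, μ] u) ((fderiv ℝ f ⋆[L.precompL E, μ] u) x) x ∧
      ‖(fderiv ℝ f ⋆[L.precompL E, μ] u) x‖ ≤ C * B := by
  have hd : Continuous (fderiv ℝ f) := hf.continuous_fderiv (by norm_num)
  have hi : Integrable (fun t => ‖fderiv ℝ f t‖) μ :=
    hd.norm.integrable_of_hasCompactSupport (hc.fderiv ℝ).norm
  refine ⟨‖L.precompL E‖ * ∫ t, ‖fderiv ℝ f t‖ ∂μ,
    mul_nonneg (ContinuousLinearMap.opNorm_nonneg _) (integral_nonneg fun _ => norm_nonneg _), ?_⟩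
  intro u B hu hB x
  refine ⟨hc.hasFDerivAt_convolution_left L hf hu.locallyIntegrable x, ?_⟩
  rw [convolution_def, mul_assoc, mul_comm _ B, ← mul_assoc, ← integral_const_mul]
  refine norm_integral_le_of_norm_le (hi.const_mul _) (Eventually.of_forall fun t => ?_)
  refine ((L.precompL E).le_opNorm₂ _ _).trans ?_
  rw [mul_assoc, mul_assoc, mul_comm B]
  exact mul_le_mul_of_nonneg_left (mul_le_mul_of_nonneg_left (hB _) (norm_nonneg _))
    (ContinuousLinearMap.opNorm_nonneg _)

/-- Mollified bounded functions are `C²`, with a bounded and Lipschitz gradient. -/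
lemma moll_C2 (hψ : IsMoll μ ε ψ) :
    ∃ C, 0 ≤ C ∧ ∀ (u : E → ℝ) (B : ℝ), Continuous u → (∀ x, |u x| ≤ B) →
      ContDiff ℝ 2 (moll μ ψ u) ∧ (∀ x, ‖fderiv ℝ (moll μ ψ u) x‖ ≤ C * B) ∧
      ∀ x y, ‖fderiv ℝ (moll μ ψ u) x - fderiv ℝ (moll μ ψ u) y‖ ≤ C * B * ‖x - y‖ := by
  let L := ContinuousLinearMap.mul ℝ ℝ
  have h1 : ContDiff ℝ 1 (fderiv ℝ ψ) := hψ.smooth.fderiv_right (by norm_num)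
  obtain ⟨C1, hC1, H1⟩ := conv_deriv_bound (μ := μ) L (hψ.smooth.of_le (by norm_num)) hψ.cpt
  obtain ⟨C2, hC2, H2⟩ := conv_deriv_bound (μ := μ) (L.precompL E) h1 (hψ.cpt.fderiv ℝ)
  refine ⟨max C1 C2, hC1.trans (le_max_left _ _), fun u B hu hB => ?_⟩
  have hB0 : 0 ≤ B := (abs_nonneg _).trans (hB 0)
  have e : moll μ ψ u = MeasureTheory.convolution ψ u L μ := by
    ext x; rfl
  have e2 : fderiv ℝ (moll μ ψ u) = MeasureTheory.convolution (fderiv ℝ ψ) u (L.precompL E) μ := by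
    ext1 x; rw [e]; exact (H1 u B hu hB x).1.fderiv
  refine ⟨?_, ?_, ?_⟩
  · rw [e]; exact hψ.cpt.contDiff_convolution_left L hψ.smooth hu.locallyIntegrable
  · intro x; rw [e2]
    exact (H1 u B hu hB x).2.trans (mul_le_mul_of_nonneg_right (le_max_left _ _) hB0)
  · intro x y; rw [e2]
    refine convex_univ.norm_image_sub_le_of_norm_hasFDerivWithin_le (𝕜 := ℝ)
      (fun w _ => (H2 u B hu hB w).1.hasFDerivWithinAt) (fun w _ => ?_) (mem_univ _) (mem_univ _)
    exact (H2 u B hu hB w).2.trans (mul_le_mul_of_nonneg_right (le_max_right _ _) hB0)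

end Mollifier

instance instHaarProd (N : ℕ) : (volume : Measure (EN N × ℝ)).IsAddHaarMeasure :=
  inferInstanceAs ((volume : Measure (EN N)).prod (volume : Measure ℝ)).IsAddHaarMeasure

/-- The nonlocal operator with the small jumps removed commutes with mollification in `(y, y_{N+1})`. -/
lemma levyI2_moll {N : ℕ} (hN : 1 ≤ N) {s : ℝ} (hs : s ∈ Ioo (0:ℝ) 1) {g : EN N → ℝ}
    (hg : H1 N g) {ε : ℝ} {ψ : EN N × ℝ → ℝ} (hψ : IsMoll volume ε ψ)
    {u : EN N × ℝ → ℝ} (hu : Continuous u) {B : ℝ} (hB : ∀ Y, |u Y| ≤ B) {ρ : ℝ} (hρ : 0 < ρ)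
    (y : EN N) (a : ℝ) :
    levyI2 N s g (fun y => moll volume ψ u (y, a)) ρ y
      = moll volume ψ (fun Y => levyI2 N s g (fun y => u (y, Y.2)) ρ Y.1) (y, a) := by
  have key : Integrable (fun q : EN N × (EN N × ℝ) =>
      ψ q.2 * (u ((y + q.1, a) - q.2) - u ((y, a) - q.2)) * levyKernel N s g q.1)
      ((volume.restrict {z : EN N | ρ < ‖z‖}).prod volume) := by
    have hd : Integrable (fun q : EN N × (EN N × ℝ) => levyKernel N s g q.1 * (ψ q.2 * (B + B)))
      ((volume.restrict {z : EN N | ρ < ‖z‖}).prod volume) :=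
      (kernel_int_far hN hs hg hρ).integrable.mul_prod ((moll_integrable_psi hψ).mul_const _)
    refine hd.mono' ?_ (Eventually.of_forall fun q => ?_)
    · refine Measurable.aestronglyMeasurable ?_
      refine Measurable.mul ?_ ((kernel_meas hg).comp measurable_fst)
      have hc := hψ.smooth.continuous
      exact Continuous.measurable (by fun_prop)
    · rw [norm_mul, norm_mul, Real.norm_of_nonneg (hψ.nonneg _), Real.norm_eq_abs,
        Real.norm_of_nonneg (kernel_nonneg hs hg _), mul_comm]
      refine mul_le_mul_of_nonneg_left (mul_le_mul_of_nonneg_left ?_ (hψ.nonneg _))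
        (kernel_nonneg hs hg _)
      exact (abs_sub _ _).trans (add_le_add (hB _) (hB _))
  have h := integral_integral_swap (f := fun z t =>
    ψ t * (u ((y + z, a) - t) - u ((y, a) - t)) * levyKernel N s g z) key
  have e1 : levyI2 N s g (fun y => moll volume ψ u (y, a)) ρ y = ∫ z in {z : EN N | ρ < ‖z‖},
      ∫ t, ψ t * (u ((y + z, a) - t) - u ((y, a) - t)) * levyKernel N s g z := by
    unfold levyI2
    congr 1; ext z
    rw [integral_mul_const]
    congr 1
    unfold moll
    rw [← integral_sub (moll_integrable hψ hu _) (moll_integrable hψ hu _)]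
    congr 1; ext t; ring
  have e2 : moll volume ψ (fun Y => levyI2 N s g (fun y => u (y, Y.2)) ρ Y.1) (y, a) = ∫ t,
      ∫ z in {z : EN N | ρ < ‖z‖},
        ψ t * (u ((y + z, a) - t) - u ((y, a) - t)) * levyKernel N s g z := by
    unfold moll levyI2
    congr 1; ext t
    rw [← integral_const_mul]
    congr 1; ext z
    have : ((y, a) - t).1 + z = ((y + z, a) - t).1 := by simp; abel
    rw [this]
    simp only [Prod.mk_sub_mk, Prod.fst_sub, Prod.snd_sub]
    rw [mul_assoc]; rfl
  rw [e1, e2, ← h]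

/-! ### Data of the cell problem and coupling of the jumps -/

/-- The integer lattice vector with coordinates `k`. -/
noncomputable def latVec {N : ℕ} (k : Fin N → ℤ) : EN N :=
  (WithLp.equiv 2 (Fin N → ℝ)).symm (fun j => (k j : ℝ))

/-- Quantitative form of the data of the cell problem: `f = W'` is `K`-Lipschitz and periodic,
`σ` is periodic and `Kσ`-Lipschitz, and `M` bounds the reaction term `σ - f`. -/
structure Cell (N : ℕ) (s : ℝ) (g : EN N → ℝ) (f : ℝ → ℝ) (σ : ℝ → EN N → ℝ) (K Kσ M : ℝ) :
    Prop where
  hN : 1 ≤ N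
  hs : s ∈ Ioo (0:ℝ) 1
  hg : H1 N g
  K0 : 0 ≤ K
  Kσ0 : 0 ≤ Kσ
  f_lip : ∀ a b, |f a - f b| ≤ K * |a - b|
  f_per : ∀ a, f (a + 1) = f a
  σ_lip : ∀ t t' y y', |σ t y - σ t' y'| ≤ Kσ * (|t - t'| + ‖y - y'‖)
  σ_pert : ∀ t y, σ (t + 1) y = σ t y
  σ_perx : ∀ k t y, σ t (y + latVec k) = σ t y
  bound : ∀ v t y, |σ t y - f v| ≤ M

/-- Total mass of the jumps of size larger than `ρ`. -/
noncomputable def farMass (N : ℕ) (s : ℝ) (g : EN N → ℝ) (ρ : ℝ) : ℝ :=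
  ∫ z in {z : EN N | ρ < ‖z‖}, levyKernel N s g z

lemma farMass_nonneg {N : ℕ} {s : ℝ} (hs : s ∈ Ioo (0:ℝ) 1) {g : EN N → ℝ}
    (hg : H1 N g) (ρ : ℝ) : 0 ≤ farMass N s g ρ :=
  integral_nonneg fun z => kernel_nonneg hs hg z

/-- Synchronous coupling: the same jumps are used at `y` and at `y'`. -/
lemma jump_cmp {N : ℕ} (hN : 1 ≤ N) {s : ℝ} (hs : s ∈ Ioo (0:ℝ) 1) {g : EN N → ℝ}
    (hg : H1 N g) {u u' : EN N → ℝ} {y y' : EN N} {ρ B B' c : ℝ} (hρ : 0 < ρ)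
    (hu : Continuous u) (hu' : Continuous u') (hB : ∀ y, |u y| ≤ B) (hB' : ∀ y, |u' y| ≤ B')
    (h : ∀ z, u (y + z) - u' (y' + z) ≤ c) :
    levyI2 N s g u ρ y - levyI2 N s g u' ρ y' ≤ farMass N s g ρ * (c - (u y - u' y')) := by
  unfold levyI2 farMass
  have i1 := far_integrable' hN hs hg hu hB hρ y
  have i2 := far_integrable' hN hs hg hu' hB' hρ y'
  rw [← integral_sub i1 i2, mul_comm, ← integral_const_mul]
  refine setIntegral_mono (i1.sub i2) ((kernel_int_far hN hs hg hρ).const_mul _) fun z => ?_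
  have := mul_le_mul_of_nonneg_right (sub_le_sub_right (h z) (u y - u' y')) (kernel_nonneg hs hg z)
  linarith

/-- The kernel is bounded below away from zero on annuli: the positivity behind the coupling `far_couple`. -/
lemma kernel_lower {N : ℕ} (hN : 1 ≤ N) {s : ℝ} {g : EN N → ℝ}
    (hg : H1 N g) (R : ℝ) :
    ∃ κ, 0 < κ ∧ ∀ z, 1 < ‖z‖ → ‖z‖ ≤ R → κ ≤ levyKernel N s g z := by
  have hN' : (0:ℝ) < N := by exact_mod_cast hN
  have hc : IsCompact (closedBall (0 : EN N) R \ ball 0 1) := (isCompact_closedBall _ _).diff isOpen_ball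
  rcases (closedBall (0 : EN N) R \ ball 0 1).eq_empty_or_nonempty with he | hne
  · refine ⟨1, one_pos, fun z h1 h2 => ?_⟩
    have : z ∈ closedBall (0 : EN N) R \ ball 0 1 := ⟨by simpa using h2, by simpa using h1.le⟩
    simp [he] at this
  · have hz0 : ∀ z ∈ closedBall (0 : EN N) R \ ball 0 1, 0 < ‖z‖ := fun z hz => by
      have := hz.2; simp at this; linarith
    have hcont : ContinuousOn (levyKernel N s g) (closedBall (0 : EN N) R \ ball 0 1) := by
      unfold levyKernel
      refine ContinuousOn.mul (hg.1.comp_continuousOn ?_) ?_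
      · exact ContinuousOn.smul (continuous_norm.continuousOn.inv₀ fun z hz => (hz0 z hz).ne')
          continuousOn_id
      · exact continuous_norm.continuousOn.rpow_const fun z hz => Or.inl (hz0 z hz).ne'
    obtain ⟨z0, hz0m, hmin⟩ := hc.exists_isMinOn hne hcont
    refine ⟨levyKernel N s g z0, ?_, fun z h1 h2 => hmin ⟨by simpa using h2, by simpa using h1.le⟩⟩
    have h0 := hz0 z0 hz0m
    refine mul_pos (hg.2.1 _ ?_) (Real.rpow_pos_of_pos h0 _)
    rw [norm_smul, norm_inv, norm_norm, inv_mul_cancel₀ h0.ne']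

/-- Doeblin-type coupling of the large jumps issued from two points at distance at most `R`: a
fixed amount `c₀` of the mass lands at the same place, whatever the two points are. -/
lemma far_couple {N : ℕ} (hN : 1 ≤ N) {s : ℝ} (hs : s ∈ Ioo (0:ℝ) 1) {g : EN N → ℝ}
    (hg : H1 N g) {R : ℝ} (hR : 0 ≤ R) :
    ∃ c₀, 0 < c₀ ∧ ∀ (u : EN N → ℝ) (i G : ℝ) (y y' : EN N), Continuous u →
      (∀ x, i ≤ u x) → (∀ x, u x ≤ i + G) → ‖y - y'‖ ≤ R →
      levyI2 N s g u 1 y - levyI2 N s g u 1 y' ≤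
        (farMass N s g 1 - c₀) * G - farMass N s g 1 * (u y - u y') := by
  obtain ⟨κ, hκ, hk⟩ := kernel_lower hN (s := s) hg (2 * R + 4)
  obtain ⟨e, he⟩ : ∃ e : EN N, ‖e‖ = R + 3 :=
    ⟨EuclideanSpace.single ⟨0, hN⟩ (R + 3), by
      rw [PiLp.norm_single, Real.norm_of_nonneg (by linarith)]⟩
  have hvol : 0 < volume.real (closedBall e 1) :=
    ENNReal.toReal_pos (measure_closedBall_pos volume e one_pos).ne' measure_closedBall_lt_top.ne
  refine ⟨κ * volume.real (closedBall e 1), mul_pos hκ hvol, fun u i G y y' hu hi hG hyy => ?_⟩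
  have hk0 := kernel_nonneg (N := N) hs hg
  set far := {z : EN N | 1 < ‖z‖}
  have hfar : MeasurableSet far := meas_far 1
  set e' := e + (y - y')
  have hsub : closedBall e 1 ⊆ far := by
    intro z hz
    have h1 : ‖e - z‖ ≤ 1 := by rw [← dist_eq_norm, dist_comm]; exact hz
    have h2 := norm_sub_norm_le e z
    show 1 < ‖z‖
    linarith
  have hup : ∀ z ∈ closedBall e 1, ‖z‖ ≤ 2 * R + 4 := by
    intro z hz
    have h1 : ‖z - e‖ ≤ 1 := by rw [← dist_eq_norm]; exact hz
    have h2 := norm_sub_norm_le z e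
    linarith
  have hsub' : closedBall e' 1 ⊆ far := by
    intro z hz
    have h1 : ‖e' - z‖ ≤ 1 := by rw [← dist_eq_norm, dist_comm]; exact hz
    have h2 := norm_sub_norm_le e (e - z)
    have h3 : ‖e - z‖ ≤ ‖e' - z‖ + ‖y - y'‖ := by
      have : e - z = (e' - z) - (y - y') := by simp only [e']; abel
      rw [this]; exact norm_sub_le _ _
    simp only [sub_sub_cancel] at h2
    show 1 < ‖z‖
    linarith
  have hup' : ∀ z ∈ closedBall e' 1, ‖z‖ ≤ 2 * R + 4 := by
    intro z hz
    have h1 : ‖z - e'‖ ≤ 1 := by rw [← dist_eq_norm]; exact hz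
    have h2 := norm_sub_norm_le z e'
    have h3 : ‖e'‖ ≤ ‖e‖ + ‖y - y'‖ := norm_add_le _ _
    linarith
  have hub : ∀ x, |u x| ≤ |i| + |G| + |i| := fun x => by
    rw [abs_le]; constructor <;>
    linarith [hi x, hG x, neg_abs_le i, le_abs_self i, le_abs_self G, abs_nonneg G, abs_nonneg i]
  have hub' : ∀ x, |u x - i| ≤ (|i| + |G| + |i|) + |i| := fun x =>
    (abs_sub _ _).trans (add_le_add (hub x) le_rfl)
  have ik := kernel_int_far hN hs hg one_pos
  have iu : ∀ y, IntegrableOn (fun z => (u (y + z) - i) * levyKernel N s g z) far := fun y =>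
    far_integrable hN hs hg (f := fun z => u (y + z) - i) (by fun_prop) (fun z => hub' _) one_pos
  -- the mass landing in the common ball contributes equally to both points
  have hcommon : ∫ z in closedBall e 1, (u (y + z) - i) = ∫ z in closedBall e' 1, (u (y' + z) - i) := by
    rw [← integral_indicator measurableSet_closedBall, ← integral_indicator measurableSet_closedBall,
      ← integral_add_right_eq_self ((closedBall e' 1).indicator fun z => u (y' + z) - i) (y - y')]
    congr 1; ext z
    have h1 : z + (y - y') - e' = z - e := by simp only [e']; abel
    have h2 : y' + (z + (y - y')) = y + z := by abel
    simp only [indicator, mem_closedBall, dist_eq_norm, h1, h2]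
  have icb : ∀ (w x : EN N), IntegrableOn (fun z => u (x + z) - i) (closedBall w 1) := fun w x =>
    (Continuous.continuousOn (by fun_prop)).integrableOn_compact (isCompact_closedBall _ _)
  have hA : ∫ z in far, (u (y + z) - i) * levyKernel N s g z ≤
      (farMass N s g 1 - κ * volume.real (closedBall e 1)) * G
        + κ * ∫ z in closedBall e 1, (u (y + z) - i) := by
    have iA : IntegrableOn (fun z => κ * (u (y + z) - i) - κ * G) (closedBall e 1) :=
      ((icb e y).const_mul κ).sub (integrableOn_const measure_closedBall_lt_top.ne)
    have iA' : Integrable ((closedBall e 1).indicator fun z => κ * (u (y + z) - i) - κ * G) :=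
      iA.integrable_indicator measurableSet_closedBall
    have e1 : ∫ z in far, (G * levyKernel N s g z
        + (closedBall e 1).indicator (fun z => κ * (u (y + z) - i) - κ * G) z)
        = (farMass N s g 1 - κ * volume.real (closedBall e 1)) * G
        + κ * ∫ z in closedBall e 1, (u (y + z) - i) := by
      rw [integral_add (ik.const_mul G) iA'.integrableOn, integral_const_mul,
        setIntegral_indicator measurableSet_closedBall, inter_eq_self_of_subset_right hsub,
        integral_sub ((icb e y).const_mul κ) (integrableOn_const measure_closedBall_lt_top.ne),
        integral_const_mul, setIntegral_const]
      simp only [farMass, smul_eq_mul]; ring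
    rw [← e1]
    refine setIntegral_mono_on (iu y) ((ik.const_mul G).add iA'.integrableOn) hfar fun z hz => ?_
    by_cases hzA : z ∈ closedBall e 1
    · rw [indicator_of_mem hzA]
      nlinarith [hk z hz (hup z hzA), hG (y + z)]
    · rw [indicator_of_notMem hzA, add_zero]
      exact mul_le_mul_of_nonneg_right (by linarith [hG (y + z)]) (hk0 z)
  have hA' : κ * ∫ z in closedBall e' 1, (u (y' + z) - i) ≤
      ∫ z in far, (u (y' + z) - i) * levyKernel N s g z := by
    rw [← integral_const_mul]
    refine le_trans ?_ (setIntegral_mono_set (iu y') (ae_of_all _ fun z =>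
      mul_nonneg (by linarith [hi (y' + z)]) (hk0 z)) hsub'.eventuallyLE)
    refine setIntegral_mono_on ((icb e' y').const_mul κ) ((iu y').mono_set hsub')
      measurableSet_closedBall fun z hz => ?_
    rw [mul_comm]
    exact mul_le_mul_of_nonneg_left (hk z (hsub' hz) (hup' z hz)) (by linarith [hi (y' + z)])
  have hlev : ∀ y, levyI2 N s g u 1 y = (∫ z in far, (u (y + z) - i) * levyKernel N s g z)
      - farMass N s g 1 * (u y - i) := by
    intro y
    unfold levyI2 farMass
    rw [mul_comm _ (u y - i), ← integral_const_mul, ← integral_sub (iu y) (ik.const_mul _)]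
    congr 1; ext z; ring
  rw [hlev y, hlev y']
  rw [hcommon] at hA
  linarith

/-! ### The Euler scheme -/

/-- Combination of the two couplings: jumps of size at most one are synchronous, larger ones are
coupled by `far_couple` (hypothesis `hfar`). -/
lemma osc_cmp {N : ℕ} (hN : 1 ≤ N) {s : ℝ} (hs : s ∈ Ioo (0:ℝ) 1) {g : EN N → ℝ}
    (hg : H1 N g) {u : EN N → ℝ} {y y' : EN N} {ρ B c D : ℝ} (hρ : 0 < ρ) (hρ1 : ρ ≤ 1)
    (hu : Continuous u) (hB : ∀ y, |u y| ≤ B)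
    (h : ∀ z, u (y + z) - u (y' + z) ≤ c)
    (hfar : levyI2 N s g u 1 y - levyI2 N s g u 1 y' ≤ D) :
    levyI2 N s g u ρ y - levyI2 N s g u ρ y' ≤
      (farMass N s g ρ - farMass N s g 1) * (c - (u y - u y')) + D := by
  have e2 : {z : EN N | ρ < ‖z‖} = {z | ρ < ‖z‖ ∧ ‖z‖ ≤ 1} ∪ {z | 1 < ‖z‖} := by
    ext z; simp only [mem_union, mem_ofPred_eq]
    constructor
    · intro h; rcases le_or_gt ‖z‖ 1 with h' | h'
      · exact Or.inl ⟨h, h'⟩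
      · exact Or.inr h'
    · rintro (h | h); exacts [h.1, hρ1.trans_lt h]
  have hdis : Disjoint {z : EN N | ρ < ‖z‖ ∧ ‖z‖ ≤ 1} {z | 1 < ‖z‖} := by
    rw [Set.disjoint_left]; intro z h1 h2
    simp only [mem_ofPred_eq] at h1 h2; linarith [h1.2]
  have i1 := far_integrable' hN hs hg hu hB hρ y
  have i2 := far_integrable' hN hs hg hu hB hρ y'
  have ik := kernel_int_far hN hs hg hρ
  rw [e2] at i1 i2 ik
  have sk : farMass N s g ρ - farMass N s g 1
      = ∫ z in {z : EN N | ρ < ‖z‖ ∧ ‖z‖ ≤ 1}, levyKernel N s g z := by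
    unfold farMass
    rw [e2, setIntegral_union hdis (meas_far 1) ik.left_of_union ik.right_of_union]; ring
  have s1 : levyI2 N s g u ρ y = (∫ z in {z : EN N | ρ < ‖z‖ ∧ ‖z‖ ≤ 1},
      (u (y + z) - u y) * levyKernel N s g z) + levyI2 N s g u 1 y := by
    unfold levyI2
    rw [e2, setIntegral_union hdis (meas_far 1) i1.left_of_union i1.right_of_union]
  have s2 : levyI2 N s g u ρ y' = (∫ z in {z : EN N | ρ < ‖z‖ ∧ ‖z‖ ≤ 1},
      (u (y' + z) - u y') * levyKernel N s g z) + levyI2 N s g u 1 y' := by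
    unfold levyI2
    rw [e2, setIntegral_union hdis (meas_far 1) i2.left_of_union i2.right_of_union]
  have key : (∫ z in {z : EN N | ρ < ‖z‖ ∧ ‖z‖ ≤ 1}, (u (y + z) - u y) * levyKernel N s g z)
      - (∫ z in {z : EN N | ρ < ‖z‖ ∧ ‖z‖ ≤ 1}, (u (y' + z) - u y') * levyKernel N s g z)
      ≤ (farMass N s g ρ - farMass N s g 1) * (c - (u y - u y')) := by
    rw [sk, ← integral_sub i1.left_of_union i2.left_of_union, mul_comm, ← integral_const_mul]
    refine setIntegral_mono (i1.left_of_union.sub i2.left_of_union)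
      (ik.left_of_union.const_mul _) fun z => ?_
    have := mul_le_mul_of_nonneg_right (sub_le_sub_right (h z) (u y - u y')) (kernel_nonneg hs hg z)
    linarith
  rw [s1, s2]; linarith

/-- Explicit Euler scheme, with time step `h` and jumps of size at most `ρ` removed, for the cell
problem lifted to the variables `Y = (y, y_{N+1})`. -/
noncomputable def euler (N : ℕ) (s : ℝ) (g : EN N → ℝ) (f : ℝ → ℝ) (σ : ℝ → EN N → ℝ)
    (p : EN N) (L h ρ : ℝ) : ℕ → EN N × ℝ → ℝ
  | 0 => fun _ => 0
  | j + 1 => fun Y => euler N s g f σ p L h ρ j Y + h *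
      (levyI2 N s g (fun y => euler N s g f σ p L h ρ j (y, Y.2)) ρ Y.1 + L
        - f (euler N s g f σ p L h ρ j Y + ⟪p, Y.1⟫ + Y.2) + σ (j * h) Y.1)

section Euler
variable {N : ℕ} {s : ℝ} {g : EN N → ℝ} {f : ℝ → ℝ} {σ : ℝ → EN N → ℝ} {K Kσ M : ℝ}

/-- Admissibility of the discretization parameters: the scheme is monotone. -/
structure Adm (N : ℕ) (s : ℝ) (g : EN N → ℝ) (K h ρ : ℝ) : Prop where
  h0 : 0 ≤ h
  ρ0 : 0 < ρ
  ρ1 : ρ ≤ 1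
  cfl : h * (farMass N s g ρ + K) ≤ 1

lemma Adm.cfl' (C : Cell N s g f σ K Kσ M) {h ρ : ℝ} (A : Adm N s g K h ρ) :
    h * farMass N s g ρ ≤ 1 := by
  have := A.cfl; have := mul_nonneg A.h0 C.K0; linarith

/-- Difference of two Euler steps, possibly with different data, at two points. -/
lemma step_cmp (C : Cell N s g f σ K Kσ M) {h ρ : ℝ} (A : Adm N s g K h ρ)
    {v v' : EN N × ℝ → ℝ} {B B' : ℝ}
    (hv : Continuous v) (hv' : Continuous v') (hB : ∀ Y, |v Y| ≤ B) (hB' : ∀ Y, |v' Y| ≤ B')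
    {y y' : EN N} {a a' c r r' : ℝ} (hc : ∀ z, v (y + z, a) - v' (y' + z, a') ≤ c) :
    (v (y, a) + h * (levyI2 N s g (fun y => v (y, a)) ρ y + r))
      - (v' (y', a') + h * (levyI2 N s g (fun y => v' (y, a')) ρ y' + r'))
      ≤ (1 - h * farMass N s g ρ) * (v (y, a) - v' (y', a')) + h * farMass N s g ρ * c
        + h * (r - r') := by
  have := jump_cmp C.hN C.hs C.hg (u := fun y => v (y, a)) (u' := fun y => v' (y, a'))
    (y := y) (y' := y') A.ρ0 (by fun_prop) (by fun_prop) (fun y => hB _) (fun y => hB' _) hc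
  have := mul_le_mul_of_nonneg_left this A.h0
  linarith

/-- The sup over the jumps dominates the value at the point itself. -/
lemma step_cmp' (C : Cell N s g f σ K Kσ M) {h ρ : ℝ} (A : Adm N s g K h ρ)
    {v v' : EN N × ℝ → ℝ} {B B' : ℝ}
    (hv : Continuous v) (hv' : Continuous v') (hB : ∀ Y, |v Y| ≤ B) (hB' : ∀ Y, |v' Y| ≤ B')
    {y y' : EN N} {a a' c r r' : ℝ} (hc : ∀ z, v (y + z, a) - v' (y' + z, a') ≤ c) :
    (v (y, a) + h * (levyI2 N s g (fun y => v (y, a)) ρ y + r))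
      - (v' (y', a') + h * (levyI2 N s g (fun y => v' (y, a')) ρ y' + r'))
      ≤ c + h * (r - r') := by
  have h1 := step_cmp C A hv hv' hB hB' (r := r) (r' := r') hc
  have h2 := hc 0
  simp only [add_zero] at h2
  have h3 := mul_le_mul_of_nonneg_left h2 (sub_nonneg.2 (A.cfl' C))
  linarith

variable (p : EN N) (L : ℝ)

lemma euler_succ (h ρ : ℝ) (j : ℕ) (y : EN N) (a : ℝ) :
    euler N s g f σ p L h ρ (j + 1) (y, a) = euler N s g f σ p L h ρ j (y, a) + h *
      (levyI2 N s g (fun y => euler N s g f σ p L h ρ j (y, a)) ρ y + (L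
        - f (euler N s g f σ p L h ρ j (y, a) + ⟪p, y⟫ + a) + σ (j * h) y)) := by
  rw [euler]; ring

/-- Sup bound and Lipschitz bound for the scheme, the latter giving continuity. -/
lemma euler_lip_bdd (C : Cell N s g f σ K Kσ M) {h ρ : ℝ} (A : Adm N s g K h ρ) (j : ℕ) :
    (∀ Y, |euler N s g f σ p L h ρ j Y| ≤ (|L| + M) * (j * h)) ∧
    ∀ Y Y', |euler N s g f σ p L h ρ j Y - euler N s g f σ p L h ρ j Y'|
      ≤ (((1 + h * (K + 1)) ^ j - 1) * (‖p‖ + 1 + Kσ)) * ‖Y - Y'‖ := by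
  have hh := A.h0; have hK := C.K0; have hKσ := C.Kσ0
  induction j with
  | zero => simp [euler]
  | succ j ih =>
    obtain ⟨ih1, ih2⟩ := ih
    set v := euler N s g f σ p L h ρ j with hvdef
    set ℓ := ((1 + h * (K + 1)) ^ j - 1) * (‖p‖ + 1 + Kσ) with hℓ
    have hpow : 1 ≤ (1 + h * (K + 1)) ^ j := one_le_pow₀ (by nlinarith)
    have hℓ0 : 0 ≤ ℓ := mul_nonneg (by linarith) (by positivity)
    have hv : Continuous v := by
      have : LipschitzWith ⟨ℓ, hℓ0⟩ v := LipschitzWith.of_dist_le_mul fun Y Y' => by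
        rw [Real.dist_eq, dist_eq_norm]; exact ih2 Y Y'
      exact this.continuous
    constructor
    · rintro ⟨y, a⟩
      rw [euler_succ]
      have hb := C.bound (v (y, a) + ⟪p, y⟫ + a) (j * h) y
      have hb' := abs_le.1 hb
      have u1 := step_cmp' C A hv (continuous_const (y := (0:ℝ))) ih1 (B' := 0) (by simp)
        (y := y) (y' := y) (a := a) (a' := a)
        (r := L - f (v (y, a) + ⟪p, y⟫ + a) + σ (j * h) y) (r' := 0) (c := (|L| + M) * (j * h))
        (fun z => by simpa using (abs_le.1 (ih1 (y + z, a))).2)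
      have u2 := step_cmp' C A (continuous_const (y := (0:ℝ))) hv  (B := 0) (by simp) ih1
        (y := y) (y' := y) (a := a) (a' := a)
        (r' := L - f (v (y, a) + ⟪p, y⟫ + a) + σ (j * h) y) (r := 0) (c := (|L| + M) * (j * h))
        (fun z => by have := (abs_le.1 (ih1 (y + z, a))).1; linarith)
      have z0 : levyI2 N s g (fun _ => (0:ℝ)) ρ y = 0 := by simp [levyI2]
      rw [z0] at u1 u2
      have e1 : h * (L - f (v (y, a) + ⟪p, y⟫ + a) + σ (j * h) y - 0) ≤ h * (|L| + M) :=
        mul_le_mul_of_nonneg_left (by linarith [le_abs_self L]) hh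
      have e2 : h * (0 - (L - f (v (y, a) + ⟪p, y⟫ + a) + σ (j * h) y)) ≤ h * (|L| + M) :=
        mul_le_mul_of_nonneg_left (by linarith [neg_abs_le L]) hh
      push_cast
      rw [abs_le]; constructor <;> linarith
    · have main : ∀ (y y' : EN N) (a a' : ℝ),
          euler N s g f σ p L h ρ (j + 1) (y, a) - euler N s g f σ p L h ρ (j + 1) (y', a') ≤
          (((1 + h * (K + 1)) ^ (j + 1) - 1) * (‖p‖ + 1 + Kσ)) * ‖(y, a) - (y', a')‖ := by
        intro y y' a a'
        set D := ‖(y, a) - (y', a')‖ with hD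
        have hD0 : 0 ≤ D := norm_nonneg _
        have hy : ‖y - y'‖ ≤ D := norm_fst_le ((y, a) - (y', a'))
        have ha : |a - a'| ≤ D := norm_snd_le ((y, a) - (y', a'))
        have u1 := step_cmp' C A hv hv ih1 ih1 (y := y) (y' := y') (a := a) (a' := a')
          (r := L - f (v (y, a) + ⟪p, y⟫ + a) + σ (j * h) y)
          (r' := L - f (v (y', a') + ⟪p, y'⟫ + a') + σ (j * h) y') (c := ℓ * D)
          (fun z => by
            have := (abs_le.1 (ih2 (y + z, a) (y' + z, a'))).2
            rwa [show (y + z, a) - (y' + z, a') = (y, a) - (y', a') by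
              ext <;> simp] at this)
        rw [euler_succ, euler_succ]
        refine u1.trans ?_
        have f1 := C.f_lip (v (y', a') + ⟪p, y'⟫ + a') (v (y, a) + ⟪p, y⟫ + a)
        have f2 := C.σ_lip (j * h) (j * h) y y'
        have f3 : |v (y', a') + ⟪p, y'⟫ + a' - (v (y, a) + ⟪p, y⟫ + a)| ≤ (ℓ + ‖p‖ + 1) * D := by
          have g1 := ih2 (y', a') (y, a)
          rw [← norm_neg, neg_sub, ← hD] at g1
          have g2 : |⟪p, y'⟫ - ⟪p, y⟫| ≤ ‖p‖ * D := by
            rw [← inner_sub_right]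
            refine (abs_real_inner_le_norm _ _).trans (mul_le_mul_of_nonneg_left ?_ (norm_nonneg _))
            rwa [norm_sub_rev]
          rw [abs_le] at g1 g2 ha ⊢
          constructor <;> linarith
        have f4 : K * |v (y', a') + ⟪p, y'⟫ + a' - (v (y, a) + ⟪p, y⟫ + a)|
            ≤ K * ((ℓ + ‖p‖ + 1) * D) := mul_le_mul_of_nonneg_left f3 hK
        have f5 : Kσ * (|(j * h : ℝ) - j * h| + ‖y - y'‖) ≤ Kσ * D :=
          mul_le_mul_of_nonneg_left (by simpa using hy) hKσ
        have f6 : (L - f (v (y, a) + ⟪p, y⟫ + a) + σ (j * h) y)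
          - (L - f (v (y', a') + ⟪p, y'⟫ + a') + σ (j * h) y') ≤
            ((K + 1) * (ℓ + (‖p‖ + 1 + Kσ))) * D := by
          have h1 := (abs_le.1 f1).2
          have h2 := (abs_le.1 f2).2
          have h3 : 0 ≤ (ℓ + ‖p‖ + 1 + K * Kσ) * D := by positivity
          nlinarith
        have f7 := mul_le_mul_of_nonneg_left f6 hh
        have f8 : ((1 + h * (K + 1)) ^ (j + 1) - 1) * (‖p‖ + 1 + Kσ)
            = ℓ + h * ((K + 1) * (ℓ + (‖p‖ + 1 + Kσ))) := by rw [hℓ]; ring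
        rw [f8]; linarith
      rintro ⟨y, a⟩ ⟨y', a'⟩
      rw [abs_le]
      have m1 := main y y' a a'
      have m2 := main y' y a' a
      rw [norm_sub_rev (y', a')] at m2
      constructor <;> linarith

lemma euler_cont (C : Cell N s g f σ K Kσ M) {h ρ : ℝ} (A : Adm N s g K h ρ) (j : ℕ) :
    Continuous (euler N s g f σ p L h ρ j) := by
  have h2 := (euler_lip_bdd p L C A j).2
  refine (LipschitzWith.of_dist_le_mul
    (K := (((1 + h * (K + 1)) ^ j - 1) * (‖p‖ + 1 + Kσ)).toNNReal) fun Y Y' => ?_).continuous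
  rw [Real.dist_eq, dist_eq_norm]
  exact (h2 Y Y').trans (mul_le_mul_of_nonneg_right (Real.le_coe_toNNReal _) (norm_nonneg _))

/-- The scheme preserves both periodicities. -/
lemma euler_per (C : Cell N s g f σ K Kσ M) (h ρ : ℝ) (j : ℕ) :
    (∀ y a, euler N s g f σ p L h ρ j (y, a + 1) = euler N s g f σ p L h ρ j (y, a)) ∧
    ∀ k y a, euler N s g f σ p L h ρ j (y + latVec k, a - ⟪p, latVec k⟫)
      = euler N s g f σ p L h ρ j (y, a) := by
  induction j with
  | zero => simp [euler]
  | succ j ih =>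
    constructor
    · intro y a
      simp only [euler_succ, ih.1]
      rw [show ∀ b : ℝ, b + (a + 1) = b + a + 1 from fun b => by ring, C.f_per]
    · intro k y a
      have e : ∀ x, euler N s g f σ p L h ρ j (y + latVec k + x, a - ⟪p, latVec k⟫)
          = euler N s g f σ p L h ρ j (y + x, a) := fun x => by
        rw [← ih.2 k (y + x) a]; congr 2; abel
      have e2 : levyI2 N s g (fun y => euler N s g f σ p L h ρ j (y, a - ⟪p, latVec k⟫)) ρ
          (y + latVec k) = levyI2 N s g (fun y => euler N s g f σ p L h ρ j (y, a)) ρ y := by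
        unfold levyI2; simp only [e, ih.2]
      rw [euler_succ, euler_succ, e2, ih.2, C.σ_perx, inner_add_right]
      rw [show ∀ b : ℝ, b + (⟪p, y⟫ + ⟪p, latVec k⟫) + (a - ⟪p, latVec k⟫) = b + ⟪p, y⟫ + a from
        fun b => by ring]

/-- Monotonicity of `v + y_{N+1}` and growth of the slope in `y_{N+1}`. -/
lemma euler_slope (C : Cell N s g f σ K Kσ M) {h ρ : ℝ} (A : Adm N s g K h ρ) (j : ℕ)
    {d : ℝ} (hd : 0 ≤ d) (y : EN N) (a : ℝ) :
    -d ≤ euler N s g f σ p L h ρ j (y, a + d) - euler N s g f σ p L h ρ j (y, a) ∧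
    euler N s g f σ p L h ρ j (y, a + d) - euler N s g f σ p L h ρ j (y, a)
      ≤ ((1 + h * K) ^ j - 1) * d := by
  have hh := A.h0; have hK := C.K0
  induction j generalizing y with
  | zero => simp [euler, hd]
  | succ j ih =>
    have hv := euler_cont p L C A j
    have hb := (euler_lip_bdd p L C A j).1
    set v := euler N s g f σ p L h ρ j with hvdef
    have f1 := C.f_lip (v (y, a) + ⟪p, y⟫ + a) (v (y, a + d) + ⟪p, y⟫ + (a + d))
    have q0 := (ih y).1
    have q1 := (ih y).2
    have eq : |v (y, a) + ⟪p, y⟫ + a - (v (y, a + d) + ⟪p, y⟫ + (a + d))|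
        = v (y, a + d) - v (y, a) + d := by
      rw [abs_of_nonpos (by linarith)]; ring
    rw [eq, abs_le] at f1
    have hcfl := A.cfl
    constructor
    · have u1 := step_cmp C A hv hv hb hb (y := y) (y' := y) (a := a) (a' := a + d)
        (r' := L - f (v (y, a + d) + ⟪p, y⟫ + (a + d)) + σ (j * h) y)
        (r := L - f (v (y, a) + ⟪p, y⟫ + a) + σ (j * h) y) (c := d)
        (fun z => by linarith [(ih (y + z)).1])
      rw [← euler_succ, ← euler_succ] at u1
      have h1 := mul_le_mul_of_nonneg_left f1.1 hh
      have h2 : 0 ≤ (1 - h * (farMass N s g ρ + K)) * (v (y, a + d) - v (y, a) + d) :=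
        mul_nonneg (by linarith) (by linarith)
      nlinarith
    · have u1 := step_cmp C A hv hv hb hb (y := y) (y' := y) (a' := a) (a := a + d)
        (r := L - f (v (y, a + d) + ⟪p, y⟫ + (a + d)) + σ (j * h) y)
        (r' := L - f (v (y, a) + ⟪p, y⟫ + a) + σ (j * h) y) (c := ((1 + h * K) ^ j - 1) * d)
        (fun z => (ih (y + z)).2)
      rw [← euler_succ, ← euler_succ] at u1
      have h1 := mul_le_mul_of_nonneg_left f1.2 hh
      have h2 : (1 - h * farMass N s g ρ + h * K) * (v (y, a + d) - v (y, a)) ≤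
          (1 - h * farMass N s g ρ + h * K) * (((1 + h * K) ^ j - 1) * d) :=
        mul_le_mul_of_nonneg_left q1 (by
          have := A.cfl' C; have := mul_nonneg hh hK; linarith)
      have e : ((1 + h * K) ^ (j + 1) - 1) * d = ((1 + h * K) ^ j - 1) * d * (1 + h * K) + h * K * d := by
        ring
      rw [e]
      nlinarith

end Euler

/-! ### Oscillation and growth of the Euler scheme -/

/-- Every point is within `√N` of the lattice orbit of any other. -/
lemma exists_latVec {N : ℕ} (y y' : EN N) : ∃ k, ‖y - (y' + latVec k)‖ ≤ Real.sqrt N := by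
  refine ⟨fun j => ⌊y j - y' j⌋, ?_⟩
  rw [EuclideanSpace.norm_eq]
  refine Real.sqrt_le_sqrt ?_
  have : ∀ i : Fin N, ‖(y - (y' + latVec fun j => ⌊y j - y' j⌋)) i‖ ^ 2 ≤ 1 := by
    intro i
    have e : (y - (y' + latVec fun j => ⌊y j - y' j⌋)) i = Int.fract (y i - y' i) := by
      simp only [latVec, PiLp.sub_apply, PiLp.add_apply, Int.fract]
      show y i - (y' i + (⌊y i - y' i⌋ : ℝ)) = _
      ring
    rw [e, Real.norm_of_nonneg (Int.fract_nonneg _)]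
    have h1 := Int.fract_nonneg (y i - y' i)
    have h2 := Int.fract_lt_one (y i - y' i)
    nlinarith
  calc _ ≤ ∑ _i : Fin N, (1:ℝ) := Finset.sum_le_sum fun i _ => this i
    _ = N := by simp

section Euler
variable {N : ℕ} {s : ℝ} {g : EN N → ℝ} {f : ℝ → ℝ} {σ : ℝ → EN N → ℝ} {K Kσ M : ℝ}

/-- A function with period one in `b` that becomes nondecreasing when `b` is added to it oscillates by at most one. -/
lemma euler_osc_a (C : Cell N s g f σ K Kσ M) (p : EN N) (L : ℝ) {h ρ : ℝ}
    (A : Adm N s g K h ρ) (j : ℕ) (y : EN N) (a a' : ℝ) :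
    euler N s g f σ p L h ρ j (y, a) - euler N s g f σ p L h ρ j (y, a') ≤ 1 := by
  have hp : Function.Periodic (fun a => euler N s g f σ p L h ρ j (y, a)) 1 :=
    fun a => (euler_per p L C h ρ j).1 y a
  have e : euler N s g f σ p L h ρ j (y, a')
      = euler N s g f σ p L h ρ j (y, a + Int.fract (a' - a)) := by
    have := hp.int_mul (⌊a' - a⌋) (a + Int.fract (a' - a))
    rw [← this]; congr 2
    have := Int.fract_add_floor (a' - a)
    linarith
  have h2 := Int.fract_lt_one (a' - a)
  rw [e]
  have := (euler_slope p L C A j (Int.fract_nonneg (a' - a)) y a).1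
  linarith

/-- A lattice translation amounts to a shift of the last variable by `p·k`, so it costs at most one. -/
lemma euler_osc_lat (C : Cell N s g f σ K Kσ M) (p : EN N) (L : ℝ) {h ρ : ℝ}
    (A : Adm N s g K h ρ) (j : ℕ) (y : EN N) (a : ℝ) (k : Fin N → ℤ) :
    euler N s g f σ p L h ρ j (y + latVec k, a) - euler N s g f σ p L h ρ j (y, a) ≤ 1 := by
  have := (euler_per p L C h ρ j).2 k y (a + ⟪p, latVec k⟫)
  rw [add_sub_cancel_right] at this
  rw [this]
  exact euler_osc_a C p L A j y _ _

/-- The oscillation of the scheme is bounded independently of time, of the discretization, and of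
`(p, L)`: the large jumps couple, and periodicity reduces to points at bounded distance. -/
lemma euler_osc (C : Cell N s g f σ K Kσ M) :
    ∃ B, 0 ≤ B ∧ ∀ (p : EN N) (L h ρ : ℝ), Adm N s g K h ρ → ∀ j Y Y',
      euler N s g f σ p L h ρ j Y - euler N s g f σ p L h ρ j Y' ≤ B := by
  obtain ⟨c₀, hc₀, hfar⟩ := far_couple C.hN C.hs C.hg (R := Real.sqrt N) (Real.sqrt_nonneg _)
  have hM : 0 ≤ M := (abs_nonneg _).trans (C.bound 0 0 0)
  have hΛ1 := farMass_nonneg (ρ := 1) C.hs C.hg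
  -- `B` balances the gain `c₀ B` of the coupling, for an oscillation at most `B + 1`, with the data
  set B := (farMass N s g 1 + 2 * M) / c₀ with hBdef
  have hB0 : 0 ≤ B := by positivity
  have hBc : c₀ * B = farMass N s g 1 + 2 * M := by rw [hBdef]; field_simp
  have key : ∀ (p : EN N) (L h ρ : ℝ), Adm N s g K h ρ → ∀ j (y y' : EN N) a,
      ‖y - y'‖ ≤ Real.sqrt N →
      euler N s g f σ p L h ρ j (y, a) - euler N s g f σ p L h ρ j (y', a) ≤ B := by
    intro p L h ρ A j
    induction j with
    | zero => intro y y' a _; simpa [euler] using hB0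
    | succ j ih =>
      intro y y' a hy
      have hv := euler_cont p L C A j
      have hb := (euler_lip_bdd p L C A j).1
      set v := euler N s g f σ p L h ρ j with hvdef
      have hosc : ∀ x x', v (x, a) - v (x', a) ≤ B + 1 := by
        intro x x'
        obtain ⟨k, hk⟩ := exists_latVec x x'
        have h1 := ih x (x' + latVec k) a hk
        have h2 := euler_osc_lat C p L A j x' a k
        linarith
      have hbdd : BddBelow (range fun x => v (x, a)) :=
        ⟨-((|L| + M) * (j * h)), by rintro _ ⟨x, rfl⟩; exact (abs_le.1 (hb _)).1⟩
      have f1 := hfar (fun x => v (x, a)) (⨅ x, v (x, a)) (B + 1) y y' (by fun_prop)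
        (fun x => ciInf_le hbdd x)
        (fun x => by
          have : v (x, a) - (B + 1) ≤ ⨅ x, v (x, a) := le_ciInf fun x' => by
            linarith [hosc x x']
          linarith) hy
      have f2 := osc_cmp C.hN C.hs C.hg A.ρ0 A.ρ1 (u := fun x => v (x, a)) (c := B) (by fun_prop)
        (fun x => hb _) (fun z => ih (y + z) (y' + z) a (by simpa using hy)) f1
      rw [euler_succ, euler_succ]
      have b1 := abs_le.1 (C.bound (v (y, a) + ⟪p, y⟫ + a) (j * h) y)
      have b2 := abs_le.1 (C.bound (v (y', a) + ⟪p, y'⟫ + a) (j * h) y')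
      have f3 : levyI2 N s g (fun x => v (x, a)) ρ y - levyI2 N s g (fun x => v (x, a)) ρ y'
          + (L - f (v (y, a) + ⟪p, y⟫ + a) + σ (j * h) y)
          - (L - f (v (y', a) + ⟪p, y'⟫ + a) + σ (j * h) y')
          ≤ farMass N s g ρ * (B - (v (y, a) - v (y', a))) := by
        nlinarith
      have f4 := mul_le_mul_of_nonneg_left f3 A.h0
      have f5 := mul_le_mul_of_nonneg_left (ih y y' a hy) (sub_nonneg.2 (A.cfl' C))
      nlinarith
  refine ⟨B + 2, by linarith, fun p L h ρ A j Y Y' => ?_⟩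
  obtain ⟨y, a⟩ := Y
  obtain ⟨y', a'⟩ := Y'
  obtain ⟨k, hk⟩ := exists_latVec y y'
  have h1 := key p L h ρ A j y (y' + latVec k) a hk
  have h2 := euler_osc_lat C p L A j y' a k
  have h3 := euler_osc_a C p L A j y' a a'
  linarith

/-- One-sided growth in time of the scheme. -/
lemma euler_growth (C : Cell N s g f σ K Kσ M) (p : EN N) (L : ℝ) {h ρ : ℝ}
    (A : Adm N s g K h ρ) {i : ℕ} {c c' : ℝ}
    (hc : ∀ Y, euler N s g f σ p L h ρ i Y ≤ c) (hc' : ∀ Y, c' ≤ euler N s g f σ p L h ρ i Y)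
    (m : ℕ) (Y : EN N × ℝ) :
    euler N s g f σ p L h ρ (i + m) Y ≤ c + (L + M) * (m * h) ∧
    c' + (L - M) * (m * h) ≤ euler N s g f σ p L h ρ (i + m) Y := by
  induction m generalizing Y with
  | zero => simpa using ⟨hc Y, hc' Y⟩
  | succ m ih =>
    obtain ⟨y, a⟩ := Y
    have hv := euler_cont p L C A (i + m)
    have hb := (euler_lip_bdd p L C A (i + m)).1
    rw [← add_assoc, euler_succ]
    set v := euler N s g f σ p L h ρ (i + m)
    have hb' := abs_le.1 (C.bound (v (y, a) + ⟪p, y⟫ + a) ((i + m : ℕ) * h) y)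
    have u1 := step_cmp' C A hv (continuous_const (y := (0:ℝ))) hb (B' := 0) (by simp)
      (y := y) (y' := y) (a := a) (a' := a)
      (r := L - f (v (y, a) + ⟪p, y⟫ + a) + σ ((i + m : ℕ) * h) y) (r' := 0)
      (c := c + (L + M) * (m * h)) (fun z => by simpa using (ih (y + z, a)).1)
    have u2 := step_cmp' C A (continuous_const (y := (0:ℝ))) hv  (B := 0) (by simp) hb
      (y := y) (y' := y) (a := a) (a' := a)
      (r' := L - f (v (y, a) + ⟪p, y⟫ + a) + σ ((i + m : ℕ) * h) y) (r := 0)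
      (c := -(c' + (L - M) * (m * h))) (fun z => by have := (ih (y + z, a)).2; linarith)
    have z0 : levyI2 N s g (fun _ => (0:ℝ)) ρ y = 0 := by simp [levyI2]
    rw [z0] at u1 u2
    have e1 : h * (L - f (v (y, a) + ⟪p, y⟫ + a) + σ ((i + m : ℕ) * h) y - 0) ≤ h * (L + M) :=
      mul_le_mul_of_nonneg_left (by linarith) A.h0
    have e2 : h * (0 - (L - f (v (y, a) + ⟪p, y⟫ + a) + σ ((i + m : ℕ) * h) y)) ≤ h * (M - L) :=
      mul_le_mul_of_nonneg_left (by linarith) A.h0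
    push_cast at *
    constructor <;> linarith

end Euler

/-! ### Smooth functions of all variables -/

/-- `C²` functions of `Y = (y, y_{N+1})`, bounded by `B` together with their gradient and its
Lipschitz constant. -/
structure GB {N : ℕ} (B : ℝ) (G : EN N × ℝ → ℝ) : Prop where
  smooth : ContDiff ℝ 2 G
  bdd : ∀ Y, |G Y| ≤ B
  grad : ∀ Y, ‖fderiv ℝ G Y‖ ≤ B
  lip : ∀ Y Y', ‖fderiv ℝ G Y - fderiv ℝ G Y'‖ ≤ B * ‖Y - Y'‖

lemma GB.convex {N : ℕ} {B : ℝ} {G H : EN N × ℝ → ℝ} (hG : GB B G) (hH : GB B H) {θ : ℝ}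
    (h0 : 0 ≤ θ) (h1 : θ ≤ 1) : GB B fun Y => G Y + θ * (H Y - G Y) := by
  have dG : Differentiable ℝ G := hG.smooth.differentiable (by norm_num)
  have dH : Differentiable ℝ H := hH.smooth.differentiable (by norm_num)
  have e : ∀ Y, fderiv ℝ (fun Y => G Y + θ * (H Y - G Y)) Y
      = (1 - θ) • fderiv ℝ G Y + θ • fderiv ℝ H Y := by
    intro Y
    have : HasFDerivAt (fun Y => G Y + θ * (H Y - G Y))
        (fderiv ℝ G Y + θ • (fderiv ℝ H Y - fderiv ℝ G Y)) Y :=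
      (dG Y).hasFDerivAt.add (((dH Y).hasFDerivAt.sub (dG Y).hasFDerivAt).const_mul θ)
    rw [this.fderiv]; module
  have h1' : 0 ≤ 1 - θ := by linarith
  refine ⟨?_, ?_, ?_, ?_⟩
  · exact hG.smooth.add (contDiff_const.mul (hH.smooth.sub hG.smooth))
  · intro Y
    have a := abs_le.1 (hG.bdd Y); have b := abs_le.1 (hH.bdd Y)
    rw [abs_le]; constructor <;> nlinarith
  · intro Y
    rw [e]
    refine (norm_add_le _ _).trans ?_
    rw [norm_smul, norm_smul, Real.norm_of_nonneg h0, Real.norm_of_nonneg h1']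
    nlinarith [hG.grad Y, hH.grad Y]
  · intro Y Y'
    rw [e, e, show (1 - θ) • fderiv ℝ G Y + θ • fderiv ℝ H Y
      - ((1 - θ) • fderiv ℝ G Y' + θ • fderiv ℝ H Y')
      = (1 - θ) • (fderiv ℝ G Y - fderiv ℝ G Y') + θ • (fderiv ℝ H Y - fderiv ℝ H Y') by
        rw [smul_sub, smul_sub]; abel]
    refine (norm_add_le _ _).trans ?_
    rw [norm_smul, norm_smul, Real.norm_of_nonneg h0, Real.norm_of_nonneg h1']
    nlinarith [hG.lip Y Y', hH.lip Y Y']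

/-- Slices `y ↦ G(y, b)` have a globally quadratic Taylor remainder. -/
lemma GB.slice {N : ℕ} {B : ℝ} {G : EN N × ℝ → ℝ} (hG : GB B G) (b : ℝ) :
    ContDiff ℝ 2 (fun y => G (y, b)) ∧
    ∀ x z, |G (x + z, b) - G (x, b) - fderiv ℝ (fun y => G (y, b)) x z| ≤ B * ‖z‖ ^ 2 := by
  have dG : Differentiable ℝ G := hG.smooth.differentiable (by norm_num)
  have hc : ContDiff ℝ 2 (fun y => G (y, b)) := hG.smooth.comp (contDiff_id.prodMk contDiff_const)
  have hd : Differentiable ℝ (fun y => G (y, b)) := hc.differentiable (by norm_num)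
  have hB0 : 0 ≤ B := (abs_nonneg _).trans (hG.bdd 0)
  refine ⟨hc, fun x z => ?_⟩
  have e : ∀ y, HasFDerivAt (fun y => G (y, b))
      ((fderiv ℝ G (y, b)).comp (ContinuousLinearMap.inl ℝ (EN N) ℝ)) y := fun y =>
    (dG (y, b)).hasFDerivAt.comp y (hasFDerivAt_prodMk_left y b)
  have h1 : ∀ w ∈ closedBall x ‖z‖,
      ‖fderiv ℝ (fun y => G (y, b)) w - fderiv ℝ (fun y => G (y, b)) x‖ ≤ B * ‖z‖ := by
    intro w hw
    rw [(e w).fderiv, (e x).fderiv, ← ContinuousLinearMap.sub_comp]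
    refine (ContinuousLinearMap.opNorm_comp_le _ _).trans ?_
    have h2 : ‖ContinuousLinearMap.inl ℝ (EN N) ℝ‖ ≤ 1 := ContinuousLinearMap.norm_inl_le_one ℝ _ _
    have h3 := hG.lip (w, b) (x, b)
    have h4 : ‖(w, b) - (x, b)‖ ≤ ‖z‖ := by
      rw [Prod.mk_sub_mk, sub_self, Prod.norm_mk, norm_zero, max_eq_left (norm_nonneg _)]
      simpa [dist_eq_norm] using hw
    calc _ ≤ ‖fderiv ℝ G (w, b) - fderiv ℝ G (x, b)‖ * 1 :=
          mul_le_mul_of_nonneg_left h2 (norm_nonneg _)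
      _ ≤ B * ‖z‖ := by rw [mul_one]; exact h3.trans (mul_le_mul_of_nonneg_left h4 hB0)
  have h2 := (convex_closedBall x ‖z‖).norm_image_sub_le_of_norm_fderiv_le' (𝕜 := ℝ)
    (f := fun y => G (y, b)) (φ := fderiv ℝ (fun y => G (y, b)) x) (fun w _ => hd w) h1
    (mem_closedBall_self (norm_nonneg z)) (y := x + z) (by simp)
  rw [add_sub_cancel_left, Real.norm_eq_abs] at h2
  rw [pow_two, ← mul_assoc]; exact h2

lemma GB.c2b {N : ℕ} {B : ℝ} {G : EN N × ℝ → ℝ} (hG : GB B G) (b : ℝ) : C2b fun y => G (y, b) :=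
  ⟨(hG.slice b).1, B, fun x => ⟨hG.bdd _, (hG.slice b).2 x⟩⟩

/-- Lévy operator of the slice at height `b`, split at radius one. -/
noncomputable def levyJ (N : ℕ) (s : ℝ) (g : EN N → ℝ) (G : EN N × ℝ → ℝ) (y : EN N) (b : ℝ) : ℝ :=
  levyI1 N s g (fun y => G (y, b)) 1 y + levyI2 N s g (fun y => G (y, b)) 1 y

/-- Discrete-in-time smooth approximate solution on `[0, T]`, with `n` steps. -/
structure DApprox {N : ℕ} (s : ℝ) (g : EN N → ℝ) (f : ℝ → ℝ) (σ : ℝ → EN N → ℝ) (K M : ℝ)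
    (p : EN N) (L : ℝ) (T : ℕ) (Co δ B : ℝ) (n : ℕ) (a : ℕ → EN N × ℝ → ℝ) : Prop where
  n_pos : 0 < n
  zero : ∀ Y, a 0 Y = 0
  gb : ∀ j ≤ n, GB B (a j)
  slope : ∀ j ≤ n, ∀ d, 0 ≤ d → ∀ y b, -d ≤ a j (y, b + d) - a j (y, b) ∧
    a j (y, b + d) - a j (y, b) ≤ (Real.exp (K * T) - 1) * d
  growth : ∀ i m Y Y', a (i + m) Y ≤ a i Y' + Co + (L + M) * (m * ((T:ℝ) / n)) ∧
    a i Y' - Co + (L - M) * (m * ((T:ℝ) / n)) ≤ a (i + m) Y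
  eqn : ∀ j < n, ∀ θ, 0 ≤ θ → θ ≤ 1 → ∀ y b,
    |(a (j + 1) (y, b) - a j (y, b)) / ((T:ℝ) / n)
      - (levyJ N s g (fun Y => a j Y + θ * (a (j + 1) Y - a j Y)) y b + L
        - f (a j (y, b) + θ * (a (j + 1) (y, b) - a j (y, b)) + ⟪p, y⟫ + b)
        + σ ((j + θ) * ((T:ℝ) / n)) y)| ≤ δ

/-! ### Consistency of the mollified scheme -/

section Euler
variable {N : ℕ} {s : ℝ} {g : EN N → ℝ} {f : ℝ → ℝ} {σ : ℝ → EN N → ℝ} {K Kσ M : ℝ}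

lemma Cell.f_cont (C : Cell N s g f σ K Kσ M) : Continuous f := by
  refine (LipschitzWith.of_dist_le_mul (K := K.toNNReal) fun a b => ?_).continuous
  rw [Real.dist_eq, Real.dist_eq]
  exact (C.f_lip a b).trans (mul_le_mul_of_nonneg_right (Real.le_coe_toNNReal _) (abs_nonneg _))

lemma Cell.σ_cont (C : Cell N s g f σ K Kσ M) (t : ℝ) : Continuous (σ t) := by
  refine (LipschitzWith.of_dist_le_mul (K := Kσ.toNNReal) fun a b => ?_).continuous
  rw [Real.dist_eq, dist_eq_norm]
  refine (C.σ_lip t t a b).trans ?_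
  rw [sub_self, abs_zero, zero_add]
  exact mul_le_mul_of_nonneg_right (Real.le_coe_toNNReal _) (norm_nonneg _)

/-- Consistency of the mollified scheme. -/
lemma euler_moll_eqn (C : Cell N s g f σ K Kσ M) (p : EN N) (L : ℝ) {h ρ ε B ℓ : ℝ}
    (A : Adm N s g K h ρ) (hh : 0 < h) {ψ : EN N × ℝ → ℝ} (hψ : IsMoll volume ε ψ)
    {j : ℕ} (hB : ∀ Y, |euler N s g f σ p L h ρ j Y| ≤ B) (hℓ0 : 0 ≤ ℓ)
    (hℓ : ∀ Y Y', |euler N s g f σ p L h ρ j Y - euler N s g f σ p L h ρ j Y'| ≤ ℓ * ‖Y - Y'‖)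
    (y : EN N) (b : ℝ) :
    |(moll volume ψ (euler N s g f σ p L h ρ (j + 1)) (y, b)
        - moll volume ψ (euler N s g f σ p L h ρ j) (y, b)) / h
      - (levyI2 N s g (fun y => moll volume ψ (euler N s g f σ p L h ρ j) (y, b)) ρ y + L
        - f (moll volume ψ (euler N s g f σ p L h ρ j) (y, b) + ⟪p, y⟫ + b) + σ (j * h) y)|
      ≤ ε * (K * (2 * ℓ + ‖p‖ + 1) + Kσ) ∧
    |moll volume ψ (euler N s g f σ p L h ρ (j + 1)) (y, b)
        - moll volume ψ (euler N s g f σ p L h ρ j) (y, b)|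
      ≤ h * ((B + B) * farMass N s g ρ + |L| + M) := by
  have hv := euler_cont p L C A j
  have hv1 := euler_cont p L C A (j + 1)
  set v1 := euler N s g f σ p L h ρ (j + 1) with hv1def
  set v := euler N s g f σ p L h ρ j with hvdef
  have hfc := C.f_cont
  have hσc := C.σ_cont (j * h)
  have hK := C.K0
  have hKσ := C.Kσ0
  let J : EN N × ℝ → ℝ := fun Y => levyI2 N s g (fun y => v (y, Y.2)) ρ Y.1
  let r : EN N × ℝ → ℝ := fun Y => L - f (v Y + ⟪p, Y.1⟫ + Y.2) + σ (j * h) Y.1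
  have hr : Continuous r := by
    have : Continuous fun Y : EN N × ℝ => ⟪p, Y.1⟫ := continuous_const.inner continuous_fst
    fun_prop
  have hstep : ∀ Y, v1 Y = v Y + h * (J Y + r Y) := fun Y => euler_succ p L h ρ j Y.1 Y.2
  have hJ : Continuous J := by
    have : J = fun Y => (v1 Y - v Y) / h - r Y := by
      ext Y; rw [hstep]; field_simp; ring
    rw [this]; fun_prop
  have hJr : ∀ Y, |J Y + r Y| ≤ (B + B) * farMass N s g ρ + |L| + M := by
    intro Y
    have h1 := levyI2_bound C.hN C.hs C.hg A.ρ0 (u := fun y => v (y, Y.2)) (x := Y.1) (B := B)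
      (fun y => hB _)
    have h2 := C.bound (v Y + ⟪p, Y.1⟫ + Y.2) (j * h) Y.1
    have h3 : |J Y| ≤ (B + B) * farMass N s g ρ := h1
    show |J Y + (L - f (v Y + ⟪p, Y.1⟫ + Y.2) + σ (j * h) Y.1)| ≤ _
    rw [abs_le] at *
    constructor <;> linarith [le_abs_self L, neg_abs_le L]
  have hmoll : moll volume ψ v1 (y, b) = moll volume ψ v (y, b)
      + h * (moll volume ψ J (y, b) + moll volume ψ r (y, b)) := by
    rw [← moll_add hψ hJ hr, ← moll_smul, ← moll_add hψ hv (by fun_prop)]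
    congr 1; ext Y; exact hstep Y
  have hcomm : moll volume ψ J (y, b)
      = levyI2 N s g (fun y => moll volume ψ v (y, b)) ρ y :=
    (levyI2_moll C.hN C.hs C.hg hψ hv hB A.ρ0 y b).symm
  have hcl : ∀ t : EN N × ℝ, ‖t‖ ≤ ε → |v ((y, b) - t) - v (y, b)| ≤ ℓ * ε := by
    intro t ht
    refine (hℓ _ _).trans (mul_le_mul_of_nonneg_left ?_ hℓ0)
    rwa [sub_sub_cancel_left, norm_neg]
  have ha := moll_abs_sub_le hψ hv hcl
  constructor
  · rw [hmoll, hcomm]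
    have hrr : |moll volume ψ r (y, b) - (L - f (moll volume ψ v (y, b) + ⟪p, y⟫ + b) + σ (j * h) y)|
        ≤ ε * (K * (2 * ℓ + ‖p‖ + 1) + Kσ) := by
      refine moll_abs_sub_le hψ hr fun t ht => ?_
      have t1 : ‖t.1‖ ≤ ε := (norm_fst_le t).trans ht
      have t2 : |t.2| ≤ ε := (norm_snd_le t).trans ht
      have f1 := C.f_lip (v ((y, b) - t) + ⟪p, y - t.1⟫ + (b - t.2)) (moll volume ψ v (y, b) + ⟪p, y⟫ + b)
      have f2 : |v ((y, b) - t) + ⟪p, y - t.1⟫ + (b - t.2) - (moll volume ψ v (y, b) + ⟪p, y⟫ + b)|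
          ≤ (2 * ℓ + ‖p‖ + 1) * ε := by
        have g1 := hcl t ht
        have g2 : |⟪p, t.1⟫| ≤ ‖p‖ * ε := (abs_real_inner_le_norm _ _).trans
          (mul_le_mul_of_nonneg_left t1 (norm_nonneg _))
        rw [inner_sub_right]
        rw [abs_le] at *
        constructor <;> linarith
      have f3 := C.σ_lip (j * h) (j * h) (y - t.1) y
      have f4 : Kσ * (|(j * h : ℝ) - j * h| + ‖y - t.1 - y‖) ≤ Kσ * ε :=
        mul_le_mul_of_nonneg_left (by rw [sub_self, abs_zero, zero_add, sub_sub_cancel_left, norm_neg]; exact t1) hKσ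
      have f5 := mul_le_mul_of_nonneg_left f2 hK
      show |L - f (v ((y, b) - t) + ⟪p, y - t.1⟫ + (b - t.2)) + σ (j * h) (y - t.1) - _| ≤ _
      rw [abs_le] at f1 f3 ⊢
      constructor <;> linarith
    rw [add_sub_cancel_left, mul_div_cancel_left₀ _ hh.ne']
    convert hrr using 2
    ring
  · rw [hmoll, add_sub_cancel_left, abs_mul, abs_of_pos hh, ← moll_add hψ hJ hr]
    refine mul_le_mul_of_nonneg_left ?_ hh.le
    have := moll_abs_sub_le hψ (u := fun Y => J Y + r Y) (x := (y, b)) (c := 0) (hJ.add hr)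
      (fun t _ => by simpa using hJr ((y, b) - t))
    simpa using this

lemma pow_le_exp_mul {x T : ℝ} {n j : ℕ} (hj : j ≤ n) (hn : 0 < n) (hx : 0 ≤ x) (hT : 0 ≤ T) :
    (1 + T / n * x) ^ j ≤ Real.exp (x * T) := by
  have hn' : (0:ℝ) < n := by exact_mod_cast hn
  have h1 : 1 + T / n * x ≤ Real.exp (T / n * x) := by linarith [Real.add_one_le_exp (T / n * x)]
  calc (1 + T / n * x) ^ j ≤ Real.exp (T / n * x) ^ j := pow_le_pow_left₀ (by positivity) h1 j
    _ = Real.exp (j * (T / n * x)) := by rw [← Real.exp_nat_mul]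
    _ ≤ Real.exp (x * T) := by
      refine Real.exp_le_exp.2 ?_
      have h2 : (j:ℝ) ≤ n := by exact_mod_cast hj
      have : (j:ℝ) * (T / n * x) = j / n * (x * T) := by ring
      rw [this]
      exact mul_le_of_le_one_left (by positivity) ((div_le_one hn').2 h2)

/-- The constant `Co` does not depend on `(p, L, T, δ)`. The parameters are chosen in this order: the mollification
radius `ε` from the Lipschitz bound on the scheme, then `ρ` from the `C²` bound on the mollified functions, then
the number `n` of steps. -/
lemma dapprox_exists (C : Cell N s g f σ K Kσ M) :
    ∃ Co, 0 ≤ Co ∧ ∀ (p : EN N) (L : ℝ) (T : ℕ), 1 ≤ T → ∀ δ > 0, ∃ B n a,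
      DApprox s g f σ K M p L T Co δ B n a := by
  obtain ⟨Co, hCo, hosc⟩ := euler_osc C
  refine ⟨Co, hCo, fun p L T hT δ hδ => ?_⟩
  have hM : 0 ≤ M := (abs_nonneg _).trans (C.bound 0 0 0)
  have hK := C.K0
  have hKσ := C.Kσ0
  have hT' : (0:ℝ) < T := by exact_mod_cast hT
  -- sup and Lipschitz bounds valid for every discretization
  set B0 := (|L| + M) * T with hB0
  have hB00 : 0 ≤ B0 := by positivity
  set ℓ := Real.exp ((K + 1) * T) * (‖p‖ + 1 + Kσ) with hℓ
  have hℓ0 : 0 ≤ ℓ := by positivity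
  set c1 := K * (2 * ℓ + ‖p‖ + 1) + Kσ with hc1
  have hc10 : 0 ≤ c1 := by positivity
  set ε := δ / (4 * (c1 + 1)) with hεdef
  have hε : 0 < ε := by positivity
  have hεc : ε * c1 ≤ δ / 4 := by
    rw [hεdef, div_mul_eq_mul_div, div_le_div_iff₀ (by positivity) (by positivity)]
    nlinarith
  obtain ⟨ψ, hψ⟩ := exists_isMoll (volume : Measure (EN N × ℝ)) hε
  obtain ⟨Cε, hCε, hmC2⟩ := moll_C2 hψ
  set B := max B0 (Cε * B0) with hB
  have hBp : 0 ≤ B := hB00.trans (le_max_left _ _)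
  obtain ⟨ρ, hρ0, hρ1, hρ⟩ := kernel_near_small C.hN C.hs C.hg (ε := δ / (4 * (B + 1)))
    (by positivity)
  have hρB : B * (∫ z in {z : EN N | ‖z‖ ≤ ρ}, ‖z‖^2 * levyKernel N s g z) ≤ δ / 4 := by
    refine (mul_le_mul_of_nonneg_left hρ hBp).trans ?_
    rw [mul_div_assoc', div_le_div_iff₀ (by positivity) (by positivity)]
    nlinarith
  have hΛ := farMass_nonneg (ρ := ρ) C.hs C.hg
  set Λ := farMass N s g ρ with hΛdef
  set F := (B0 + B0) * Λ + |L| + M with hF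
  have hF0 : 0 ≤ F := by positivity
  obtain ⟨n, hn⟩ := exists_nat_gt (max (T * (Λ + K)) (T * (((F + F) * Λ + K * F + Kσ) * 2 / δ)))
  have hn0 : (0:ℝ) < n := lt_of_le_of_lt (by positivity) ((le_max_left _ _).trans_lt hn)
  have hnpos : 0 < n := by exact_mod_cast hn0
  set h := (T:ℝ) / n with hh
  have hhpos : 0 < h := by positivity
  have hcfl : h * (Λ + K) ≤ 1 := by
    rw [hh, div_mul_eq_mul_div, div_le_one hn0]; exact ((le_max_left _ _).trans_lt hn).le
  have herr : h * ((F + F) * Λ + K * F + Kσ) ≤ δ / 2 := by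
    have h2 := ((le_max_right _ _).trans_lt hn).le
    rw [hh, div_mul_eq_mul_div, div_le_div_iff₀ hn0 (by norm_num)]
    rw [← mul_div_assoc, div_le_iff₀ hδ] at h2
    linarith
  have A : Adm N s g K h ρ := ⟨hhpos.le, hρ0, hρ1, hcfl⟩
  have hjh : ∀ j ≤ n, (j:ℝ) * h ≤ T := by
    intro j hj
    have h2 : (j:ℝ) ≤ n := by exact_mod_cast hj
    rw [hh, ← mul_div_assoc, div_le_iff₀ hn0, mul_comm]
    exact mul_le_mul_of_nonneg_left h2 hT'.le
  set v := euler N s g f σ p L h ρ with hv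
  have vc : ∀ j, Continuous (v j) := euler_cont p L C A
  have vb : ∀ j ≤ n, ∀ Y, |v j Y| ≤ B0 := fun j hj Y =>
    ((euler_lip_bdd p L C A j).1 Y).trans (mul_le_mul_of_nonneg_left (hjh j hj) (by positivity))
  have vl : ∀ j ≤ n, ∀ Y Y', |v j Y - v j Y'| ≤ ℓ * ‖Y - Y'‖ := fun j hj Y Y' => by
    refine ((euler_lip_bdd p L C A j).2 Y Y').trans (mul_le_mul_of_nonneg_right ?_ (norm_nonneg _))
    refine mul_le_mul_of_nonneg_right ?_ (by positivity)
    have := pow_le_exp_mul hj hnpos (x := K + 1) (by positivity) hT'.le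
    linarith
  have gb : ∀ j ≤ n, GB B (moll volume ψ (v j)) := by
    intro j hj
    obtain ⟨m1, m2, m3⟩ := hmC2 (v j) B0 (vc j) (vb j hj)
    refine ⟨m1, fun Y => ?_, fun Y => (m2 Y).trans (le_max_right _ _), fun Y Y' =>
      (m3 Y Y').trans (mul_le_mul_of_nonneg_right (le_max_right _ _) (norm_nonneg _))⟩
    have := moll_abs_sub_le hψ (vc j) (x := Y) (c := 0) (κ := B0)
      (fun t _ => by simpa using vb j hj (Y - t))
    rw [sub_zero] at this
    exact this.trans (le_max_left _ _)
  refine ⟨B, n, fun j => moll volume ψ (v j), hnpos, ?_, gb, ?_, ?_, ?_⟩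
  · intro Y
    exact moll_const hψ 0 Y
  · intro j hj d hd y b
    have hs1 : ∀ t : EN N × ℝ, -d ≤ v j ((y, b + d) - t) - v j ((y, b) - t) ∧
        v j ((y, b + d) - t) - v j ((y, b) - t) ≤ (Real.exp (K * T) - 1) * d := by
      intro t
      have h1 := euler_slope p L C A j hd (y - t.1) (b - t.2)
      rw [sub_add_eq_add_sub] at h1
      refine ⟨h1.1, h1.2.trans (mul_le_mul_of_nonneg_right ?_ hd)⟩
      have := pow_le_exp_mul hj hnpos hK hT'.le
      linarith
    have m1 := moll_le hψ (vc j) (vc j) (x := (y, b + d)) (y := (y, b))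
      (c := (Real.exp (K * T) - 1) * d) (fun t _ => by linarith [(hs1 t).2])
    have m2 := moll_le hψ (vc j) (vc j) (x := (y, b)) (y := (y, b + d))
      (c := d) (fun t _ => by linarith [(hs1 t).1])
    constructor <;> linarith
  · intro i m Y Y'
    have hg : ∀ Z Z', v (i + m) Z ≤ v i Z' + Co + (L + M) * (m * h) ∧
        v i Z' - Co + (L - M) * (m * h) ≤ v (i + m) Z := fun Z Z' =>
      euler_growth C p L A (fun Y => by linarith [hosc p L h ρ A i Y Z'])
        (fun Y => by linarith [hosc p L h ρ A i Z' Y]) m Z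
    have m1 := moll_le hψ (vc (i + m)) (vc i) (x := Y) (y := Y') (c := Co + (L + M) * (m * h))
      (fun t _ => by linarith [(hg (Y - t) (Y' - t)).1])
    have m2 := moll_le hψ (vc i) (vc (i + m)) (x := Y') (y := Y) (c := Co - (L - M) * (m * h))
      (fun t _ => by linarith [(hg (Y - t) (Y' - t)).2])
    constructor <;> linarith
  · intro j hj θ hθ0 hθ1 y b
    have cons := fun y => euler_moll_eqn C p L A hhpos hψ (vb j hj.le) hℓ0 (vl j hj.le) y b
    rw [← hv] at cons
    set a0 := moll volume ψ (v j) with ha0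
    set a1 := moll volume ψ (v (j + 1)) with ha1
    have gu : GB B (fun Y => a0 Y + θ * (a1 Y - a0 Y)) := (gb j hj.le).convex (gb (j+1) hj) hθ0 hθ1
    have gJ : levyJ N s g (fun Y => a0 Y + θ * (a1 Y - a0 Y)) y b
        = levyI1 N s g (fun y => a0 (y, b) + θ * (a1 (y, b) - a0 (y, b))) ρ y
        + levyI2 N s g (fun y => a0 (y, b) + θ * (a1 (y, b) - a0 (y, b))) ρ y :=
      levyJ_indep C.hN C.hs C.hg (gu.c2b b) y one_pos hρ0
    have e1 := (levyI1_bound C.hN C.hs C.hg (r := ρ) (x := y)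
      (φ := fun y => a0 (y, b) + θ * (a1 (y, b) - a0 (y, b))) ((gu.slice b).2 y)).trans hρB
    have hdiff : ∀ x, |θ * (a1 (x, b) - a0 (x, b))| ≤ h * F := fun x => by
      rw [abs_mul, abs_of_nonneg hθ0]
      exact (mul_le_of_le_one_left (abs_nonneg _) hθ1).trans (cons x).2
    have c0 := (gb j hj.le).smooth.continuous
    have c1' := (gb (j+1) hj).smooth.continuous
    have e2 : levyI2 N s g (fun y => a0 (y, b) + θ * (a1 (y, b) - a0 (y, b))) ρ y
        = levyI2 N s g (fun y => a0 (y, b)) ρ y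
          + levyI2 N s g (fun y => θ * (a1 (y, b) - a0 (y, b))) ρ y :=
      levyI2_add C.hN C.hs C.hg hρ0 (by fun_prop) (by fun_prop)
        (fun y => (gb j hj.le).bdd (y, b)) hdiff
    have e3 := levyI2_bound C.hN C.hs C.hg (x := y) hρ0 hdiff
    change _ ≤ (h * F + h * F) * Λ at e3
    have e4 := C.f_lip (a0 (y, b) + θ * (a1 (y, b) - a0 (y, b)) + ⟪p, y⟫ + b) (a0 (y, b) + ⟪p, y⟫ + b)
    have e5 : K * |a0 (y, b) + θ * (a1 (y, b) - a0 (y, b)) + ⟪p, y⟫ + b - (a0 (y, b) + ⟪p, y⟫ + b)|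
        ≤ K * (h * F) := by
      refine mul_le_mul_of_nonneg_left ?_ hK
      rw [show a0 (y, b) + θ * (a1 (y, b) - a0 (y, b)) + ⟪p, y⟫ + b - (a0 (y, b) + ⟪p, y⟫ + b)
        = θ * (a1 (y, b) - a0 (y, b)) by ring]
      exact hdiff y
    have e6 := C.σ_lip ((j + θ) * h) (j * h) y y
    have e7 : Kσ * (|(j + θ) * h - j * h| + ‖y - y‖) ≤ Kσ * h := by
      refine mul_le_mul_of_nonneg_left ?_ hKσ
      rw [sub_self, norm_zero, add_zero, ← sub_mul, add_sub_cancel_left, abs_mul, abs_of_nonneg hθ0,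
        abs_of_pos hhpos]
      exact mul_le_of_le_one_left hhpos.le hθ1
    have e8 := (cons y).1.trans hεc
    show |(a1 (y, b) - a0 (y, b)) / h - _| ≤ δ
    rw [gJ, e2]
    rw [abs_le] at e1 e3 e4 e6 e8 ⊢
    constructor <;> linarith

end Euler

/-! ### Comparison on one time step -/

/-- A cut-off function all of whose translates have a uniformly bounded Lévy operator. -/
lemma exists_bump {N : ℕ} (hN : 1 ≤ N) {s : ℝ} (hs : s ∈ Ioo (0:ℝ) 1) {g : EN N → ℝ}
    (hg : H1 N g) : ∃ (χ : EN N → ℝ) (Cχ : ℝ), ContDiff ℝ 2 χ ∧ χ 0 = 1 ∧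
      (∀ y, 0 ≤ χ y ∧ χ y ≤ 1) ∧ (∀ y, 2 ≤ ‖y‖ → χ y = 0) ∧ 0 ≤ Cχ ∧
      ∀ y' x, |levyI1 N s g (fun y => χ (y - y')) 1 x + levyI2 N s g (fun y => χ (y - y')) 1 x|
        ≤ Cχ := by
  let β : ContDiffBump (0 : EN N) := ⟨1, 2, one_pos, one_lt_two⟩
  have hβ : ContDiff ℝ 2 β := β.contDiff
  have hd : Differentiable ℝ β := hβ.differentiable (by norm_num)
  obtain ⟨Λ, hΛ⟩ := (hβ.fderiv_right (m := 1) (by norm_num)).lipschitzWith_of_hasCompactSupport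
    (β.hasCompactSupport.fderiv ℝ) (by norm_num)
  have hq : ∀ x z, |β (x + z) - β x - fderiv ℝ β x z| ≤ Λ * ‖z‖ ^ 2 := by
    intro x z
    have h1 : ∀ w ∈ closedBall x ‖z‖, ‖fderiv ℝ β w - fderiv ℝ β x‖ ≤ Λ * ‖z‖ := by
      intro w hw
      refine (hΛ.norm_sub_le w x).trans (mul_le_mul_of_nonneg_left ?_ Λ.2)
      simpa [dist_eq_norm] using hw
    have h2 := (convex_closedBall x ‖z‖).norm_image_sub_le_of_norm_fderiv_le' (𝕜 := ℝ)
      (f := β) (φ := fderiv ℝ β x) (fun w _ => hd w) h1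
      (mem_closedBall_self (norm_nonneg z)) (y := x + z) (by simp)
    rw [add_sub_cancel_left, Real.norm_eq_abs] at h2
    rw [pow_two, ← mul_assoc]; exact h2
  have hJ := fun y' x : EN N => (levyI1_bound hN hs hg (r := 1) (x := x) (M := Λ)
    (φ := fun y => β (y - y')) (fun z => by
      rw [show fderiv ℝ (fun y => β (y - y')) x = fderiv ℝ β (x - y') by
        rw [fderiv_comp_sub],
        add_sub_right_comm]
      exact hq (x - y') z))
  have hJ2 := fun y' x : EN N => (levyI2_bound hN hs hg (x := x) (B := 1)
    (u := fun y => β (y - y')) one_pos (fun z => by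
      rw [abs_of_nonneg β.nonneg]; exact β.le_one))
  refine ⟨β, _, hβ, β.one_of_mem_closedBall (mem_closedBall_self zero_le_one),
    fun y => ⟨β.nonneg, β.le_one⟩, fun y hy => β.zero_of_le_dist (by simpa using hy), ?_,
    fun y' x => (abs_add_le _ _).trans (add_le_add (hJ y' x) (hJ2 y' x))⟩
  exact (add_nonneg (abs_nonneg _) (abs_nonneg _)).trans (add_le_add (hJ 0 0) (hJ2 0 0))

/-- Comparison on one time step with a smooth approximate supersolution `α + (t - t0) β`. If the claim fails,
the supremum `S` of `(w - α - (t - t0) β) e^{-(K+1)t}` exceeds `2 δ`. A near-maximum point becomes a true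
maximum after penalisation by a small multiple of a translated bump, and there the test contradicts the
weight `e^{(K+1)t}`, whose time derivative beats the Lipschitz constant `K` of the reaction term. -/
lemma cmp_step {N : ℕ} (hN : 1 ≤ N) {s : ℝ} (hs : s ∈ Ioo (0:ℝ) 1) {g : EN N → ℝ}
    (hg : H1 N g) {Q : ℝ → EN N → ℝ → ℝ} {K : ℝ} (hK : 0 ≤ K)
    (hQ : ∀ t y v v', |Q t y v - Q t y v'| ≤ K * |v - v'|)
    {w : ℝ → EN N → ℝ} (hwc : ContinuousOn (fun q : ℝ × EN N => w q.1 q.2) (Ici 0 ×ˢ univ))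
    {t0 t1 Bw : ℝ} (h0 : 0 ≤ t0) (h01 : t0 < t1) (hwb : ∀ t ∈ Icc t0 t1, ∀ y, |w t y| ≤ Bw)
    (hvisc : ∀ (t₀ : ℝ) (x₀ : EN N), 0 < t₀ →
      ∀ (φ : ℝ → EN N → ℝ), ContDiff ℝ 2 (fun q : ℝ × EN N => φ q.1 q.2) →
      ∀ τ r : ℝ, 0 < τ → τ < t₀ → 0 < r →
      (∀ t x, t ∈ Ioo (t₀ - τ) (t₀ + τ) → x ∈ ball x₀ r →
        w t x - φ t x ≤ w t₀ x₀ - φ t₀ x₀) →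
      deriv (fun t => φ t x₀) t₀ ≤ levyI1 N s g (fun x => φ t₀ x) r x₀
        + levyI2 N s g (fun x => w t₀ x) r x₀ + Q t₀ x₀ (w t₀ x₀))
    {α β : EN N → ℝ} (hα : ContDiff ℝ 2 α) (hβ : ContDiff ℝ 2 β) {Bφ δ : ℝ} (hδ : 0 < δ)
    (hφb : ∀ t ∈ Icc t0 t1, ∀ y, |α y + (t - t0) * β y| ≤ Bφ)
    (heq : ∀ t ∈ Icc t0 t1, ∀ y, levyI1 N s g (fun y => α y + (t - t0) * β y) 1 y
      + levyI2 N s g (fun y => α y + (t - t0) * β y) 1 y + Q t y (α y + (t - t0) * β y)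
      ≤ β y + δ)
    (hinit : ∀ y, w t0 y ≤ α y + 2 * δ * Real.exp ((K + 1) * t0)) :
    ∀ t ∈ Icc t0 t1, ∀ y, w t y ≤ α y + (t - t0) * β y + 2 * δ * Real.exp ((K + 1) * t) := by
  by_contra! hcon
  obtain ⟨ts, hts, ys, hys⟩ := hcon
  obtain ⟨χ, Cχ, hχ, hχ0, hχ01, hχ2, hCχ, hχJ⟩ := exists_bump hN hs hg
  set φ0 : ℝ → EN N → ℝ := fun t y => α y + (t - t0) * β y with hφ0
  have hφ0c : Continuous fun q : ℝ × EN N => φ0 q.1 q.2 := by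
    have := hα.continuous; have := hβ.continuous
    simp only [hφ0]; fun_prop
  have hexp : ∀ t, 0 ≤ t → 1 ≤ Real.exp ((K + 1) * t) := fun t ht => Real.one_le_exp (by positivity)
  -- the weighted supremum of the difference
  set A : Set ℝ := {x | ∃ t ∈ Icc t0 t1, ∃ y, x = (w t y - φ0 t y) * Real.exp (-((K + 1) * t))} with hA
  have hAb : BddAbove A := by
    refine ⟨Bw + Bφ, ?_⟩
    rintro x ⟨t, ht, y, rfl⟩
    have h1 := abs_le.1 (hwb t ht y)
    have h2 := abs_le.1 (hφb t ht y)
    have h3 : Real.exp (-((K + 1) * t)) ≤ 1 := Real.exp_le_one_iff.2 (by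
      have : 0 ≤ t := h0.trans ht.1
      have : 0 ≤ (K + 1) * t := by positivity
      linarith)
    have h4 := Real.exp_pos (-((K + 1) * t))
    have h5 : w t y - φ0 t y ≤ Bw + Bφ := by simp only [hφ0]; linarith [h1.2, h2.1]
    have h6 : 0 ≤ Bw + Bφ := by linarith [h1.1, h1.2, h2.1, h2.2]
    nlinarith
  set S := sSup A with hS
  have hexpm : ∀ t, Real.exp (-((K + 1) * t)) * Real.exp ((K + 1) * t) = 1 := fun t => by
    rw [← Real.exp_add, neg_add_cancel, Real.exp_zero]
  have hSδ : 2 * δ < S := by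
    have h1 := le_csSup hAb ⟨ts, hts, ys, rfl⟩
    refine lt_of_lt_of_le ?_ h1
    have h2 : 2 * δ * Real.exp ((K + 1) * ts) < w ts ys - φ0 ts ys := by simp only [hφ0]; linarith
    have h3 := mul_lt_mul_of_pos_right h2 (Real.exp_pos (-((K + 1) * ts)))
    rwa [mul_assoc (2 * δ), mul_comm (Real.exp ((K + 1) * ts)), hexpm, mul_one] at h3
  have hΦ : ∀ t ∈ Icc t0 t1, ∀ y, w t y - φ0 t y ≤ S * Real.exp ((K + 1) * t) := by
    intro t ht y
    have h1 := le_csSup hAb ⟨t, ht, y, rfl⟩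
    have h3 := mul_le_mul_of_nonneg_right h1 (Real.exp_pos ((K + 1) * t)).le
    rwa [mul_assoc, hexpm, mul_one] at h3
  -- the size of the penalisation
  set κ := min (min 1 ((S - 2 * δ))) (δ / (2 * Cχ + K + 1)) with hκ
  have hden : 0 < 2 * Cχ + K + 1 := by positivity
  have hκ0 : 0 < κ := lt_min (lt_min one_pos (by linarith)) (by positivity)
  have hκ1 : κ ≤ S - 2 * δ := (min_le_left _ _).trans (min_le_right _ _)
  have hκ2 : κ * (2 * Cχ + K + 1) ≤ δ := by
    have := min_le_right (min 1 ((S - 2 * δ))) (δ / (2 * Cχ + K + 1))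
    rwa [← hκ, le_div_iff₀ hden] at this
  have near : ∃ t ∈ Icc t0 t1, ∃ y, S * Real.exp ((K + 1) * t) - κ / 4 < w t y - φ0 t y := by
    obtain ⟨x, ⟨t, ht, y, rfl⟩, hx⟩ := exists_lt_of_lt_csSup (s := A) ⟨_, ts, hts, ys, rfl⟩
      (show S - κ / 4 * Real.exp (-((K + 1) * t1)) < sSup A by
        have := Real.exp_pos (-((K + 1) * t1)); rw [← hS]; nlinarith)
    refine ⟨t, ht, y, ?_⟩
    have h3 := mul_lt_mul_of_pos_right hx (Real.exp_pos ((K + 1) * t))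
    rw [mul_assoc (w t y - φ0 t y), hexpm, mul_one, sub_mul] at h3
    have h4 : Real.exp (-((K + 1) * t1)) * Real.exp ((K + 1) * t) ≤ 1 := by
      rw [← Real.exp_add]
      refine Real.exp_le_one_iff.2 ?_
      have : 0 ≤ (K + 1) * (t1 - t) := mul_nonneg (by linarith) (by linarith [ht.2])
      linarith
    nlinarith
  -- by continuity the near-maximum point may be taken before the final time
  have near' : ∃ t ∈ Ico t0 t1, ∃ y, S * Real.exp ((K + 1) * t) - κ / 4 < w t y - φ0 t y := by
    obtain ⟨t, ht, y, hy⟩ := near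
    rcases ht.2.lt_or_eq with h | h
    · exact ⟨t, ⟨ht.1, h⟩, y, hy⟩
    have hc : ContinuousWithinAt (fun t' => w t' y - φ0 t' y - S * Real.exp ((K + 1) * t'))
        (Ici 0) t := by
      have c1 : ContinuousWithinAt (fun t' => w t' y) (Ici 0) t := by
        have := (hwc (t, y) ⟨h0.trans ht.1, mem_univ _⟩).comp
          (f := fun t' : ℝ => (t', y)) (s := Ici 0) (x := t)
          (by fun_prop : Continuous fun t' : ℝ => (t', y)).continuousWithinAt
          (fun t' ht' => ⟨ht', mem_univ _⟩)
        exact this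
      have c2 : Continuous fun t' => φ0 t' y + S * Real.exp ((K + 1) * t') := by
        simp only [hφ0]; fun_prop
      refine (c1.sub c2.continuousWithinAt).congr (fun _ _ => ?_) ?_ <;> simp only [Pi.sub_apply] <;> ring
    have hev : ∀ᶠ t' in nhdsWithin t (Ico t0 t1), -(κ / 4) < w t' y - φ0 t' y - S * Real.exp ((K + 1) * t') :=
      (hc.mono fun x hx => h0.trans hx.1).eventually_const_lt (by linarith)
    have hne : (nhdsWithin t (Ico t0 t1)).NeBot := by
      rw [h, ← mem_closure_iff_nhdsWithin_neBot, closure_Ico h01.ne]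
      exact right_mem_Icc.2 h01.le
    obtain ⟨t', ht', ht''⟩ := (hev.and self_mem_nhdsWithin).exists
    exact ⟨t', ht'', y, by linarith⟩
  obtain ⟨t', ht', y', hy'⟩ := near'
  -- the term `κ/2 e^{m(t - t')}` of the test function keeps the maximum away from the final time `t1`
  set m := 2 / (t1 - t') with hm
  have hm0 : 0 < m := div_pos two_pos (by linarith [ht'.2])
  set ψ : ℝ → EN N → ℝ := fun t y => φ0 t y + S * Real.exp ((K + 1) * t)
    + κ / 2 * Real.exp (m * (t - t')) + 2 * κ * (1 - χ (y - y')) with hψ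
  have hψs : ContDiff ℝ 2 fun q : ℝ × EN N => ψ q.1 q.2 := by
    simp only [hψ, hφ0]
    have := hα.comp (contDiff_snd (E := ℝ) (F := EN N))
    have := hβ.comp (contDiff_snd (E := ℝ) (F := EN N))
    have := hχ.comp ((contDiff_snd (E := ℝ) (F := EN N)).sub (contDiff_const (c := y')))
    fun_prop
  have hψc : Continuous fun q : ℝ × EN N => ψ q.1 q.2 := hψs.continuous
  -- maximum of `w - ψ` over a compact set
  obtain ⟨⟨th, yh⟩, ⟨hth, hyh⟩, hmax⟩ := (isCompact_Icc.prod (isCompact_closedBall y' 2)).exists_isMaxOn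
    (s := Icc t0 t1 ×ˢ closedBall y' 2) (f := fun q : ℝ × EN N => w q.1 q.2 - ψ q.1 q.2)
    ⟨(t', y'), ⟨ht'.1, ht'.2.le⟩, mem_closedBall_self (by norm_num)⟩
    ((hwc.mono fun q hq => ⟨h0.trans hq.1.1, mem_univ _⟩).sub hψc.continuousOn)
  simp only at hth hyh
  have hval : -(3 * κ / 4) < w th yh - ψ th yh := by
    have h1 := hmax (show (t', y') ∈ Icc t0 t1 ×ˢ closedBall y' 2 from
      ⟨⟨ht'.1, ht'.2.le⟩, mem_closedBall_self (by norm_num)⟩)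
    simp only [mem_ofPred_eq] at h1
    have h2 : ψ t' y' = φ0 t' y' + S * Real.exp ((K + 1) * t') + κ / 2 := by
      simp only [hψ, sub_self, hχ0, mul_zero, Real.exp_zero, mul_one, add_zero]
    linarith
  have hglob : ∀ t ∈ Icc t0 t1, ∀ y, w t y - ψ t y ≤ w th yh - ψ th yh := by
    intro t ht y
    by_cases hy : y ∈ closedBall y' 2
    · exact hmax (show (t, y) ∈ Icc t0 t1 ×ˢ closedBall y' 2 from ⟨ht, hy⟩)
    · have h1 : χ (y - y') = 0 := hχ2 _ (by
        rw [mem_closedBall, dist_eq_norm, not_le] at hy; exact hy.le)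
      have h2 := hΦ t ht y
      have h3 := Real.exp_pos (m * (t - t'))
      have h4 : w t y - ψ t y ≤ -(2 * κ) := by simp only [hψ, h1]; nlinarith
      linarith
  have hχh := hχ01 (yh - y')
  have heh := Real.exp_pos (m * (th - t'))
  have hΦh := hΦ th hth yh
  have hψh : ψ th yh = φ0 th yh + S * Real.exp ((K + 1) * th)
    + κ / 2 * Real.exp (m * (th - t')) + 2 * κ * (1 - χ (yh - y')) := rfl
  have hpen : 0 ≤ 2 * κ * (1 - χ (yh - y')) := mul_nonneg (by linarith) (by linarith [hχh.2])
  have hpen2 : 0 ≤ κ / 2 * Real.exp (m * (th - t')) := by positivity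
  have hth0 : t0 < th := by
    refine lt_of_le_of_ne hth.1 fun h => ?_
    have h1 := hinit yh
    have h2 : φ0 th yh = α yh := by simp only [hφ0, ← h]; ring
    rw [h] at h1
    have h3 := hexp th (h0.trans hth.1)
    have h4 : (S - 2 * δ) * 1 ≤ (S - 2 * δ) * Real.exp ((K + 1) * th) :=
      mul_le_mul_of_nonneg_left h3 (by linarith)
    linarith
  have hth1 : th < t1 := by
    refine lt_of_le_of_ne hth.2 fun h => ?_
    have h1 : m * (th - t') = 2 := by
      rw [h, hm, div_mul_cancel₀]; exact (sub_pos.2 ht'.2).ne'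
    have h2 : (3:ℝ) ≤ Real.exp 2 := by have := Real.add_one_le_exp (2:ℝ); linarith
    rw [h1] at hψh
    nlinarith
  have hthpos : 0 < th := h0.trans_lt hth0
  set τ := min (min (th - t0) (t1 - th)) (th / 2) with hτ
  have hτ0 : 0 < τ := lt_min (lt_min (by linarith) (by linarith)) (by linarith)
  have hτ1 : τ ≤ th - t0 := (min_le_left _ _).trans (min_le_left _ _)
  have hτ2 : τ ≤ t1 - th := (min_le_left _ _).trans (min_le_right _ _)
  have hτ3 : τ ≤ th / 2 := min_le_right _ _
  have key := hvisc th yh hthpos ψ hψs τ 1 hτ0 (by linarith) one_pos (fun t x ht _ =>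
    hglob t ⟨by linarith [ht.1], by linarith [ht.2]⟩ x)
  -- time derivative of the test function
  have hder : deriv (fun t => ψ t yh) th = β yh + S * ((K + 1) * Real.exp ((K + 1) * th))
      + κ / 2 * (m * Real.exp (m * (th - t'))) := by
    have d1 : HasDerivAt (fun t => Real.exp ((K + 1) * t)) (Real.exp ((K + 1) * th) * ((K + 1) * 1)) th :=
      ((hasDerivAt_id th).const_mul (K + 1)).exp
    have d2 : HasDerivAt (fun t => Real.exp (m * (t - t'))) (Real.exp (m * (th - t')) * (m * 1)) th :=
      (((hasDerivAt_id th).sub_const t').const_mul m).exp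
    have d3 : HasDerivAt (fun t => α yh + (t - t0) * β yh) (1 * β yh) th :=
      (((hasDerivAt_id th).sub_const t0).mul_const (β yh)).const_add (α yh)
    have d4 : HasDerivAt (fun t => ψ t yh) _ th :=
      ((d3.add (d1.const_mul S)).add (d2.const_mul (κ / 2))).add_const (2 * κ * (1 - χ (yh - y')))
    rw [d4.deriv]; ring
  rw [hder] at key
  have hcw : Continuous fun x => w th x :=
    hwc.comp_continuous (f := fun x : EN N => (th, x)) (by fun_prop) (fun x => ⟨hthpos.le, mem_univ _⟩)
  have hcψ : Continuous fun x => ψ th x := hψc.comp (by fun_prop : Continuous fun x : EN N => (th, x))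
  have hφs : ContDiff ℝ 2 fun y => φ0 th y := by simp only [hφ0]; fun_prop
  have hχs : ContDiff ℝ 2 fun y => χ (y - y') := hχ.comp (contDiff_id.sub contDiff_const)
  have hφbth := hφb th hth
  -- splitting of the Lévy operator of the test function
  set E := S * Real.exp ((K + 1) * th) + κ / 2 * Real.exp (m * (th - t')) + 2 * κ with hE
  have hψe : (fun y => ψ th y) = fun y => (φ0 th y + (-(2 * κ)) * χ (y - y')) + E := by
    funext y; simp only [hψ, hE]; ring
  have hχb : ∀ y, |(-(2 * κ)) * χ (y - y')| ≤ 2 * κ := fun y => by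
    rw [abs_mul, abs_neg, abs_of_pos (by linarith : 0 < 2 * κ), abs_of_nonneg (hχ01 _).1]
    exact mul_le_of_le_one_right (by linarith) (hχ01 _).2
  have hψb : ∀ y, |ψ th y| ≤ Bφ + 2 * κ + |E| := fun y => by
    rw [congrFun hψe y]
    exact (abs_add_le _ _).trans (add_le_add_left ((abs_add_le _ _).trans
      (add_le_add (hφbth y) (hχb y))) _)
  have hI2 : levyI2 N s g (fun x => w th x) 1 yh ≤ levyI2 N s g (fun x => ψ th x) 1 yh :=
    levyI2_mono hN hs hg one_pos hcw hcψ (hwb th hth) hψb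
      (fun z => by have := hglob th hth (yh + z); linarith)
  have hsp1 : levyI1 N s g (fun x => ψ th x) 1 yh = levyI1 N s g (fun x => φ0 th x) 1 yh
      + levyI1 N s g (fun y => (-(2 * κ)) * χ (y - y')) 1 yh := by
    rw [hψe, levyI1_const_add, levyI1_add hN hs hg hφs (contDiff_const.mul hχs)]
  have hsp2 : levyI2 N s g (fun x => ψ th x) 1 yh = levyI2 N s g (fun x => φ0 th x) 1 yh
      + levyI2 N s g (fun y => (-(2 * κ)) * χ (y - y')) 1 yh := by
    rw [hψe, levyI2_const_add]
    exact levyI2_add hN hs hg one_pos hφs.continuous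
      (continuous_const.mul hχs.continuous) hφbth hχb
  have hc1 : levyI1 N s g (fun y => (-(2 * κ)) * χ (y - y')) 1 yh
      = (-(2 * κ)) * levyI1 N s g (fun y => χ (y - y')) 1 yh := by
    unfold levyI1
    rw [← integral_const_mul]
    congr 1; ext z
    rw [fderiv_const_mul (hχs.differentiable (by norm_num) yh)]
    simp only [FunLike.coe_smul, Pi.smul_apply, smul_eq_mul]; ring
  have hc2 : levyI2 N s g (fun y => (-(2 * κ)) * χ (y - y')) 1 yh
      = (-(2 * κ)) * levyI2 N s g (fun y => χ (y - y')) 1 yh := by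
    unfold levyI2
    rw [← integral_const_mul]
    congr 1; ext z; ring
  have hJ := abs_le.1 (hχJ y' yh)
  have heq' := heq th hth yh
  have hQ' := abs_le.1 (hQ th yh (w th yh) (φ0 th yh))
  have hdist : |w th yh - φ0 th yh| ≤ S * Real.exp ((K + 1) * th) + κ := by
    have : 0 < S * Real.exp ((K + 1) * th) := mul_pos (by linarith) (Real.exp_pos _)
    rw [abs_le]; constructor <;> linarith
  have hQ'' := mul_le_mul_of_nonneg_left hdist hK
  have hmp : 0 ≤ κ / 2 * (m * Real.exp (m * (th - t'))) := by positivity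
  have hSE : S ≤ S * Real.exp ((K + 1) * th) :=
    le_mul_of_one_le_right (by linarith) (hexp th hthpos.le)
  change levyI1 N s g (fun y => φ0 th y) 1 yh + levyI2 N s g (fun y => φ0 th y) 1 yh
    + Q th yh (φ0 th yh) ≤ β yh + δ at heq'
  rw [hsp1, hc1] at key
  rw [hsp2, hc2] at hI2
  have hJ' : -(2 * κ) * (levyI1 N s g (fun y => χ (y - y')) 1 yh
    + levyI2 N s g (fun y => χ (y - y')) 1 yh) ≤ 2 * κ * Cχ := by
    have := mul_le_mul_of_nonneg_left hJ.1 (by linarith : 0 ≤ 2 * κ)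
    linarith
  linarith [hQ'.2]

/-! ### Interpolation in time -/

/-- Piecewise affine interpolation in time of a sequence of functions, with step `h`. -/
noncomputable def interp {X : Type*} (a : ℕ → X → ℝ) (h : ℝ) (n : ℕ) (t : ℝ) (Y : X) : ℝ :=
  a 0 Y + ∑ i ∈ Finset.range n, (a (i + 1) Y - a i Y) / h * max 0 (min (t - i * h) h)

lemma interp_eq {X : Type*} (a : ℕ → X → ℝ) {h : ℝ} (hh : 0 < h) {n j : ℕ} (hj : j < n) {θ : ℝ}
    (h0 : 0 ≤ θ) (h1 : θ ≤ 1) (Y : X) :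
    interp a h n ((j + θ) * h) Y = a j Y + θ * (a (j + 1) Y - a j Y) := by
  unfold interp
  have hsub : Finset.range (j + 1) ⊆ Finset.range n := by
    intro i hi; simp only [Finset.mem_range] at hi ⊢; omega
  rw [← Finset.sum_subset hsub, Finset.sum_range_succ]
  · have e1 : ∑ i ∈ Finset.range j, (a (i + 1) Y - a i Y) / h * max 0 (min ((j + θ) * h - i * h) h)
        = ∑ i ∈ Finset.range j, (a (i + 1) Y - a i Y) := by
      refine Finset.sum_congr rfl fun i hi => ?_
      have hi' : (i:ℝ) + 1 ≤ j := by exact_mod_cast Finset.mem_range.1 hi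
      rw [min_eq_right, max_eq_right hh.le, div_mul_cancel₀ _ hh.ne']
      nlinarith
    have e2 : max 0 (min ((j + θ) * h - j * h) h) = θ * h := by
      rw [← sub_mul, add_sub_cancel_left, min_eq_left (by nlinarith), max_eq_right (by positivity)]
    rw [e1, e2, Finset.sum_range_sub (fun i => a i Y)]
    field_simp; ring
  · intro i _ hi2
    have hi' : (j:ℝ) + 1 ≤ i := by
      have : j + 1 ≤ i := by simpa using hi2
      exact_mod_cast this
    rw [max_eq_left, mul_zero]
    refine (min_le_left _ _).trans ?_
    nlinarith

lemma locate {h t : ℝ} (hh : 0 < h) {n : ℕ} (hn : 0 < n) (h0 : 0 ≤ t) (h1 : t ≤ n * h) :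
    ∃ j < n, ∃ θ, 0 ≤ θ ∧ θ ≤ 1 ∧ t = (j + θ) * h := by
  rcases h1.lt_or_eq with h2 | h2
  · have h3 : 0 ≤ t / h := by positivity
    have h4 := Nat.floor_le h3
    have h5 := Nat.lt_floor_add_one (t / h)
    refine ⟨⌊t / h⌋₊, ?_, t / h - ⌊t / h⌋₊, by linarith, by linarith, by field_simp; ring⟩
    rw [Nat.floor_lt h3, div_lt_iff₀ hh]; exact h2
  · refine ⟨n - 1, by omega, 1, zero_le_one, le_rfl, ?_⟩
    rw [h2, Nat.cast_sub hn]; simp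

/-- Smooth approximate solution on `[0, T]`, affine in time on each of `n` steps of length `h`,
where it has slope `D j`. -/
structure CApprox {N : ℕ} (s : ℝ) (g : EN N → ℝ) (f : ℝ → ℝ) (σ : ℝ → EN N → ℝ) (K M : ℝ)
    (p : EN N) (L : ℝ) (T : ℕ) (Co δ B : ℝ) (n : ℕ) (h : ℝ) (U : ℝ → EN N × ℝ → ℝ)
    (D : ℕ → EN N × ℝ → ℝ) : Prop where
  n_pos : 0 < n
  h_pos : 0 < h
  nh : n * h = T
  cont : Continuous fun q : ℝ × (EN N × ℝ) => U q.1 q.2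
  zero : ∀ Y, U 0 Y = 0
  gb : ∀ t : ℝ, 0 ≤ t → t ≤ T → GB B (U t)
  slope : ∀ t : ℝ, 0 ≤ t → t ≤ T → ∀ d, 0 ≤ d → ∀ y b, -d ≤ U t (y, b + d) - U t (y, b) ∧
    U t (y, b + d) - U t (y, b) ≤ (Real.exp (K * T) - 1) * d
  growth : ∀ t' t : ℝ, 0 ≤ t' → t' ≤ t → t ≤ T → ∀ Y Y',
    U t Y ≤ U t' Y' + Co + (L + M) * (t - t') ∧ U t' Y' - Co + (L - M) * (t - t') ≤ U t Y
  D_smooth : ∀ j < n, ContDiff ℝ 2 (D j)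
  aff : ∀ j < n, ∀ t : ℝ, j * h ≤ t → t ≤ (j + 1) * h → ∀ Y, U t Y = U (j * h) Y + (t - j * h) * D j Y
  eqn : ∀ j < n, ∀ t : ℝ, j * h ≤ t → t ≤ (j + 1) * h → ∀ y b,
    |D j (y, b) - (levyJ N s g (U t) y b + L - f (U t (y, b) + ⟪p, y⟫ + b) + σ t y)| ≤ δ

/-- Piecewise affine interpolation in time of the functions given by `dapprox_exists`. -/
lemma capprox_exists {N : ℕ} {s : ℝ} {g : EN N → ℝ} {f : ℝ → ℝ} {σ : ℝ → EN N → ℝ} {K Kσ M : ℝ}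
    (C : Cell N s g f σ K Kσ M) :
    ∃ Co, 0 ≤ Co ∧ ∀ (p : EN N) (L : ℝ) (T : ℕ), 1 ≤ T → ∀ δ > 0, ∃ B n h U D,
      CApprox s g f σ K M p L T Co δ B n h U D := by
  obtain ⟨Co, hCo, H⟩ := dapprox_exists C
  refine ⟨Co, hCo, fun p L T hT δ hδ => ?_⟩
  obtain ⟨B, n, a, A⟩ := H p L T hT δ hδ
  have hn : (0:ℝ) < n := by exact_mod_cast A.n_pos
  have hT' : (0:ℝ) < T := by exact_mod_cast hT
  set h := (T:ℝ) / n with hh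
  have hpos : 0 < h := by positivity
  have nh : n * h = T := by rw [hh]; field_simp
  have loc : ∀ t : ℝ, 0 ≤ t → t ≤ T → ∃ j < n, ∃ θ, 0 ≤ θ ∧ θ ≤ 1 ∧ t = (j + θ) * h := fun t h0 h1 =>
    locate hpos A.n_pos h0 (by rw [nh]; exact h1)
  have I := @interp_eq _ a h hpos n
  have locj : ∀ (j : ℕ) t, j * h ≤ t → t ≤ (j + 1) * h → ∃ θ, 0 ≤ θ ∧ θ ≤ 1 ∧ t = (j + θ) * h := by
    intro j t h0 h1
    refine ⟨(t - j * h) / h, div_nonneg (by linarith) hpos.le, ?_, by field_simp; ring⟩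
    rw [div_le_one hpos]; linarith
  refine ⟨B, n, h, interp a h n, fun j Y => (a (j + 1) Y - a j Y) / h, A.n_pos, hpos, nh, ?_, ?_, ?_,
    ?_, ?_, ?_, ?_, ?_⟩
  · unfold interp
    refine ((A.gb 0 A.n_pos.le).smooth.continuous.comp continuous_snd).add
      (continuous_finsetSum _ fun i hi => ?_)
    have c1 := (A.gb i (Finset.mem_range.1 hi).le).smooth.continuous
    have c2 := (A.gb (i + 1) (Finset.mem_range.1 hi)).smooth.continuous
    fun_prop
  · intro Y
    have := I A.n_pos le_rfl zero_le_one Y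
    simpa [A.zero] using this
  · intro t h0 h1
    obtain ⟨j, hj, θ, q0, q1, rfl⟩ := loc t h0 h1
    rw [show interp a h n ((j + θ) * h) = _ from funext (I hj q0 q1)]
    exact (A.gb j hj.le).convex (A.gb (j + 1) hj) q0 q1
  · intro t h0 h1 d hd y b
    obtain ⟨j, hj, θ, q0, q1, rfl⟩ := loc t h0 h1
    rw [I hj q0 q1, I hj q0 q1]
    have s1 := A.slope j hj.le d hd y b
    have s2 := A.slope (j + 1) hj d hd y b
    have q2 : 0 ≤ 1 - θ := by linarith
    constructor
    · nlinarith [mul_le_mul_of_nonneg_left s1.1 q2, mul_le_mul_of_nonneg_left s2.1 q0]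
    · nlinarith [mul_le_mul_of_nonneg_left s1.2 q2, mul_le_mul_of_nonneg_left s2.2 q0]
  · have pair : ∀ i j : ℕ, i ≤ j → ∀ Y Y', a j Y ≤ a i Y' + Co + (L + M) * ((j - i) * h) ∧
        a i Y' - Co + (L - M) * ((j - i) * h) ≤ a j Y := by
      intro i j hij Y Y'
      have := A.growth i (j - i) Y Y'
      rwa [Nat.add_sub_cancel' hij, Nat.cast_sub hij] at this
    have main : ∀ i j : ℕ, i ≤ j → ∀ θ' θ : ℝ, 0 ≤ θ' → θ' ≤ 1 → 0 ≤ θ → θ ≤ 1 →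
        (i + θ') * h ≤ (j + θ) * h → ∀ Y Y',
        a j Y + θ * (a (j + 1) Y - a j Y) ≤ a i Y' + θ' * (a (i + 1) Y' - a i Y') + Co
          + (L + M) * ((j + θ) * h - (i + θ') * h) ∧
        a i Y' + θ' * (a (i + 1) Y' - a i Y') - Co
          + (L - M) * ((j + θ) * h - (i + θ') * h) ≤ a j Y + θ * (a (j + 1) Y - a j Y) := by
      intro i j hij θ' θ p0 p1 q0 q1 hle Y Y'
      have hle' : (i:ℝ) + θ' ≤ j + θ := le_of_mul_le_mul_right hle hpos
      have p2 : 0 ≤ 1 - θ' := by linarith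
      have q2 : 0 ≤ 1 - θ := by linarith
      rcases hij.lt_or_eq with hlt | rfl
      · have r1 := pair i j hij Y Y'
        have r2 := pair i (j + 1) (by omega) Y Y'
        have r3 := pair (i + 1) j hlt Y Y'
        have r4 := pair (i + 1) (j + 1) (by omega) Y Y'
        push_cast at r2 r3 r4
        have w1 := mul_nonneg p2 q2
        have w2 := mul_nonneg p2 q0
        have w3 := mul_nonneg p0 q2
        have w4 := mul_nonneg p0 q0
        constructor
        · linarith [mul_le_mul_of_nonneg_left r1.1 w1, mul_le_mul_of_nonneg_left r2.1 w2,
            mul_le_mul_of_nonneg_left r3.1 w3, mul_le_mul_of_nonneg_left r4.1 w4]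
        · linarith [mul_le_mul_of_nonneg_left r1.2 w1, mul_le_mul_of_nonneg_left r2.2 w2,
            mul_le_mul_of_nonneg_left r3.2 w3, mul_le_mul_of_nonneg_left r4.2 w4]
      · -- inside a single step only ordered pairs of grid times are compared
        have r1 := pair i i le_rfl Y Y'
        have r2 := pair i (i + 1) (by omega) Y Y'
        have r4 := pair (i + 1) (i + 1) le_rfl Y Y'
        push_cast at r2 r4
        have w2 : 0 ≤ θ - θ' := by linarith
        constructor
        · linarith [mul_le_mul_of_nonneg_left r1.1 q2, mul_le_mul_of_nonneg_left r2.1 w2,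
            mul_le_mul_of_nonneg_left r4.1 p0]
        · linarith [mul_le_mul_of_nonneg_left r1.2 q2, mul_le_mul_of_nonneg_left r2.2 w2,
            mul_le_mul_of_nonneg_left r4.2 p0]
    intro t' t h0 h1 h2 Y Y'
    obtain ⟨j, hj, θ, q0, q1, rfl⟩ := loc t (h0.trans h1) h2
    obtain ⟨i, hi, θ', p0, p1, rfl⟩ := loc t' h0 (h1.trans h2)
    rcases le_or_gt i j with hij | hij
    · rw [I hj q0 q1, I hi p0 p1]
      exact main i j hij θ' θ p0 p1 q0 q1 h1 Y Y'
    · have e : ((i:ℝ) + θ') * h = (j + θ) * h := by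
        refine le_antisymm h1 ?_
        have : (j:ℝ) + 1 ≤ i := by exact_mod_cast hij
        exact mul_le_mul_of_nonneg_right (by linarith) hpos.le
      rw [e, I hj q0 q1, I hj q0 q1]
      exact main j j le_rfl θ θ q0 q1 q0 q1 le_rfl Y Y'
  · intro j hj
    exact ((A.gb (j + 1) hj).smooth.sub (A.gb j hj.le).smooth).div_const h
  · intro j hj t h0 h1 Y
    obtain ⟨θ, q0, q1, rfl⟩ := locj j t h0 h1
    have := I hj le_rfl zero_le_one Y
    rw [add_zero] at this
    rw [I hj q0 q1, this]
    field_simp; ring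
  · intro j hj t h0 h1 y b
    obtain ⟨θ, q0, q1, rfl⟩ := locj j t h0 h1
    have := A.eqn j hj θ q0 q1 y b
    rw [show interp a h n ((j + θ) * h) = _ from funext (I hj q0 q1)]
    exact this

/-! ### Comparison of viscosity solutions with smooth approximations -/

/-- Continuous viscosity subsolutions of `∂_t w = I_s[w] + Q(t, y, w)`, bounded on bounded time
intervals. -/
structure SubP (N : ℕ) (s : ℝ) (g : EN N → ℝ) (Q : ℝ → EN N → ℝ → ℝ) (w : ℝ → EN N → ℝ) : Prop where
  cont : ContinuousOn (fun q : ℝ × EN N => w q.1 q.2) (Ici 0 ×ˢ univ)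
  bdd : ∀ T : ℝ, ∃ B, ∀ t ∈ Icc 0 T, ∀ y, |w t y| ≤ B
  visc : ∀ (t₀ : ℝ) (x₀ : EN N), 0 < t₀ →
      ∀ (φ : ℝ → EN N → ℝ), ContDiff ℝ 2 (fun q : ℝ × EN N => φ q.1 q.2) →
      ∀ τ r : ℝ, 0 < τ → τ < t₀ → 0 < r →
      (∀ t x, t ∈ Ioo (t₀ - τ) (t₀ + τ) → x ∈ ball x₀ r →
        w t x - φ t x ≤ w t₀ x₀ - φ t₀ x₀) →
      deriv (fun t => φ t x₀) t₀ ≤ levyI1 N s g (fun x => φ t₀ x) r x₀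
        + levyI2 N s g (fun x => w t₀ x) r x₀ + Q t₀ x₀ (w t₀ x₀)

lemma SubP.shift {N : ℕ} {s : ℝ} {g : EN N → ℝ} {Q : ℝ → EN N → ℝ → ℝ} {w : ℝ → EN N → ℝ}
    (h : SubP N s g Q w) {m : ℝ} (hm : 0 ≤ m) :
    SubP N s g (fun t y v => Q (t + m) y v) (fun t y => w (t + m) y) := by
  refine ⟨?_, ?_, ?_⟩
  · exact h.cont.comp (f := fun q : ℝ × EN N => (q.1 + m, q.2)) (by fun_prop)
      (fun q hq => ⟨add_nonneg hq.1 hm, mem_univ _⟩)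
  · intro T
    obtain ⟨B, hB⟩ := h.bdd (T + m)
    exact ⟨B, fun t ht y => hB _ ⟨add_nonneg ht.1 hm, by linarith [ht.2]⟩ y⟩
  · intro t₀ x₀ h0 φ hφ τ r hτ hτt hr hmax
    have hφ' : ContDiff ℝ 2 fun q : ℝ × EN N => φ (q.1 - m) q.2 :=
      hφ.comp ((contDiff_fst.sub contDiff_const).prodMk contDiff_snd)
    have := h.visc (t₀ + m) x₀ (by linarith) (fun t x => φ (t - m) x) hφ' τ r hτ (by linarith) hr
      (fun t x ht hx => by
        have := hmax (t - m) x ⟨by linarith [ht.1], by linarith [ht.2]⟩ hx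
        simpa using this)
    rw [deriv_comp_sub_const (f := fun t => φ t x₀)] at this
    simpa using this

/-- Comparison on `[0, n h]` with a function that is affine in time on each step. -/
lemma cmp_all {N : ℕ} (hN : 1 ≤ N) {s : ℝ} (hs : s ∈ Ioo (0:ℝ) 1) {g : EN N → ℝ}
    (hg : H1 N g) {Q : ℝ → EN N → ℝ → ℝ} {K : ℝ} (hK : 0 ≤ K)
    (hQ : ∀ t y v v', |Q t y v - Q t y v'| ≤ K * |v - v'|)
    {w : ℝ → EN N → ℝ} (hw : SubP N s g Q w) {h : ℝ} (hh : 0 < h) {n : ℕ}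
    {V : ℝ → EN N → ℝ} {E : ℕ → EN N → ℝ} {Bφ δ : ℝ} (hδ : 0 < δ)
    (hV : ∀ j < n, ContDiff ℝ 2 (V (j * h))) (hE : ∀ j < n, ContDiff ℝ 2 (E j))
    (hVE : ∀ j < n, ∀ t : ℝ, j * h ≤ t → t ≤ (j + 1) * h → ∀ y, V t y = V (j * h) y + (t - j * h) * E j y)
    (hVb : ∀ t : ℝ, 0 ≤ t → t ≤ n * h → ∀ y, |V t y| ≤ Bφ)
    (heq : ∀ j < n, ∀ t : ℝ, j * h ≤ t → t ≤ (j + 1) * h → ∀ y,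
      levyI1 N s g (V t) 1 y + levyI2 N s g (V t) 1 y + Q t y (V t y) ≤ E j y + δ)
    (hinit : ∀ y, w 0 y ≤ V 0 y) :
    ∀ t : ℝ, 0 ≤ t → t ≤ n * h → ∀ y, w t y ≤ V t y + 2 * δ * Real.exp ((K + 1) * t) := by
  have main : ∀ j ≤ n, ∀ t : ℝ, 0 ≤ t → t ≤ j * h → ∀ y,
      w t y ≤ V t y + 2 * δ * Real.exp ((K + 1) * t) := by
    intro j
    induction j with
    | zero =>
      intro _ t h0 h1 y
      have : t = 0 := le_antisymm (by simpa using h1) h0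
      subst this
      have := hinit y
      have := Real.exp_pos ((K + 1) * 0)
      nlinarith
    | succ j ih =>
      intro hj t h0 h1 y
      rcases le_total t (j * h) with ht | ht
      · exact ih (by omega) t h0 ht y
      push_cast at h1
      have hj' : j < n := hj
      have hjn : (j:ℝ) + 1 ≤ n := by exact_mod_cast hj
      have hjh : 0 ≤ j * h := by positivity
      obtain ⟨Bw, hBw⟩ := hw.bdd ((j + 1) * h)
      have e : ∀ t ∈ Icc (j * h) ((j + 1) * h), V t = fun y => V (j * h) y + (t - j * h) * E j y :=
        fun t ht => funext (hVE j hj' t ht.1 ht.2)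
      have hup : ((j:ℝ) + 1) * h ≤ n * h := mul_le_mul_of_nonneg_right hjn hh.le
      have := cmp_step hN hs hg hK hQ hw.cont hjh (t1 := (j + 1) * h) (by nlinarith)
        (fun t ht => hBw t ⟨hjh.trans ht.1, ht.2⟩) hw.visc (hV j hj') (hE j hj') hδ (Bφ := Bφ)
        (fun t ht y => by
          rw [← hVE j hj' t ht.1 ht.2]; exact hVb t (hjh.trans ht.1) (ht.2.trans hup) y)
        (fun t ht y => by
          have := heq j hj' t ht.1 ht.2 y
          rw [e t ht] at this; exact this)
        (fun y => ih (by omega) _ hjh le_rfl y) t ⟨ht, h1⟩ y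
      rw [← hVE j hj' t ht h1] at this
      exact this
  exact main n le_rfl

section Compare
variable {N : ℕ} {s : ℝ} {g : EN N → ℝ} {f : ℝ → ℝ} {σ : ℝ → EN N → ℝ} {K Kσ M : ℝ}

/-- Reaction term of the cell problem. -/
noncomputable def cellQ (f : ℝ → ℝ) (σ : ℝ → EN N → ℝ) (p : EN N) (L : ℝ) (t : ℝ) (y : EN N)
    (v : ℝ) : ℝ := L - f (v + ⟪p, y⟫) + σ t y

lemma cellQ_lip (C : Cell N s g f σ K Kσ M) (p : EN N) (L t : ℝ) (y : EN N) (v v' : ℝ) :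
    |cellQ f σ p L t y v - cellQ f σ p L t y v'| ≤ K * |v - v'| := by
  have := C.f_lip (v' + ⟪p, y⟫) (v + ⟪p, y⟫)
  unfold cellQ
  rw [show L - f (v + ⟪p, y⟫) + σ t y - (L - f (v' + ⟪p, y⟫) + σ t y)
    = f (v' + ⟪p, y⟫) - f (v + ⟪p, y⟫) by ring]
  rwa [add_sub_add_right_eq_sub, abs_sub_comm v' v] at this

/-- Two-sided notion: both `w` and `-w` are subsolutions of the respective equations. -/
structure SolP (N : ℕ) (s : ℝ) (g : EN N → ℝ) (Q : ℝ → EN N → ℝ → ℝ) (w : ℝ → EN N → ℝ) : Prop where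
  sub : SubP N s g Q w
  sup : SubP N s g (fun t y v => -Q t y (-v)) (fun t y => -w t y)

/-- If `w ≤ a` initially, the comparison function is `U(t, (y, a)) + a`: the last variable carries the initial
value of the solution. -/
lemma cmp_upper (C : Cell N s g f σ K Kσ M) {p : EN N} {L L' : ℝ} (hL : L' ≤ L)
    {T : ℕ} {Co δ B : ℝ} {n : ℕ} {h : ℝ}
    {U : ℝ → EN N × ℝ → ℝ} {D : ℕ → EN N × ℝ → ℝ} (A : CApprox s g f σ K M p L T Co δ B n h U D)
    (hδ : 0 < δ) {w : ℝ → EN N → ℝ} (hw : SubP N s g (cellQ f σ p L') w) {a : ℝ}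
    (h0 : ∀ y, w 0 y ≤ a) {t : ℝ} (ht0 : 0 ≤ t) (htT : t ≤ T) (y : EN N) :
    w t y ≤ U t (y, a) + a + 2 * δ * Real.exp ((K + 1) * t) := by
  have hjT : ∀ j < n, ∀ t : ℝ, j * h ≤ t → t ≤ (j + 1) * h → 0 ≤ t ∧ t ≤ T := by
    intro j hj t h0 h1
    have hjn : (j:ℝ) + 1 ≤ n := by exact_mod_cast hj
    have := mul_le_mul_of_nonneg_right hjn A.h_pos.le
    have hh := A.h_pos
    exact ⟨le_trans (by positivity) h0, by linarith [A.nh]⟩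
  refine cmp_all C.hN C.hs C.hg C.K0 (cellQ_lip C p L') hw A.h_pos (n := n) (Bφ := B + |a|)
    (V := fun t y => U t (y, a) + a) (E := fun j y => D j (y, a)) hδ ?_ ?_ ?_ ?_ ?_ ?_ t ht0
    (by rw [A.nh]; exact htT) y
  · intro j hj
    have := hjT j hj (j * h) le_rfl (by have := A.h_pos; nlinarith)
    exact ((A.gb _ this.1 this.2).slice a).1.add contDiff_const
  · intro j hj
    exact (A.D_smooth j hj).comp (contDiff_id.prodMk contDiff_const)
  · intro j hj t h0 h1 y
    simp only [A.aff j hj t h0 h1]; ring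
  · intro t h0 h1 y
    exact (abs_add_le _ _).trans (add_le_add ((A.gb t h0 (by rw [← A.nh]; exact h1)).bdd _) le_rfl)
  · intro j hj t h0 h1 y
    have := (abs_le.1 (A.eqn j hj t h0 h1 y a)).1
    rw [levyI1_const_add, levyI2_const_add]
    unfold levyJ at this
    unfold cellQ
    rw [show U t (y, a) + a + ⟪p, y⟫ = U t (y, a) + ⟪p, y⟫ + a by ring]
    linarith
  · intro y; simp only [A.zero]; linarith [h0 y]

/-- Counterpart of `cmp_upper` for supersolutions. -/
lemma cmp_lower (C : Cell N s g f σ K Kσ M) {p : EN N} {L L' : ℝ} (hL : L ≤ L')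
    {T : ℕ} {Co δ B : ℝ} {n : ℕ} {h : ℝ}
    {U : ℝ → EN N × ℝ → ℝ} {D : ℕ → EN N × ℝ → ℝ} (A : CApprox s g f σ K M p L T Co δ B n h U D)
    (hδ : 0 < δ) {w : ℝ → EN N → ℝ}
    (hw : SubP N s g (fun t y v => -cellQ f σ p L' t y (-v)) (fun t y => -w t y)) {a : ℝ}
    (h0 : ∀ y, a ≤ w 0 y) {t : ℝ} (ht0 : 0 ≤ t) (htT : t ≤ T) (y : EN N) :
    U t (y, a) + a - 2 * δ * Real.exp ((K + 1) * t) ≤ w t y := by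
  have hjT : ∀ j < n, ∀ t : ℝ, j * h ≤ t → t ≤ (j + 1) * h → 0 ≤ t ∧ t ≤ T := by
    intro j hj t h0 h1
    have hjn : (j:ℝ) + 1 ≤ n := by exact_mod_cast hj
    have := mul_le_mul_of_nonneg_right hjn A.h_pos.le
    have hh := A.h_pos
    exact ⟨le_trans (by positivity) h0, by linarith [A.nh]⟩
  have := cmp_all C.hN C.hs C.hg C.K0 (fun t y v v' => by
      have := cellQ_lip C p L' t y (-v') (-v)
      rw [neg_sub_neg] at this ⊢; exact this) hw A.h_pos (n := n) (Bφ := B + |a|)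
    (V := fun t y => -(U t (y, a) + a)) (E := fun j y => -D j (y, a)) hδ ?_ ?_ ?_ ?_ ?_ ?_ t ht0
    (by rw [A.nh]; exact htT) y
  · linarith
  · intro j hj
    have := hjT j hj (j * h) le_rfl (by have := A.h_pos; nlinarith)
    exact (((A.gb _ this.1 this.2).slice a).1.add contDiff_const).neg
  · intro j hj
    exact ((A.D_smooth j hj).comp (contDiff_id.prodMk contDiff_const)).neg
  · intro j hj t h0 h1 y
    simp only [A.aff j hj t h0 h1]; ring
  · intro t h0 h1 y
    rw [abs_neg]
    exact (abs_add_le _ _).trans (add_le_add ((A.gb t h0 (by rw [← A.nh]; exact h1)).bdd _) le_rfl)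
  · intro j hj t h0 h1 y
    have := (abs_le.1 (A.eqn j hj t h0 h1 y a)).2
    rw [levyI1_neg, levyI2_neg, levyI1_const_add, levyI2_const_add]
    unfold levyJ at this
    unfold cellQ
    rw [neg_neg, show U t (y, a) + a + ⟪p, y⟫ = U t (y, a) + ⟪p, y⟫ + a by ring]
    linarith
  · intro y; simp only [A.zero]; linarith [h0 y]

end Compare

/-! ### Growth rate and effective Hamiltonian -/

/-- A linear upper bound for `w(mT, 0)` in `m` bounds the asymptotic slope. -/
lemma slope_le {N : ℕ} {w : ℝ → EN N → ℝ} {lam : ℝ} (h : SlopeLim N w lam) {T : ℕ} (hT : 1 ≤ T)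
    {c : ℝ} (hc : ∀ m : ℕ, w ((m * T : ℕ) : ℝ) 0 ≤ m * c) : lam * T ≤ c := by
  have hT' : (0:ℝ) < T := by exact_mod_cast hT
  refine le_of_forall_pos_le_add fun ε hε => ?_
  obtain ⟨T0, hT0⟩ := h (ε / T) (by positivity) 1 one_pos
  obtain ⟨m, hm⟩ := exists_nat_ge (max T0 1)
  have hm1 : (1:ℝ) ≤ m := (le_max_right _ _).trans hm
  have hmT : T0 ≤ ((m * T : ℕ) : ℝ) := by
    have h1 : (1:ℝ) ≤ T := by exact_mod_cast hT
    push_cast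
    nlinarith [(le_max_left T0 1).trans hm]
  have h1 := (abs_le.1 (hT0 _ hmT 0 (by simp))).1
  have h2 := hc m
  push_cast at h1 h2
  have h3 : w (m * T) 0 / (m * T) ≤ c / T := by
    rw [div_le_div_iff₀ (by positivity) hT']
    nlinarith
  have h4 : lam ≤ c / T + ε / T := by linarith
  rw [← add_div, le_div_iff₀ hT'] at h4
  exact h4

lemma slope_ge {N : ℕ} {w : ℝ → EN N → ℝ} {lam : ℝ} (h : SlopeLim N w lam) {T : ℕ} (hT : 1 ≤ T)
    {c : ℝ} (hc : ∀ m : ℕ, m * c ≤ w ((m * T : ℕ) : ℝ) 0) : c ≤ lam * T := by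
  have h' : SlopeLim N (fun t y => -w t y) (-lam) := by
    intro ε hε R hR
    obtain ⟨T, hT⟩ := h ε hε R hR
    refine ⟨T, fun τ hτ y hy => ?_⟩
    have := hT τ hτ y hy
    rwa [neg_div, neg_sub_neg, abs_sub_comm]
  have := slope_le h' hT (c := -c) (fun m => by have := hc m; linarith)
  linarith

section Ergodic
variable {N : ℕ} {s : ℝ} {g : EN N → ℝ} {f : ℝ → ℝ} {σ : ℝ → EN N → ℝ} {K Kσ M : ℝ}

lemma Cell.σ_nat (C : Cell N s g f σ K Kσ M) (m : ℕ) (t : ℝ) (y : EN N) : σ (t + m) y = σ t y := by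
  induction m with
  | zero => simp
  | succ m ih => push_cast; rw [← add_assoc, C.σ_pert, ih]

lemma SolP.shift (C : Cell N s g f σ K Kσ M) {p : EN N} {L : ℝ} {w : ℝ → EN N → ℝ}
    (hw : SolP N s g (cellQ f σ p L) w) (m : ℕ) :
    SolP N s g (cellQ f σ p L) (fun t y => w (t + m) y) := by
  have e : ∀ t y v, cellQ f σ p L (t + m) y v = cellQ f σ p L t y v := fun t y v => by
    unfold cellQ; rw [C.σ_nat]
  have h1 := hw.sub.shift (Nat.cast_nonneg m)
  have h2 := hw.sup.shift (Nat.cast_nonneg m)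
  simp only [e] at h1 h2
  exact ⟨h1, h2⟩

/-- The error of comparison is at most one for this choice of accuracy. -/
lemma err_le_one (hK : 0 ≤ K) {T : ℕ} {δ t : ℝ} (h0 : 0 < δ)
    (hδ : δ ≤ Real.exp (-((K + 1) * T)) / 2) (ht : t ≤ T) :
    2 * δ * Real.exp ((K + 1) * t) ≤ 1 := by
  have h1 : Real.exp ((K + 1) * t) ≤ Real.exp ((K + 1) * T) :=
    Real.exp_le_exp.2 (mul_le_mul_of_nonneg_left ht (by linarith))
  have h2 : Real.exp (-((K + 1) * T)) * Real.exp ((K + 1) * T) = 1 := by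
    rw [← Real.exp_add, neg_add_cancel, Real.exp_zero]
  have h3 := Real.exp_pos ((K + 1) * t)
  calc 2 * δ * Real.exp ((K + 1) * t) ≤ 2 * δ * Real.exp ((K + 1) * T) := by gcongr
    _ ≤ Real.exp (-((K + 1) * T)) * Real.exp ((K + 1) * T) :=
        mul_le_mul_of_nonneg_right (by linarith) (Real.exp_pos _).le
    _ = 1 := h2

/-- Data of the ergodic problem: a solution starting from zero and its asymptotic slope. -/
structure Erg (N : ℕ) (s : ℝ) (g : EN N → ℝ) (f : ℝ → ℝ) (σ : ℝ → EN N → ℝ) (p : EN N) (L : ℝ)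
    (w : ℝ → EN N → ℝ) (lam : ℝ) : Prop where
  sol : SolP N s g (cellQ f σ p L) w
  zero : ∀ y, w 0 y = 0
  slope : SlopeLim N w lam

variable {p : EN N} {L : ℝ} {w : ℝ → EN N → ℝ} {lam : ℝ} {T : ℕ} {Co δ B : ℝ} {n : ℕ} {h : ℝ}
    {U : ℝ → EN N × ℝ → ℝ} {D : ℕ → EN N × ℝ → ℝ}

/-- On `[0, T]` the solution stays at distance at most one from the slice `b = 0` of a sufficiently accurate approximation. -/
lemma erg_near (C : Cell N s g f σ K Kσ M) (E : Erg N s g f σ p L w lam)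
    (A : CApprox s g f σ K M p L T Co δ B n h U D) (h0 : 0 < δ)
    (hδ : δ ≤ Real.exp (-((K + 1) * T)) / 2) {t : ℝ} (ht0 : 0 ≤ t) (ht : t ≤ T) (y : EN N) :
    |w t y - U t (y, 0)| ≤ 1 := by
  have h1 := cmp_upper C le_rfl A h0 E.sol.sub (a := 0) (fun y => (E.zero y).le) ht0 ht y
  have h2 := cmp_lower C le_rfl A h0 E.sol.sup (a := 0) (fun y => (E.zero y).ge) ht0 ht y
  have h3 := err_le_one C.K0 h0 hδ ht
  rw [abs_le]; constructor <;> linarith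

/-- Sub- and superadditivity of the extrema of `w` over multiples of `T`, compared with the slope. -/
lemma erg_T (C : Cell N s g f σ K Kσ M) (E : Erg N s g f σ p L w lam) (hT : 1 ≤ T)
    (A : CApprox s g f σ K M p L T Co δ B n h U D) (h0 : 0 < δ)
    (hδ : δ ≤ Real.exp (-((K + 1) * T)) / 2) : |U T 0 - lam * T| ≤ Co + 1 := by
  have hT0 : (0:ℝ) ≤ T := Nat.cast_nonneg T
  have herr := err_le_one C.K0 h0 hδ (t := T) le_rfl
  have osc := fun Y => A.growth T T hT0 le_rfl le_rfl Y 0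
  have e : ∀ m : ℕ, (((m + 1) * T : ℕ) : ℝ) = T + ((m * T : ℕ) : ℝ) := fun m => by push_cast; ring
  have up : ∀ m : ℕ, ∀ y, w ((m * T : ℕ) : ℝ) y ≤ m * (U T 0 + Co + 1) := by
    intro m
    induction m with
    | zero => intro y; simp [E.zero]
    | succ m ih =>
      intro y
      have h1 := cmp_upper C le_rfl A h0 (E.sol.shift C (m * T)).sub (a := m * (U T 0 + Co + 1))
        (fun y => by rw [zero_add]; exact ih y) hT0 le_rfl y
      have h2 := (osc (y, m * (U T 0 + Co + 1))).1
      simp only [← e] at h1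
      rw [sub_self, mul_zero] at h2
      rw [Nat.cast_succ]
      linarith
  have lo : ∀ m : ℕ, ∀ y, m * (U T 0 - Co - 1) ≤ w ((m * T : ℕ) : ℝ) y := by
    intro m
    induction m with
    | zero => intro y; simp [E.zero]
    | succ m ih =>
      intro y
      have h1 := cmp_lower C le_rfl A h0 (E.sol.shift C (m * T)).sup (a := m * (U T 0 - Co - 1))
        (fun y => by rw [zero_add]; exact ih y) hT0 le_rfl y
      have h2 := (osc (y, m * (U T 0 - Co - 1))).2
      simp only [← e] at h1
      rw [sub_self, mul_zero] at h2
      rw [Nat.cast_succ]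
      linarith
  have h1 := slope_le E.slope hT (fun m => up m 0)
  have h2 := slope_ge E.slope hT (fun m => lo m 0)
  rw [abs_le]; constructor <;> linarith

lemma le_of_linear {a b c : ℝ} (h : ∀ T : ℕ, 1 ≤ T → a * T ≤ b * T + c) : a ≤ b := by
  by_contra! hab
  obtain ⟨m, hm⟩ := exists_nat_gt (max (c / (a - b)) 1)
  have h1 : (1:ℝ) < m := (le_max_right _ _).trans_lt hm
  have h2 := (le_max_left (c / (a - b)) 1).trans_lt hm
  rw [div_lt_iff₀ (by linarith)] at h2
  have := h m (by exact_mod_cast h1.le)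
  linarith

/-- The effective Hamiltonian is comparable to `L`, and smooth approximants grow at that rate,
with constants independent of `p`, `L` and the horizon. -/
lemma erg_est (C : Cell N s g f σ K Kσ M)
    (hCo : ∀ (p : EN N) (L : ℝ) (T : ℕ), 1 ≤ T → ∀ δ > 0, ∃ B n h U D,
      CApprox s g f σ K M p L T Co δ B n h U D) (E : Erg N s g f σ p L w lam) :
    |lam - L| ≤ M ∧ ∀ (T : ℕ) (δ : ℝ) B n h U D, CApprox s g f σ K M p L T Co δ B n h U D → 0 < δ →
      δ ≤ Real.exp (-((K + 1) * T)) / 2 → ∀ t : ℝ, 0 ≤ t → t ≤ T → ∀ Y,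
      |U t Y - lam * t| ≤ 2 * Co + 3 + 2 * M := by
  have hM : 0 ≤ M := (abs_nonneg _).trans (C.bound 0 0 0)
  have hpos : ∀ T : ℕ, 0 < Real.exp (-((K + 1) * T)) / 2 := fun T => by positivity
  have hlam : |lam - L| ≤ M := by
    have h1 : lam ≤ L + M := le_of_linear (c := 2 * Co + 1) fun T hT => by
      obtain ⟨B, n, h, U, D, A⟩ := hCo p L T hT _ (hpos T)
      have h1 := abs_le.1 (erg_T C E hT A (hpos T) le_rfl)
      have h2 := (A.growth 0 T le_rfl (Nat.cast_nonneg T) le_rfl 0 0).1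
      rw [A.zero, sub_zero] at h2
      linarith [h1.1]
    have h2 : L - M ≤ lam := le_of_linear (c := 2 * Co + 1) fun T hT => by
      obtain ⟨B, n, h, U, D, A⟩ := hCo p L T hT _ (hpos T)
      have h1 := abs_le.1 (erg_T C E hT A (hpos T) le_rfl)
      have h2 := (A.growth 0 T le_rfl (Nat.cast_nonneg T) le_rfl 0 0).2
      rw [A.zero, sub_zero] at h2
      linarith [h1.2]
    rw [abs_le]; constructor <;> linarith
  refine ⟨hlam, fun T δ B n h U D A h0 hδ t ht0 ht Y => ?_⟩
  have hk : ∀ k : ℕ, (k:ℝ) ≤ T → |U k 0 - lam * k| ≤ Co + 3 := by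
    intro k hkT
    rcases Nat.eq_zero_or_pos k with rfl | hk
    · have := (A.growth 0 0 le_rfl le_rfl (Nat.cast_nonneg T) 0 0).1
      rw [Nat.cast_zero, A.zero, mul_zero, sub_zero, abs_zero]
      simp only [sub_self, mul_zero] at this
      linarith
    obtain ⟨B', n', h', U', D', A'⟩ := hCo p L k hk _ (hpos k)
    have h1 := abs_le.1 (erg_T C E hk A' (hpos k) le_rfl)
    have h2 := abs_le.1 (erg_near C E A' (hpos k) le_rfl (Nat.cast_nonneg k) le_rfl 0)
    have h3 := abs_le.1 (erg_near C E A h0 hδ (Nat.cast_nonneg k) hkT 0)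
    change _ ≤ U' k 0 - _ ∧ U' k 0 - _ ≤ _ at h1
    change _ ≤ _ - U' k 0 ∧ _ - U' k 0 ≤ _ at h2
    change _ ≤ _ - U k 0 ∧ _ - U k 0 ≤ _ at h3
    rw [abs_le]; constructor <;> linarith
  have hf := Nat.floor_le ht0
  have hf' := Nat.lt_floor_add_one t
  have h1 := abs_le.1 (hk ⌊t⌋₊ (hf.trans ht))
  have h2 := A.growth ⌊t⌋₊ t (Nat.cast_nonneg _) hf ht Y 0
  have h3 := abs_le.1 hlam
  have d0 : 0 ≤ t - ⌊t⌋₊ := by linarith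
  have d1 : t - ⌊t⌋₊ ≤ 1 := by linarith
  have m1 : (lam - L + M) * (t - ⌊t⌋₊) ≤ (2 * M) * 1 :=
    mul_le_mul (by linarith) d1 d0 (by linarith)
  have m2 : (L - lam + M) * (t - ⌊t⌋₊) ≤ (2 * M) * 1 :=
    mul_le_mul (by linarith) d1 d0 (by linarith)
  rw [abs_le]; constructor <;> linarith [h1.1, h1.2, h2.1, h2.2]

/-- Monotonicity of the effective Hamiltonian in `L`. -/
lemma erg_mono (C : Cell N s g f σ K Kσ M)
    (hCo : ∀ (p : EN N) (L : ℝ) (T : ℕ), 1 ≤ T → ∀ δ > 0, ∃ B n h U D,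
      CApprox s g f σ K M p L T Co δ B n h U D) {L' : ℝ} (hL : L ≤ L') {w' : ℝ → EN N → ℝ}
    {lam' : ℝ} (E : Erg N s g f σ p L w lam) (E' : Erg N s g f σ p L' w' lam') : lam ≤ lam' := by
  have hpos : ∀ T : ℕ, 0 < Real.exp (-((K + 1) * T)) / 2 := fun T => by positivity
  refine le_of_linear (c := 2 * (Co + 1) + 2) fun T hT => ?_
  obtain ⟨B, n, h, U, D, A⟩ := hCo p L T hT _ (hpos T)
  obtain ⟨B', n', h', U', D', A'⟩ := hCo p L' T hT _ (hpos T)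
  have hT0 : (0:ℝ) ≤ T := Nat.cast_nonneg T
  have h1 := abs_le.1 (erg_T C E hT A (hpos T) le_rfl)
  have h2 := abs_le.1 (erg_T C E' hT A' (hpos T) le_rfl)
  have h3 := abs_le.1 (erg_near C E A (hpos T) le_rfl hT0 le_rfl 0)
  have h4 := cmp_upper C hL A' (hpos T) E.sol.sub (a := 0) (fun y => (E.zero y).le) hT0 le_rfl 0
  have h5 := err_le_one C.K0 (hpos T) le_rfl (t := T) le_rfl
  change _ ≤ _ - U T 0 ∧ _ - U T 0 ≤ _ at h3
  change _ ≤ U' T 0 + _ + _ at h4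
  linarith [h1.1, h1.2, h2.1, h2.2, h3.1, h3.2]

end Ergodic

/-! ### From the hypotheses to the quantitative data -/

/-- A Lipschitz function is Lipschitz with constant `sup |f'|`, by absolute continuity. -/
lemma lip_iSup_deriv {f : ℝ → ℝ} {K : NNReal} (hf : LipschitzWith K f) (a b : ℝ) :
    |f a - f b| ≤ (⨆ v : ℝ, |deriv f v|) * |a - b| := by
  have hb : BddAbove (range fun v => |deriv f v|) :=
    ⟨K, by rintro _ ⟨v, rfl⟩; exact norm_deriv_le_of_lipschitz hf⟩
  rw [← (hf.lipschitzOnWith (s := uIcc b a)).absolutelyContinuousOnInterval.integral_deriv_eq_sub]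
  exact intervalIntegral.norm_integral_le_of_norm_le_const (f := deriv f)
    (C := ⨆ v : ℝ, |deriv f v|) fun v _ => le_ciSup hb v

/-- The hypotheses on `g`, `W`, `σ` give the quantitative data, with Lipschitz constant exactly `‖W''‖_∞` for `W'`. -/
lemma cell_of {N : ℕ} (hN : 1 ≤ N) {s : ℝ} (hs : s ∈ Ioo (0:ℝ) 1) {g : EN N → ℝ} (hg : H1 N g)
    {W : ℝ → ℝ} (hW : H2 W) {σ : ℝ → EN N → ℝ} (hσ : H3 N σ) :
    ∃ Kσ M, Cell N s g (deriv W) σ (supW'' W) Kσ M := by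
  obtain ⟨-, ⟨K, hK⟩, hWp⟩ := hW
  obtain ⟨⟨Kσ, hKσ⟩, hσt, hσx⟩ := hσ
  have hper : ∀ a, deriv W (a + 1) = deriv W a := fun a => by
    rw [← deriv_comp_add_const]; congr 1; exact funext hWp
  have hlip : ∀ t t' y y', |σ t y - σ t' y'| ≤ Kσ * (|t - t'| + ‖y - y'‖) := by
    intro t t' y y'
    have h1 := hKσ.dist_le_mul (t, y) (t', y')
    rw [Prod.dist_eq, Real.dist_eq, Real.dist_eq, dist_eq_norm] at h1
    refine h1.trans (mul_le_mul_of_nonneg_left ?_ Kσ.2)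
    exact max_le_add_of_nonneg (abs_nonneg _) (norm_nonneg _)
  obtain ⟨Mf, hMf⟩ := (Function.Periodic.isBounded_of_continuous (f := deriv W) hper one_ne_zero
    hK.continuous).exists_norm_le
  have hσb : ∀ t y, |σ t y| ≤ |σ 0 0| + Kσ * (1 + Real.sqrt N) := by
    intro t y
    have hfr : σ t y = σ (Int.fract t) y := by
      have hp : Function.Periodic (fun t => σ t y) 1 := fun t => hσt t y
      have := hp.sub_int_mul_eq (x := t) ⌊t⌋
      rw [mul_one] at this
      exact this.symm
    obtain ⟨k, hk⟩ := exists_latVec y 0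
    have h1 := hlip (Int.fract t) 0 y (0 + latVec k)
    have h2 : σ 0 (0 + latVec k) = σ 0 0 := hσx k 0 0
    rw [h2, sub_zero, abs_of_nonneg (Int.fract_nonneg t)] at h1
    have h3 : (Kσ:ℝ) * (Int.fract t + ‖y - (0 + latVec k)‖) ≤ Kσ * (1 + Real.sqrt N) :=
      mul_le_mul_of_nonneg_left (add_le_add (Int.fract_lt_one t).le hk) Kσ.2
    rw [hfr]
    have := abs_sub_abs_le_abs_sub (σ (Int.fract t) y) (σ 0 0)
    linarith
  refine ⟨Kσ, |σ 0 0| + Kσ * (1 + Real.sqrt N) + Mf, hN, hs, hg,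
    Real.iSup_nonneg fun _ => abs_nonneg _, Kσ.2, lip_iSup_deriv hK, hper, hlip, hσt, hσx, ?_⟩
  intro v t y
  have := hMf _ (mem_range_self v)
  rw [Real.norm_eq_abs] at this
  exact (abs_sub _ _).trans (add_le_add (hσb t y) this)

/-- The supersolution property of `w` becomes the subsolution property of `-w` for the reflected equation. -/
lemma erg_of {N : ℕ} {s : ℝ} {g : EN N → ℝ} {W : ℝ → ℝ} {σ : ℝ → EN N → ℝ} {p : EN N} {L lam : ℝ}
    {w : ℝ → EN N → ℝ} (hw : IsSol N s g (cellF N W σ p L) (fun _ => 0) w)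
    (hsl : SlopeLim N w lam) : Erg N s g (deriv W) σ p L w lam := by
  obtain ⟨hc, ⟨-, hb, h0, hv⟩, ⟨-, -, h0', hv'⟩⟩ := hw
  have hz : ∀ y, w 0 y = 0 := fun y => le_antisymm (h0 y) (h0' y)
  have hbd : ∀ T : ℝ, ∃ B, ∀ t ∈ Icc 0 T, ∀ y, |w t y| ≤ B := by
    intro T
    obtain ⟨B, hB⟩ := hb (max T 1) (by positivity)
    refine ⟨max B 0, fun t ht y => ?_⟩
    rcases ht.1.eq_or_lt with h | h
    · rw [← h, hz, abs_zero]; exact le_max_right _ _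
    · exact (hB t ⟨h, ht.2.trans (le_max_left _ _)⟩ y).trans (le_max_left _ _)
  refine ⟨⟨⟨hc, hbd, ?_⟩, ⟨hc.neg, ?_, ?_⟩⟩, hz, hsl⟩
  · intro t₀ x₀ ht φ hφ τ r hτ hτt hr h
    have := hv t₀ x₀ ht φ hφ τ r hτ hτt hr h
    unfold cellF at this
    unfold cellQ
    linarith
  · simpa only [abs_neg] using hbd
  · intro t₀ x₀ ht φ hφ τ r hτ hτt hr h
    have := hv' t₀ x₀ ht (fun t x => -φ t x) hφ.neg τ r hτ hτt hr
      (fun t x ht hx => by have := h t x ht hx; linarith)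
    rw [levyI1_neg, deriv.fun_neg] at this
    unfold cellF at this
    unfold cellQ
    rw [levyI2_neg, neg_neg]
    linarith

/-! ### Gluing of time windows -/

/-- Concatenation of copies of `U - lam t` on the time windows `(mT, (m+1)T]`, the `m`-th copy being
shifted by `m c` in the last variable; it is extended by its value at time zero to negative times. -/
noncomputable def glue {N : ℕ} (U : ℝ → EN N × ℝ → ℝ) (T : ℕ) (lam c : ℝ) (τ : ℝ) (y : EN N) (b : ℝ) :
    ℝ :=
  U (max τ 0 - (⌈max τ 0 / T⌉₊ - 1 : ℕ) * T) (y, b + (⌈max τ 0 / T⌉₊ - 1 : ℕ) * c)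
    - lam * (max τ 0 - (⌈max τ 0 / T⌉₊ - 1 : ℕ) * T)

lemma exists_window {a t : ℝ} (ha : 0 < a) (ht : 0 < t) : ∃ m : ℕ, m * a < t ∧ t ≤ (m + 1) * a := by
  have hp : 0 < ⌈t / a⌉₊ := Nat.ceil_pos.2 (by positivity)
  obtain ⟨m, hm⟩ := Nat.exists_eq_succ_of_ne_zero hp.ne'
  have h1 : (m:ℝ) < t / a := Nat.lt_ceil.1 (by omega)
  have h2 : t / a ≤ (m + 1 : ℝ) := by
    have := Nat.le_ceil (t / a)
    rw [hm] at this
    exact_mod_cast this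
  exact ⟨m, (lt_div_iff₀ ha).1 h1, (div_le_iff₀ ha).1 h2⟩

section Glue
variable {N : ℕ} {U : ℝ → EN N × ℝ → ℝ} {T : ℕ} {lam c : ℝ}

lemma glue_eq (hT : 1 ≤ T) {m : ℕ} {τ : ℝ} (h : m * T < τ) (h' : τ ≤ (m + 1) * T) (y : EN N) (b : ℝ) :
    glue U T lam c τ y b = U (τ - m * T) (y, b + m * c) - lam * (τ - m * T) := by
  have hT' : (0:ℝ) < T := by exact_mod_cast hT
  have hτ : 0 ≤ τ := le_trans (by positivity) h.le
  have : ⌈τ / T⌉₊ = m + 1 := by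
    rw [Nat.ceil_eq_iff (by omega)]
    rw [← lt_div_iff₀ hT'] at h
    rw [← div_le_iff₀ hT'] at h'
    simpa using ⟨h, h'⟩
  simp only [glue, max_eq_left hτ, this, Nat.add_sub_cancel]

lemma glue_nonpos (h0 : ∀ Y, U 0 Y = 0) {τ : ℝ} (h : τ ≤ 0) (y : EN N) (b : ℝ) :
    glue U T lam c τ y b = 0 := by
  simp [glue, max_eq_right h, h0]

lemma glue_rep (hT : 1 ≤ T) (h0 : ∀ Y, U 0 Y = 0) (τ : ℝ) : ∃ e t : ℝ, 0 ≤ t ∧ t ≤ T ∧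
    ∀ y b, glue U T lam c τ y b = U t (y, b + e) - lam * t := by
  have hT' : (0:ℝ) < T := by exact_mod_cast hT
  rcases le_or_gt τ 0 with h | h
  · exact ⟨0, 0, le_rfl, hT'.le, fun y b => by rw [glue_nonpos h0 h, h0]; simp⟩
  · obtain ⟨m, h1, h2⟩ := exists_window hT' h
    exact ⟨m * c, τ - m * T, by linarith, by linarith, fun y b => glue_eq hT h1 h2 y b⟩

lemma glue_neg (τ : ℝ) (y : EN N) (b : ℝ) :
    -glue U T lam c τ y b = glue (fun t Y => -U t Y) T (-lam) c τ y b := by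
  simp only [glue]; ring

/-- The jumps at the times `mT` are upward as soon as `U(T, ·) ≤ lam T`. -/
lemma glue_lsc (hT : 1 ≤ T) (hU : Continuous fun q : ℝ × (EN N × ℝ) => U q.1 q.2)
    (h0 : ∀ Y, U 0 Y = 0) (hj : ∀ Y, U T Y ≤ lam * T) :
    LowerSemicontinuousOn (fun q : ℝ × EN N × ℝ => glue U T lam c q.1 q.2.1 q.2.2) (Ici 0 ×ˢ univ) := by
  have hT' : (0:ℝ) < T := by exact_mod_cast hT
  set F : ℕ → ℝ × EN N × ℝ → ℝ := fun m q =>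
    U (q.1 - m * T) (q.2.1, q.2.2 + m * c) - lam * (q.1 - m * T) with hF
  have hFc : ∀ m, Continuous (F m) := fun m =>
    (hU.comp (f := fun q : ℝ × EN N × ℝ => (q.1 - m * T, (q.2.1, q.2.2 + m * c)))
      (by fun_prop)).sub (by fun_prop)
  rintro ⟨t, y, b⟩ ⟨ht, -⟩ a ha
  simp only at ha
  rcases (show 0 ≤ t from ht).eq_or_lt with rfl | ht
  · rw [glue_nonpos h0 le_rfl] at ha
    have e1 : ∀ᶠ q in nhds ((0:ℝ), y, b), a < F 0 q := by
      refine (hFc 0).continuousAt.eventually_const_lt ?_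
      simpa [hF, h0] using ha
    have e2 : ∀ᶠ q : ℝ × EN N × ℝ in nhds ((0:ℝ), y, b), q.1 < (T:ℝ) :=
      continuous_fst.continuousAt.eventually_lt_const hT'
    filter_upwards [nhdsWithin_le_nhds e1, nhdsWithin_le_nhds e2] with q hq1 hq2
    rcases le_or_gt q.1 0 with h | h
    · rwa [glue_nonpos h0 h]
    · rw [glue_eq hT (m := 0) (by simpa using h) (by simpa using hq2.le)]
      exact hq1
  · obtain ⟨m, h1, h2⟩ := exists_window hT' ht
    rw [glue_eq hT h1 h2] at ha
    have e1 : ∀ᶠ q in nhds (t, y, b), a < F m q := (hFc m).continuousAt.eventually_const_lt ha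
    have e2 : ∀ᶠ q : ℝ × EN N × ℝ in nhds (t, y, b), (m * T : ℝ) < q.1 :=
      continuous_fst.continuousAt.eventually_const_lt h1
    have e3 : ∀ᶠ q : ℝ × EN N × ℝ in nhds (t, y, b), q.1 ≤ (m + 1 : ℝ) * T ∨
        (q.1 ≤ (((m + 1 : ℕ) : ℝ) + 1) * T ∧ a < F (m + 1) q) := by
      rcases h2.lt_or_eq with h2 | h2
      · filter_upwards [continuous_fst.continuousAt.eventually_lt_const h2] with q hq
        exact Or.inl hq.le
      · have e4 : ∀ᶠ q in nhds (t, y, b), a < F (m + 1) q := by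
          refine (hFc (m + 1)).continuousAt.eventually_const_lt ?_
          have e : t - m * T = T := by rw [h2]; ring
          have := hj (y, b + m * c)
          rw [e] at ha
          have e' : t - ((m + 1 : ℕ) : ℝ) * T = 0 := by rw [h2]; push_cast; ring
          simp only [hF, e', h0]
          linarith
        have e5 : ∀ᶠ q : ℝ × EN N × ℝ in nhds (t, y, b), q.1 < (((m + 1 : ℕ) : ℝ) + 1) * T :=
          continuous_fst.continuousAt.eventually_lt_const (by push_cast; linarith)
        filter_upwards [e4, e5] with q hq hq'
        exact Or.inr ⟨hq'.le, hq⟩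
    filter_upwards [nhdsWithin_le_nhds e1, nhdsWithin_le_nhds e2, nhdsWithin_le_nhds e3]
      with q hq1 hq2 hq3
    rcases le_or_gt q.1 ((m + 1) * T) with h | h
    · rw [glue_eq hT hq2 h]; exact hq1
    · obtain ⟨h3, h4⟩ := hq3.resolve_left (not_le.2 h)
      rw [glue_eq hT (m := m + 1) (by exact_mod_cast h) h3]; exact h4

end Glue

/-- A function touched from below at `t₀` by `φ`, and affine just before `t₀`, has there a left slope at most `φ'(t₀)`. -/
lemma left_deriv {φ V : ℝ → ℝ} {t₀ ε d : ℝ} (hε : 0 < ε) (hφ : DifferentiableAt ℝ φ t₀)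
    (hV : ∀ t, t₀ - ε < t → t ≤ t₀ → V t = V t₀ + (t - t₀) * d)
    (h : ∀ t, t₀ - ε < t → t ≤ t₀ → V t₀ - φ t₀ ≤ V t - φ t) : d ≤ deriv φ t₀ := by
  have h1 := (hasDerivWithinAt_iff_tendsto_slope' self_notMem_Iio).1
    (hφ.hasDerivAt.hasDerivWithinAt (s := Iio t₀))
  refine ge_of_tendsto h1 ?_
  filter_upwards [self_mem_nhdsWithin,
    nhdsWithin_le_nhds (Ioi_mem_nhds (show t₀ - ε < t₀ by linarith))] with t ht ht'
  have ht : t < t₀ := ht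
  have e1 := hV t ht' ht.le
  have e2 := h t ht' ht.le
  rw [slope_def_field, le_div_iff_of_neg (by linarith)]
  linarith

/-- Replacing a test function touching from below by the smooth function itself. -/
lemma nonlocal_le {N : ℕ} (hN : 1 ≤ N) {s : ℝ} (hs : s ∈ Ioo (0:ℝ) 1) {g : EN N → ℝ}
    (hg : H1 N g) {φ V : EN N → ℝ} {x : EN N} {r : ℝ} (hr : 0 < r)
    (hφ : ContDiff ℝ 2 φ) (hV : C2b V) (h : ∀ y ∈ ball x r, V x - φ x ≤ V y - φ y) :
    levyI1 N s g φ r x + levyI2 N s g V r x ≤ levyI1 N s g V 1 x + levyI2 N s g V 1 x := by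
  rw [← levyJ_indep hN hs hg hV x hr one_pos]
  have := levyI1_mono hN hs hg hr hφ hV.1 h
  linarith

lemma C2b.add_const {N : ℕ} {φ : EN N → ℝ} (h : C2b φ) (c : ℝ) : C2b fun y => φ y + c := by
  obtain ⟨hc, M, hM⟩ := h
  have h0 : 0 ≤ |c| := abs_nonneg c
  refine ⟨hc.add contDiff_const, M + |c|, fun x => ⟨(abs_add_le _ _).trans (by linarith [(hM x).1]),
    fun z => ?_⟩⟩
  rw [fderiv_add_const, add_sub_add_right_eq_sub]
  refine ((hM x).2 z).trans ?_
  nlinarith [sq_nonneg ‖z‖]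

section Visc
variable {N : ℕ} {s : ℝ} {g : EN N → ℝ} {f : ℝ → ℝ} {σ : ℝ → EN N → ℝ} {K Kσ M : ℝ}
  {p : EN N} {L : ℝ} {lam : ℝ} {T : ℕ} {Co δ B : ℝ} {n : ℕ} {h : ℝ}
  {U : ℝ → EN N × ℝ → ℝ} {D : ℕ → EN N × ℝ → ℝ}

/-- Just before any positive time the glued function is affine in time, smooth in `y`, and solves the
equation up to `δ`. -/
lemma glue_local (C : Cell N s g f σ K Kσ M) (hT : 1 ≤ T)
    (A : CApprox s g f σ K M p L T Co δ B n h U D) {t₀ : ℝ} (ht : 0 < t₀) (y₀ : EN N) (b₀ : ℝ) :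
    ∃ d ε : ℝ, 0 < ε ∧ (∀ t, t₀ - ε < t → t ≤ t₀ →
      glue U T lam (lam * T) t y₀ b₀ = glue U T lam (lam * T) t₀ y₀ b₀ + (t - t₀) * d) ∧
    C2b (fun y => glue U T lam (lam * T) t₀ y b₀) ∧
    |d + lam - (levyI1 N s g (fun y => glue U T lam (lam * T) t₀ y b₀) 1 y₀
      + levyI2 N s g (fun y => glue U T lam (lam * T) t₀ y b₀) 1 y₀
      + L - f (glue U T lam (lam * T) t₀ y₀ b₀ + ⟪p, y₀⟫ + b₀ + lam * t₀) + σ t₀ y₀)| ≤ δ := by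
  have hT' : (0:ℝ) < T := by exact_mod_cast hT
  obtain ⟨m, hm1, hm2⟩ := exists_window hT' ht
  obtain ⟨j, hj1, hj2⟩ := exists_window A.h_pos (sub_pos.2 hm1)
  have hjn : j < n := by
    have h1 : (j:ℝ) * h < n * h := by rw [A.nh]; linarith
    exact_mod_cast lt_of_mul_lt_mul_right h1 A.h_pos.le
  have hjh : 0 ≤ (j:ℝ) * h := mul_nonneg (Nat.cast_nonneg _) A.h_pos.le
  have hG := A.gb (t₀ - m * T) (by linarith) (by linarith)
  have heq : (fun y => glue U T lam (lam * T) t₀ y b₀)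
      = fun y => U (t₀ - m * T) (y, b₀ + m * (lam * T)) + -(lam * (t₀ - m * T)) := by
    funext y; rw [glue_eq hT hm1 hm2]; ring
  refine ⟨D j (y₀, b₀ + m * (lam * T)) - lam, t₀ - m * T - j * h, by linarith, ?_, ?_, ?_⟩
  · intro t h1 h2
    rw [glue_eq hT hm1 hm2, glue_eq hT (m := m) (by linarith) (by linarith),
      A.aff j hjn (t - m * T) (by linarith) (by linarith),
      A.aff j hjn (t₀ - m * T) hj1.le hj2]
    ring
  · rw [heq]; exact (hG.c2b _).add_const _
  · have := A.eqn j hjn (t₀ - m * T) hj1.le hj2 y₀ (b₀ + m * (lam * T))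
    rw [heq, levyI1_const_add, levyI2_const_add, glue_eq hT hm1 hm2]
    unfold levyJ at this
    -- here `σ` has period one and `T` is an integer
    rw [← C.σ_nat (m * T) (t₀ - m * T), show t₀ - m * T + ((m * T : ℕ) : ℝ) = t₀ by push_cast; ring]
      at this
    rw [show U (t₀ - m * T) (y₀, b₀ + m * (lam * T)) - lam * (t₀ - m * T) + ⟪p, y₀⟫ + b₀ + lam * t₀
      = U (t₀ - m * T) (y₀, b₀ + m * (lam * T)) + ⟪p, y₀⟫ + (b₀ + m * (lam * T)) by ring,
      sub_add_cancel]
    exact this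

lemma test_slices {φ : ℝ → EN N → ℝ → ℝ} (hφ : ContDiff ℝ 2 (fun q : ℝ × EN N × ℝ => φ q.1 q.2.1 q.2.2))
    (t : ℝ) (y : EN N) (b : ℝ) :
    ContDiff ℝ 2 (fun y => φ t y b) ∧ DifferentiableAt ℝ (fun t => φ t y b) t := by
  refine ⟨hφ.comp (f := fun y : EN N => (t, y, b)) (by fun_prop), ?_⟩
  have : ContDiff ℝ 2 (fun t => φ t y b) := hφ.comp (f := fun t : ℝ => (t, y, b)) (by fun_prop)
  exact this.differentiable (by norm_num) t

/-- Only times before the touching time are used, so the upward jumps at the ends of the windows are harmless. -/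
lemma glue_super (C : Cell N s g f σ K Kσ M) (hT : 1 ≤ T)
    (A : CApprox s g f σ K M p L T Co δ B n h U D) {o B' : ℝ} (ho : δ ≤ o)
    (hj : ∀ Y, U T Y ≤ lam * T) (hB : ∀ t y b, |glue U T lam (lam * T) t y b| ≤ B') :
    IsSupersolNp1 N s g (fun τ y yn v _ _ I _ =>
      L + I - f (v + ⟪p, y⟫ + yn + lam * τ) + σ τ y - o - lam) (fun _ _ => 0)
      (glue U T lam (lam * T)) := by
  refine ⟨glue_lsc hT A.cont A.zero hj, fun _ _ => ⟨B', fun t _ y b => hB t y b⟩,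
    fun y b => (glue_nonpos A.zero le_rfl y b).ge, ?_⟩
  intro t₀ y₀ b₀ ht φ hφ τ r hτ hτt hr hmin
  obtain ⟨d, ε, hε, h1, h2, h3⟩ := glue_local (lam := lam) C hT A ht y₀ b₀
  obtain ⟨hφy, hφt⟩ := test_slices hφ t₀ y₀ b₀
  have hd := left_deriv (V := fun t => glue U T lam (lam * T) t y₀ b₀) (lt_min hε hτ) hφt
    (fun t ht1 ht2 => h1 t (by linarith [min_le_left ε τ]) ht2)
    (fun t ht1 ht2 => hmin t y₀ b₀ ⟨by linarith [min_le_right ε τ], by linarith⟩ (by simpa using hr)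
      (by simpa using hr))
  have hI := nonlocal_le C.hN C.hs C.hg hr hφy h2 (x := y₀) fun y hy =>
    hmin t₀ y b₀ ⟨by linarith, by linarith⟩ (by simpa [dist_eq_norm] using hy) (by simpa using hr)
  have := (abs_le.1 h3).1
  dsimp only
  linarith

/-- Counterpart of `glue_super`: the jumps are now downward. -/
lemma glue_sub (C : Cell N s g f σ K Kσ M) (hT : 1 ≤ T)
    (A : CApprox s g f σ K M p L T Co δ B n h U D) {o B' : ℝ} (ho : δ ≤ o)
    (hj : ∀ Y, lam * T ≤ U T Y) (hB : ∀ t y b, |glue U T lam (lam * T) t y b| ≤ B') :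
    IsSubsolNp1 N s g (fun τ y yn v _ _ I _ =>
      L + I - f (v + ⟪p, y⟫ + yn + lam * τ) + σ τ y + o - lam) (fun _ _ => 0)
      (glue U T lam (lam * T)) := by
  refine ⟨?_, fun _ _ => ⟨B', fun t _ y b => hB t y b⟩,
    fun y b => (glue_nonpos A.zero le_rfl y b).le, ?_⟩
  · have := glue_lsc (U := fun t Y => -U t Y) (lam := -lam) (c := lam * T) hT A.cont.neg
      (fun Y => by rw [A.zero, neg_zero]) (fun Y => by linarith [hj Y])
    simp only [← glue_neg] at this
    intro q hq a ha
    filter_upwards [this q hq (-a) (neg_lt_neg ha)] with q' hq'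
    exact neg_lt_neg_iff.1 hq'
  intro t₀ y₀ b₀ ht φ hφ τ r hτ hτt hr hmax
  obtain ⟨d, ε, hε, h1, h2, h3⟩ := glue_local (lam := lam) C hT A ht y₀ b₀
  obtain ⟨hφy, hφt⟩ := test_slices hφ t₀ y₀ b₀
  have hd := left_deriv (V := fun t => -glue U T lam (lam * T) t y₀ b₀) (d := -d) (lt_min hε hτ) hφt.neg
    (fun t ht1 ht2 => by
      have := h1 t (by linarith [min_le_left ε τ]) ht2
      simp only [this]; ring)
    (fun t ht1 ht2 => by
      have := hmax t y₀ b₀ ⟨by linarith [min_le_right ε τ], by linarith⟩ (by simpa using hr)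
        (by simpa using hr)
      simp only [Pi.neg_apply]
      linarith)
  have hI := nonlocal_le C.hN C.hs C.hg hr hφy.neg h2.neg (x := y₀) fun y hy => by
    have := hmax t₀ y b₀ ⟨by linarith, by linarith⟩ (by simpa [dist_eq_norm] using hy)
      (by simpa using hr)
    linarith
  rw [show (-fun t => φ t y₀ b₀) = fun t => -φ t y₀ b₀ from rfl, deriv.fun_neg] at hd
  rw [levyI1_neg, levyI2_neg, levyI1_neg,
    levyI2_neg] at hI
  have := (abs_le.1 h3).2
  dsimp only
  linarith

end Visc

/-! ### Regularity of the glued functions and length of the windows -/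

section Reg
variable {N : ℕ} {B κ : ℝ} {G : EN N × ℝ → ℝ}

lemma GB.hasDeriv_last (hG : GB B G) (y : EN N) (e k b : ℝ) :
    HasDerivAt (fun b => G (y, b + e) - k) (fderiv ℝ G (y, b + e) (0, 1)) b := by
  have h1 : HasFDerivAt G (fderiv ℝ G (y, b + e)) (y, b + e) :=
    (hG.smooth.differentiable (by norm_num) _).hasFDerivAt
  have h2 : HasDerivAt (fun b : ℝ => ((y, b + e) : EN N × ℝ)) (0, 1) b :=
    (hasDerivAt_const b y).prodMk ((hasDerivAt_id b).add_const e)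
  exact (h1.comp_hasDerivAt b h2).sub_const k

lemma GB.last_diff (hG : GB B G) (Y Y' : EN N × ℝ) :
    |fderiv ℝ G Y (0, 1) - fderiv ℝ G Y' (0, 1)| ≤ B * ‖Y - Y'‖ := by
  have h1 : ‖((0, 1) : EN N × ℝ)‖ = 1 := by simp [Prod.norm_def]
  have := (fderiv ℝ G Y - fderiv ℝ G Y').le_opNorm (0, 1)
  rw [h1, mul_one] at this
  exact this.trans (hG.lip Y Y')

lemma GB.last_bdd (hG : GB B G) (Y : EN N × ℝ) : |fderiv ℝ G Y (0, 1)| ≤ B := by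
  have h1 : ‖((0, 1) : EN N × ℝ)‖ = 1 := by simp [Prod.norm_def]
  have := (fderiv ℝ G Y).le_opNorm (0, 1)
  rw [h1, mul_one] at this
  exact this.trans (hG.grad Y)

lemma GB.last_reg (hG : GB B G)
    (hsl : ∀ d, 0 ≤ d → ∀ y b, -d ≤ G (y, b + d) - G (y, b) ∧ G (y, b + d) - G (y, b) ≤ κ * d)
    (e k : ℝ) (y : EN N) (b : ℝ) :
    ContDiff ℝ 2 (fun b => G (y, b + e) - k) ∧
    -1 ≤ deriv (fun b => G (y, b + e) - k) b ∧ deriv (fun b => G (y, b + e) - k) b ≤ κ ∧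
    |deriv (deriv (fun b => G (y, b + e) - k)) b| ≤ B := by
  have hB0 : 0 ≤ B := (abs_nonneg _).trans (hG.bdd 0)
  have hd := hG.hasDeriv_last y e k
  refine ⟨(hG.smooth.comp (f := fun b : ℝ => ((y, b + e) : EN N × ℝ)) (by fun_prop)).sub
    contDiff_const, ?_, ?_, ?_⟩
  · have hm : Monotone fun b => (G (y, b + e) - k) + b := by
      intro b b' hb
      have := (hsl (b' - b) (sub_nonneg.2 hb) y (b + e)).1
      rw [show b + e + (b' - b) = b' + e by ring] at this
      dsimp only; linarith
    have h1 := ((hd b).add (hasDerivAt_id b)).deriv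
    have h2 := hm.deriv_nonneg (x := b)
    rw [show (fun b => (G (y, b + e) - k) + b) = (fun b => G (y, b + e) - k) + id from rfl, h1] at h2
    rw [(hd b).deriv]; linarith
  · have hm : Monotone fun b => κ * b - (G (y, b + e) - k) := by
      intro b b' hb
      have := (hsl (b' - b) (sub_nonneg.2 hb) y (b + e)).2
      rw [show b + e + (b' - b) = b' + e by ring] at this
      dsimp only; linarith
    have h1 := (((hasDerivAt_id b).const_mul κ).sub (hd b)).deriv
    have h2 := hm.deriv_nonneg (x := b)
    rw [show (fun b => κ * b - (G (y, b + e) - k)) = (fun b => κ * id b) - fun b => G (y, b + e) - k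
      from rfl, h1] at h2
    rw [(hd b).deriv]; linarith
  · have e1 : deriv (fun b => G (y, b + e) - k) = fun b => fderiv ℝ G (y, b + e) (0, 1) :=
      funext fun b => (hd b).deriv
    rw [e1]
    refine norm_deriv_le_of_lip' (f := fun b => fderiv ℝ G (y, b + e) (0, 1)) hB0
      (Eventually.of_forall fun x => (hG.last_diff _ _).trans_eq ?_)
    simp [Prod.norm_def]

lemma GB.last_holder (hG : GB B G) {α : ℝ} (h0 : 0 < α) (h1 : α < 1) (e k : ℝ) (y y' : EN N) (b : ℝ) :
    |deriv (fun b => G (y, b + e) - k) b - deriv (fun b => G (y', b + e) - k) b|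
      ≤ 2 * B * ‖y - y'‖ ^ α := by
  have hB0 : 0 ≤ B := (abs_nonneg _).trans (hG.bdd 0)
  rw [(hG.hasDeriv_last y e k b).deriv, (hG.hasDeriv_last y' e k b).deriv]
  rcases le_total ‖y - y'‖ 1 with h | h
  · have h2 := hG.last_diff (y, b + e) (y', b + e)
    have h3 : ‖((y, b + e) : EN N × ℝ) - (y', b + e)‖ = ‖y - y'‖ := by simp [Prod.norm_def]
    rw [h3] at h2
    have h4 : ‖y - y'‖ ≤ ‖y - y'‖ ^ α := by
      simpa using Real.rpow_le_rpow_of_exponent_ge' (norm_nonneg (y - y')) h h0.le h1.le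
    nlinarith [norm_nonneg (y - y')]
  · have h2 := abs_le.1 (hG.last_bdd (y, b + e))
    have h3 := abs_le.1 (hG.last_bdd (y', b + e))
    have h4 : 1 ≤ ‖y - y'‖ ^ α := Real.one_le_rpow h h0.le
    have : |fderiv ℝ G (y, b + e) (0, 1) - fderiv ℝ G (y', b + e) (0, 1)| ≤ 2 * B :=
      abs_le.2 ⟨by linarith, by linarith⟩
    nlinarith

end Reg

/-- Regularity of the glued function in the last variable. -/
lemma glue_reg {N : ℕ} {s : ℝ} {g : EN N → ℝ} {f : ℝ → ℝ} {σ : ℝ → EN N → ℝ} {K M : ℝ}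
    {p : EN N} {L : ℝ} {lam c : ℝ} {T : ℕ} {Co δ B : ℝ} {n : ℕ} {h : ℝ}
    {U : ℝ → EN N × ℝ → ℝ} {D : ℕ → EN N × ℝ → ℝ} (hT : 1 ≤ T)
    (A : CApprox s g f σ K M p L T Co δ B n h U D) (τ : ℝ) :
    (∀ y, ContDiff ℝ 2 (fun b => glue U T lam c τ y b)) ∧
    (∀ y b, -1 ≤ deriv (fun b => glue U T lam c τ y b) b ∧
      deriv (fun b => glue U T lam c τ y b) b ≤ Real.exp (K * T) - 1) ∧
    (∀ y b, |deriv (deriv (fun b => glue U T lam c τ y b)) b| ≤ B) ∧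
    ∀ α : ℝ, 0 < α → α < 1 → ∀ y y' b,
      |deriv (fun b => glue U T lam c τ y b) b - deriv (fun b => glue U T lam c τ y' b) b|
        ≤ 2 * B * ‖y - y'‖ ^ α := by
  obtain ⟨e, t, h0, h1, he⟩ := glue_rep (lam := lam) (c := c) hT A.zero τ
  simp only [he]
  have hG := A.gb t h0 h1
  have hr := hG.last_reg (A.slope t h0 h1) e (lam * t)
  exact ⟨fun y => (hr y 0).1, fun y b => ⟨(hr y b).2.1, (hr y b).2.2.1⟩, fun y b => (hr y b).2.2.2,
    fun α ha hb y y' b => hG.last_holder ha hb e _ y y' b⟩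

lemma glue_bdd {N : ℕ} {U : ℝ → EN N × ℝ → ℝ} {T : ℕ} {lam lam' c C : ℝ} (hT : 1 ≤ T)
    (h0 : ∀ Y, U 0 Y = 0) (hU : ∀ t : ℝ, 0 ≤ t → t ≤ T → ∀ Y, |U t Y - lam' * t| ≤ C)
    (hl : |lam - lam'| ≤ C / T) (τ : ℝ) (y : EN N) (b : ℝ) : |glue U T lam c τ y b| ≤ 2 * C := by
  have hT' : (0:ℝ) < T := by exact_mod_cast hT
  obtain ⟨e, t, h0, h1, he⟩ := glue_rep (lam := lam) (c := c) hT h0 τ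
  rw [he]
  have h2 := abs_le.1 (hU t h0 h1 (y, b + e))
  have h3 : |(lam - lam') * t| ≤ C := by
    rw [abs_mul, abs_of_nonneg h0]
    calc |lam - lam'| * t ≤ C / T * T :=
          mul_le_mul hl h1 h0 ((abs_nonneg _).trans hl)
      _ = C := by field_simp
  have h3 := abs_le.1 h3
  rw [abs_le]; constructor <;> nlinarith

/-- Length of the time windows used at accuracy `η`. -/
noncomputable def windowLen (K η : ℝ) : ℕ := ⌊Real.log η⁻¹ / (K + 1)⌋₊

lemma windowLen_ge {K η : ℝ} (hK : 0 ≤ K) (hη : 0 < η) {m : ℕ} (h : η < Real.exp (-((K + 1) * m))) :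
    m ≤ windowLen K η := by
  refine Nat.le_floor ?_
  rw [le_div_iff₀ (by linarith), Real.log_inv]
  have := (Real.log_lt_iff_lt_exp hη).2 h
  linarith

/-- The slope bound `e^{KT} - 1` at the chosen horizon. -/
lemma windowLen_slope {K η : ℝ} (hK : 0 ≤ K) (hη : 0 < η) (hη1 : η ≤ 1) :
    Real.exp (K * windowLen K η) - 1 ≤ K / η := by
  set T := windowLen K η with hT
  have h1 : (K + 1) * T ≤ Real.log η⁻¹ := by
    have : (T:ℝ) ≤ Real.log η⁻¹ / (K + 1) := Nat.floor_le
      (div_nonneg (Real.log_nonneg ((one_le_inv₀ hη).2 hη1)) (by linarith))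
    rw [le_div_iff₀ (by linarith)] at this
    linarith
  have h2 : Real.exp ((K + 1) * T) ≤ η⁻¹ := by
    rw [← Real.exp_log (inv_pos.2 hη)]
    exact Real.exp_le_exp.2 h1
  -- `e^x - 1 ≤ x e^x` with `x = K T`, then `T ≤ e^T`
  have h3 : Real.exp (K * T) - 1 ≤ K * T * Real.exp (K * T) := by
    have h4 := Real.add_one_le_exp (-(K * T))
    have h5 : Real.exp (-(K * T)) * Real.exp (K * T) = 1 := by rw [← Real.exp_add]; simp
    have := Real.exp_pos (K * T)
    nlinarith
  have h4 : (T:ℝ) ≤ Real.exp T := by linarith [Real.add_one_le_exp (T:ℝ)]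
  have h5 : Real.exp T * Real.exp (K * T) = Real.exp ((K + 1) * T) := by
    rw [← Real.exp_add]; ring_nf
  calc Real.exp (K * T) - 1 ≤ K * (T * Real.exp (K * T)) := by linarith
    _ ≤ K * (Real.exp T * Real.exp (K * T)) := by gcongr
    _ ≤ K * η⁻¹ := by rw [h5]; gcongr
    _ = K / η := (div_eq_mul_inv _ _).symm

/-- **Smooth approximate correctors (Proposition 3.3).** Under (H1)–(H4), for every small
`η > 0` there are `λ⁺_η(p,L)`, `λ⁻_η(p,L)` and bounded super/subcorrectors `V⁺_η, V⁻_η` of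
`λ^±_η + ∂_τ V = L + I_s[V(τ,·,y_{N+1})] − W'(V + P·Y + λ^±_η τ) + σ(τ,y) ∓ o_η(1)`,
`V(0,Y)=0`, with `λ^±_η → H̄(p,L)` locally uniformly, `λ^±_η` monotone and coercive in `L`,
`|V^±_η| ≤ C` with `C` independent of `η,p,L`, `V^±_η` of class `C²` in `y_{N+1}` with
`−1 ≤ ∂_{y_{N+1}}V^±_η ≤ ‖W''‖_∞/η`, bounded second derivative in `y_{N+1}`, and
`∂_{y_{N+1}}V^±_η` Hölder in `y` for every exponent `0 < α < min{1,2s}`. -/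
theorem smooth_approximate_correctors
    (N : ℕ) (hN : 1 ≤ N) (s : ℝ) (hs : s ∈ Set.Ioo (0:ℝ) 1)
    (g : EN N → ℝ) (hg : H1 N g)
    (W : ℝ → ℝ) (hW : H2 W)
    (σ : ℝ → EN N → ℝ) (hσ : H3 N σ)
    (u₀ : EN N → ℝ) (hu₀ : H4 N u₀)
    -- `H̄ = λ(p,L)` is the effective Hamiltonian given by the ergodicity theorem:
    (Hbar : EN N → ℝ → ℝ)
    (hHbar : ∀ (p : EN N) (L : ℝ), ∃ w : ℝ → EN N → ℝ,
      IsSol N s g (cellF N W σ p L) (fun _ => 0) w ∧ SlopeLim N w (Hbar p L)) :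
    ∃ η₀ > (0:ℝ), ∃ lamP lamM : ℝ → EN N → ℝ → ℝ, ∃ oη : ℝ → ℝ, ∃ C > (0:ℝ),
      -- `0 ≤ o_η(1) → 0` as `η → 0⁺`:
      (∀ η, 0 < η → η < η₀ → 0 ≤ oη η) ∧
      Tendsto oη (nhdsWithin 0 (Ioi 0)) (nhds 0) ∧
      -- `λ^±_η(p,L) → H̄(p,L)` as `η → 0⁺`, locally uniformly in `(p,L)`:
      (∀ ε > (0:ℝ), ∀ A > (0:ℝ), ∃ η₁ > (0:ℝ), ∀ η, 0 < η → η < η₁ →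
        ∀ (p : EN N) (L : ℝ), ‖p‖ ≤ A → |L| ≤ A →
          |lamP η p L - Hbar p L| ≤ ε ∧ |lamM η p L - Hbar p L| ≤ ε) ∧
      -- `λ^±_η` satisfy (i) and (ii) of the effective Hamiltonian properties:
      (∀ η, 0 < η → η < η₀ → ∀ p : EN N,
        Tendsto (lamP η p) atTop atTop ∧ Tendsto (lamP η p) atBot atBot ∧
        Monotone (lamP η p) ∧
        Tendsto (lamM η p) atTop atTop ∧ Tendsto (lamM η p) atBot atBot ∧
        Monotone (lamM η p)) ∧
      -- the approximate correctors:
      ∀ η, 0 < η → η < η₀ → ∀ (p : EN N) (L : ℝ),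
        ∃ Vp Vm : ℝ → EN N → ℝ → ℝ,
          -- `V⁺_η` is a supersolution, `V⁻_η` a subsolution, both vanishing at `τ = 0`:
          (∀ (y : EN N) (yn : ℝ), Vp 0 y yn = 0 ∧ Vm 0 y yn = 0) ∧
          IsSupersolNp1 N s g
            (fun τ y yn v _ _ I _ =>
              L + I - deriv W (v + ⟪p, y⟫ + yn + lamP η p L * τ) + σ τ y
                - oη η - lamP η p L)
            (fun _ _ => 0) Vp ∧
          IsSubsolNp1 N s g
            (fun τ y yn v _ _ I _ =>
              L + I - deriv W (v + ⟪p, y⟫ + yn + lamM η p L * τ) + σ τ y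
                + oη η - lamM η p L)
            (fun _ _ => 0) Vm ∧
          -- uniform bound:
          (∀ (τ : ℝ) (y : EN N) (yn : ℝ), 0 ≤ τ → |Vp τ y yn| ≤ C ∧ |Vm τ y yn| ≤ C) ∧
          -- `C²` regularity in `y_{N+1}`:
          (∀ (τ : ℝ) (y : EN N), ContDiff ℝ 2 (fun yn => Vp τ y yn) ∧
            ContDiff ℝ 2 (fun yn => Vm τ y yn)) ∧
          -- gradient bounds in `y_{N+1}`:
          (∀ (τ : ℝ) (y : EN N) (yn : ℝ), 0 ≤ τ →
            -1 ≤ deriv (fun z => Vp τ y z) yn ∧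
            deriv (fun z => Vp τ y z) yn ≤ supW'' W / η ∧
            -1 ≤ deriv (fun z => Vm τ y z) yn ∧
            deriv (fun z => Vm τ y z) yn ≤ supW'' W / η) ∧
          -- bounded second derivative in `y_{N+1}`:
          (∃ Cη : ℝ, ∀ (τ : ℝ) (y : EN N) (yn : ℝ), 0 ≤ τ →
            |deriv (deriv (fun z => Vp τ y z)) yn| ≤ Cη ∧
            |deriv (deriv (fun z => Vm τ y z)) yn| ≤ Cη) ∧
          -- Hölder continuity in `y` of `∂_{y_{N+1}}V^±_η`:
          (∀ α : ℝ, 0 < α → α < min 1 (2*s) →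
            ∃ Cηα : ℝ, ∀ (τ : ℝ) (y y' : EN N) (yn : ℝ), 0 ≤ τ →
              |deriv (fun z => Vp τ y z) yn - deriv (fun z => Vp τ y' z) yn| ≤
                Cηα * ‖y - y'‖ ^ α ∧
              |deriv (fun z => Vm τ y z) yn - deriv (fun z => Vm τ y' z) yn| ≤
                Cηα * ‖y - y'‖ ^ α) := by
  obtain ⟨Kσ, M, Cl⟩ := cell_of hN hs hg hW hσ
  obtain ⟨Co, hCo0, hCo⟩ := capprox_exists Cl
  choose w hw hsl using hHbar
  have E : ∀ p L, Erg N s g (deriv W) σ p L (w p L) (Hbar p L) := fun p L => erg_of (hw p L) (hsl p L)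
  have hK := Cl.K0
  set K := supW'' W with hKdef
  have hM : 0 ≤ M := (abs_nonneg _).trans (Cl.bound 0 0 0)
  -- bound for the growth error of the approximate solutions, from `erg_est`
  set C₀ := 2 * Co + 3 + 2 * M with hC₀
  have hC₀pos : 0 < C₀ := by linarith
  have hlamL : ∀ p L, |Hbar p L - L| ≤ M := fun p L => (erg_est Cl hCo (E p L)).1
  have hT1 : ∀ η, 0 < η → η < Real.exp (-((K + 1) * (1:ℕ))) → 1 ≤ windowLen K η :=
    fun η h0 h1 => windowLen_ge hK h0 h1
  have hup : ∀ (p : EN N) (a : ℝ), Tendsto (fun L => Hbar p L + a) atTop atTop := fun p a =>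
    tendsto_atTop_mono (fun L => show L + (a - M) ≤ Hbar p L + a by
      linarith [(abs_le.1 (hlamL p L)).1]) (tendsto_atTop_add_const_right _ _ tendsto_id)
  have hdown : ∀ (p : EN N) (a : ℝ), Tendsto (fun L => Hbar p L + a) atBot atBot := fun p a =>
    tendsto_atBot_mono (fun L => show Hbar p L + a ≤ L + (a + M) by
      linarith [(abs_le.1 (hlamL p L)).2]) (tendsto_atBot_add_const_right _ _ tendsto_id)
  have hmono : ∀ (p : EN N) (a : ℝ), Monotone fun L => Hbar p L + a := fun p a L L' hL =>
    add_le_add (erg_mono Cl hCo hL (E p L) (E p L')) le_rfl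
  refine ⟨Real.exp (-((K + 1) * (1:ℕ))), Real.exp_pos _,
    fun η p L => Hbar p L + C₀ / windowLen K η, fun η p L => Hbar p L + -(C₀ / windowLen K η),
    fun η => η, 2 * C₀, by linarith, fun η h0 _ => h0.le, nhdsWithin_le_nhds, ?_,
    fun η h0 h1 p => ⟨hup p _, hdown p _, hmono p _, hup p _, hdown p _, hmono p _⟩, ?_⟩
  · intro ε hε A _
    obtain ⟨m, hm⟩ := exists_nat_ge (C₀ / ε)
    have hm0 : (0:ℝ) < m := lt_of_lt_of_le (by positivity) hm
    refine ⟨Real.exp (-((K + 1) * m)), Real.exp_pos _, fun η h0 h1 p L _ _ => ?_⟩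
    have hTm : (m:ℝ) ≤ windowLen K η := by exact_mod_cast windowLen_ge hK h0 h1
    have h2 : |C₀ / windowLen K η| ≤ ε := by
      rw [abs_of_nonneg (by positivity), div_le_iff₀ (by linarith)]
      rw [div_le_iff₀ hε] at hm
      nlinarith
    simp only [add_sub_cancel_left, abs_neg]
    exact ⟨h2, h2⟩
  intro η h0 h1 p L
  have hη1 : η ≤ 1 := h1.le.trans (Real.exp_le_one_iff.2 (by push_cast; linarith))
  have hT := hT1 η h0 h1
  have hslope := windowLen_slope hK h0 hη1
  set T := windowLen K η with hTdef
  have hT' : (0:ℝ) < T := by exact_mod_cast hT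
  -- `δ ≤ η` for the equation, `δ ≤ e^{-(K+1)T}/2` for the comparison with the solution
  have hδ : 0 < min η (Real.exp (-((K + 1) * T)) / 2) := lt_min h0 (by positivity)
  obtain ⟨B, n, h, U, D, A⟩ := hCo p L T hT _ hδ
  have hest := (erg_est Cl hCo (E p L)).2 T _ B n h U D A hδ (min_le_right _ _)
  rw [← hC₀] at hest
  have hqT : C₀ / T * T = C₀ := by field_simp
  have hjP : ∀ Y, U T Y ≤ (Hbar p L + C₀ / T) * T := fun Y => by
    have := (abs_le.1 (hest T hT'.le le_rfl Y)).2
    rw [add_mul, hqT]; linarith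
  have hjM : ∀ Y, (Hbar p L + -(C₀ / T)) * T ≤ U T Y := fun Y => by
    have := (abs_le.1 (hest T hT'.le le_rfl Y)).1
    rw [add_mul, neg_mul, hqT]; linarith
  have hbP := glue_bdd (lam := Hbar p L + C₀ / T) (c := (Hbar p L + C₀ / T) * T) hT A.zero hest
    (by rw [add_sub_cancel_left, abs_of_nonneg (by positivity)])
  have hbM := glue_bdd (lam := Hbar p L + -(C₀ / T)) (c := (Hbar p L + -(C₀ / T)) * T) hT A.zero hest
    (by rw [add_sub_cancel_left, abs_neg, abs_of_nonneg (by positivity)])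
  have rP := glue_reg (lam := Hbar p L + C₀ / T) (c := (Hbar p L + C₀ / T) * T) hT A
  have rM := glue_reg (lam := Hbar p L + -(C₀ / T)) (c := (Hbar p L + -(C₀ / T)) * T) hT A
  refine ⟨glue U T (Hbar p L + C₀ / T) ((Hbar p L + C₀ / T) * T),
    glue U T (Hbar p L + -(C₀ / T)) ((Hbar p L + -(C₀ / T)) * T),
    fun y b => ⟨glue_nonpos A.zero le_rfl y b, glue_nonpos A.zero le_rfl y b⟩,
    glue_super Cl hT A (min_le_left _ _) hjP hbP, glue_sub Cl hT A (min_le_left _ _) hjM hbM,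
    fun τ y b _ => ⟨hbP τ y b, hbM τ y b⟩, fun τ y => ⟨(rP τ).1 y, (rM τ).1 y⟩,
    fun τ y b _ => ⟨((rP τ).2.1 y b).1, ((rP τ).2.1 y b).2.trans hslope, ((rM τ).2.1 y b).1,
      ((rM τ).2.1 y b).2.trans hslope⟩,
    ⟨B, fun τ y b _ => ⟨(rP τ).2.2.1 y b, (rM τ).2.2.1 y b⟩⟩,
    fun α ha hα => ⟨2 * B, fun τ y y' b _ => ?_⟩⟩
  have hα1 := hα.trans_le (min_le_left _ _)
  exact ⟨(rP τ).2.2.2 α ha hα1 y y' b, (rM τ).2.2.2 α ha hα1 y y' b⟩
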